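/- arXiv:math/0210438 — 5 statements merged into one kernel-verified Lean document; each statement's English description precedes it below -/
import Mathlib

section
/- Every automorphism φ of the free product C_k ⋆ ℤ (with k ≥ 2), presented as ⟨u, v | u^k = 1⟩, is of the form φ = ν_{ε,r,s} ∘ ι_g for some g in the group, some ε ∈ {1, -1}, and some r, s ∈ {0, 1, ..., k-1} with r coprime to k, where ν_{ε,r,s} is the automorphism sending u ↦ u^r and v ↦ v^ε u^s. -/
/-- Relators for the free product `C_k ⋆ ℤ = ⟨u, v | u^k = 1⟩`,
with `u = of 0`, `v = of 1`. -/
def relCkZ (k : ℕ) : Set (FreeGroup (Fin 2)) :=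
  {FreeGroup.of 0 ^ k}

namespace CkZ

variable {G : Type*} [Group G]

/-- Reduced alternating words beginning and ending in the factor `i`. -/
inductive S (H : Bool → Subgroup G) : Bool → G → Prop
  | letter (i : Bool) (a : G) (ha : a ∈ H i) (ha1 : a ≠ 1) : S H i a
  | long (i : Bool) (a h b : G) (ha : a ∈ H i) (ha1 : a ≠ 1) (hb : b ∈ H i) (hb1 : b ≠ 1)
      (hh : S H (!i) h) : S H i (a * h * b)

/-- Alternating words of length at least three. -/
def L (H : Bool → Subgroup G) (i : Bool) (g : G) : Prop :=
  ∃ a h b, a ∈ H i ∧ a ≠ 1 ∧ b ∈ H i ∧ b ≠ 1 ∧ S H (!i) h ∧ g = a * h * b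

theorem L.toS {H : Bool → Subgroup G} {i : Bool} {g : G} (h : L H i g) : S H i g := by
  obtain ⟨a, x, b, ha, ha1, hb, hb1, hx, rfl⟩ := h
  exact S.long i a x b ha ha1 hb hb1 hx

theorem S.cases' {H : Bool → Subgroup G} {i : Bool} {g : G} (h : S H i g) :
    (g ∈ H i ∧ g ≠ 1) ∨ L H i g := by
  rcases h with ⟨_, _, ha, ha1⟩ | ⟨_, a, h, b, ha, ha1, hb, hb1, hh⟩
  · exact Or.inl ⟨ha, ha1⟩
  · exact Or.inr ⟨a, h, b, ha, ha1, hb, hb1, hh, rfl⟩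

variable {H : Bool → Subgroup G}

theorem S.left {i : Bool} {h : G} (hh : S H i h) :
    ∀ x c, x ∈ H i → x ≠ 1 → c ∈ H (!i) → c ≠ 1 → L H i (x * c * h) := by
  induction hh with
  | letter i a ha ha1 =>
    intro x c hx hx1 hc hc1
    exact ⟨x, c, a, hx, hx1, ha, ha1, S.letter _ _ hc hc1, rfl⟩
  | long i a h b ha ha1 hb hb1 hh ih =>
    intro x c hx hx1 hc hc1
    exact ⟨x, c * a * h, b, hx, hx1, hb, hb1, (ih c a hc hc1 (by simpa using ha) ha1).toS,
      by group⟩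

theorem S.right {i : Bool} {h : G} (hh : S H i h) :
    ∀ x c, x ∈ H i → x ≠ 1 → c ∈ H (!i) → c ≠ 1 → L H i (h * c * x) := by
  induction hh with
  | letter i a ha ha1 =>
    intro x c hx hx1 hc hc1
    exact ⟨a, c, x, ha, ha1, hx, hx1, S.letter _ _ hc hc1, rfl⟩
  | long i a h b ha ha1 hb hb1 hh ih =>
    intro x c hx hx1 hc hc1
    exact ⟨a, h * b * c, x, ha, ha1, hx, hx1, (ih c b hc hc1 (by simpa using hb) hb1).toS,
      by group⟩

theorem S.concat {i : Bool} {g : G} (hg : S H i g) :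
    ∀ c h, c ∈ H (!i) → c ≠ 1 → S H i h → L H i (g * c * h) := by
  induction hg with
  | letter i a ha ha1 =>
    intro c h hc hc1 hh
    exact hh.left a c ha ha1 hc hc1
  | long i a g b ha ha1 hb hb1 hg ih =>
    intro c h hc hc1 hh
    rcases hh.cases' with ⟨hh, hh1⟩ | ⟨y, h', z, hy, hy1, hz, hz1, hh', rfl⟩
    · exact ⟨a, g * b * c, h, ha, ha1, hh, hh1,
        (hg.right c b hc hc1 (by simpa using hb) hb1).toS, by group⟩
    · refine ⟨a, g * b * (c * y * h'), z, ha, ha1, hz, hz1, ?_, by group⟩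
      exact (ih b _ (by simpa using hb) hb1
        (hh'.left c y hc hc1 (by simpa using hy) hy1).toS).toS

theorem S.inv {i : Bool} {g : G} (hg : S H i g) : S H i g⁻¹ := by
  induction hg with
  | letter i a ha ha1 => exact S.letter _ _ (inv_mem ha) (by simpa using ha1)
  | long i a g b ha ha1 hb hb1 hg ih =>
    have := S.long i b⁻¹ g⁻¹ a⁻¹ (inv_mem hb) (by simpa using hb1) (inv_mem ha)
      (by simpa using ha1) ih
    have e : (a * g * b)⁻¹ = b⁻¹ * g⁻¹ * a⁻¹ := by group
    rwa [e]

theorem L.inv {i : Bool} {g : G} (hg : L H i g) : L H i g⁻¹ := by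
  obtain ⟨a, x, b, ha, ha1, hb, hb1, hx, rfl⟩ := hg
  exact ⟨b⁻¹, x⁻¹, a⁻¹, inv_mem hb, by simpa using hb1, inv_mem ha, by simpa using ha1,
    hx.inv, by group⟩

theorem S.powmul {i : Bool} {g c : G} (hg : S H i g) (hc : c ∈ H (!i)) (hc1 : c ≠ 1) (n : ℕ) :
    S H i ((g * c) ^ n * g) := by
  induction n with
  | zero => simpa using hg
  | succ n ih =>
    rw [pow_succ', mul_assoc]
    exact (hg.concat c _ hc hc1 ih).toS

/-- The normal form property. -/
def NF (H : Bool → Subgroup G) : Prop := ∀ i g, S H i g → g ∉ H (!i)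

theorem S.mul_not_torsion (hN : NF H) {i : Bool} {g c : G} (hg : S H i g) (hc : c ∈ H (!i))
    (hc1 : c ≠ 1) (n : ℕ) (hn : 0 < n) : (g * c) ^ n ≠ 1 := by
  obtain ⟨m, rfl⟩ : ∃ m, n = m + 1 := ⟨n - 1, by omega⟩
  intro h
  apply hN i _ (hg.powmul hc hc1 m)
  rw [pow_succ, ← mul_assoc, mul_eq_one_iff_eq_inv] at h
  rw [h]
  exact inv_mem hc

theorem S.torsion (hN : NF H) {i : Bool} {g : G} (hg : S H i g) :
    ∀ n : ℕ, 0 < n → g ^ n = 1 → ∃ j x c, c ∈ H j ∧ g = x * c * x⁻¹ := by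
  induction hg with
  | letter i a ha ha1 =>
    intro n _ _
    exact ⟨i, 1, a, ha, by simp⟩
  | long i a h b ha ha1 hb hb1 hh ih =>
    intro n hn hp
    have e : (a * h * b) ^ n = a * (h * (b * a)) ^ n * a⁻¹ := by
      rw [← conj_pow]; congr 1; group
    rw [e, conj_eq_one_iff] at hp
    by_cases hba : b * a = 1
    · rw [hba, mul_one] at hp
      obtain ⟨j, x, c, hc, rfl⟩ := ih n hn hp
      refine ⟨j, a * x, c, hc, ?_⟩
      rw [eq_inv_of_mul_eq_one_left hba]; group
    · exact absurd hp (hh.mul_not_torsion hN (by simpa using mul_mem hb ha) hba n hn)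

theorem S.pow {i : Bool} {g : G} (hg : S H i g) :
    (∀ n : ℕ, 0 < n → g ^ n ≠ 1) → ∀ n : ℕ, 0 < n → S H i (g ^ n) := by
  induction hg with
  | letter i a ha ha1 =>
    intro h n hn
    exact S.letter _ _ (pow_mem ha n) (h n hn)
  | long i a h b ha ha1 hb hb1 hh ih =>
    intro ht n hn
    have e : ∀ n, (a * h * b) ^ n = a * (h * (b * a)) ^ n * a⁻¹ := by
      intro n
      rw [← conj_pow]; congr 1; group
    by_cases hba : b * a = 1
    · have hb' := eq_inv_of_mul_eq_one_left hba
      rw [hba, mul_one] at e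
      rw [e, ← hb']
      refine S.long _ _ _ _ ha ha1 hb hb1 (ih (fun m hm h1 => ht m hm ?_) n hn)
      rw [e, h1]; group
    · obtain ⟨m, rfl⟩ : ∃ m, n = m + 1 := ⟨n - 1, by omega⟩
      have : (a * h * b) ^ (m + 1) = a * ((h * (b * a)) ^ m * h) * b := by
        rw [e, pow_succ]; group
      rw [this]
      exact S.long _ _ _ _ ha ha1 hb hb1
        (hh.powmul (by simpa using mul_mem hb ha) hba m)

theorem L.pow {i : Bool} {g : G} (hg : L H i g) 
    (ht : ∀ n : ℕ, 0 < n → g ^ n ≠ 1) (n : ℕ) (hn : 0 < n) : L H i (g ^ n) := by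
  obtain ⟨a, h, b, ha, ha1, hb, hb1, hh, rfl⟩ := hg
  have e : ∀ n, (a * h * b) ^ n = a * (h * (b * a)) ^ n * a⁻¹ := by
    intro n
    rw [← conj_pow]; congr 1; group
  by_cases hba : b * a = 1
  · have hb' := eq_inv_of_mul_eq_one_left hba
    rw [hba, mul_one] at e
    rw [e, ← hb']
    refine ⟨_, _, _, ha, ha1, hb, hb1, (hh.pow (fun m hm h1 => ht m hm ?_) n hn), rfl⟩
    rw [e, h1]; group
  · obtain ⟨m, rfl⟩ : ∃ m, n = m + 1 := ⟨n - 1, by omega⟩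
    have : (a * h * b) ^ (m + 1) = a * ((h * (b * a)) ^ m * h) * b := by
      rw [e, pow_succ]; group
    rw [this]
    exact ⟨_, _, _, ha, ha1, hb, hb1,
      (hh.powmul (by simpa using mul_mem hb ha) hba m), rfl⟩

theorem L.zpow {i : Bool} {g : G} (hg : L H i g)
    (ht : ∀ n : ℕ, 0 < n → g ^ n ≠ 1) (n : ℤ) (hn : n ≠ 0) : L H i (g ^ n) := by
  obtain ⟨m, rfl | rfl⟩ := n.eq_nat_or_neg
  · rw [zpow_natCast]; exact hg.pow ht m (by omega)
  · rw [zpow_neg, zpow_natCast]; exact (hg.pow ht m (by omega)).inv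

/-- Alternating products of powers of `w` and elements of `U`. -/
inductive T (U : Subgroup G) (w : G) : G → Prop
  | pow (n : ℤ) (hn : n ≠ 0) : T U w (w ^ n)
  | cons (n : ℤ) (hn : n ≠ 0) (c h : G) (hc : c ∈ U) (hc1 : c ≠ 1) (hh : T U w h) :
      T U w (w ^ n * c * h)

def K (U : Subgroup G) (w g : G) : Prop :=
  ∃ a h b, a ∈ U ∧ b ∈ U ∧ (h = 1 ∨ T U w h) ∧ g = a * h * b

theorem K.mulU {U : Subgroup G} {w g x : G} (hx : x ∈ U) (hg : K U w g) : K U w (x * g) := by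
  obtain ⟨a, h, b, ha, hb, hh, rfl⟩ := hg
  exact ⟨x * a, h, b, mul_mem hx ha, hb, hh, by group⟩

theorem K.mulw {U : Subgroup G} {w g : G} (m : ℤ) (hg : K U w g) :
    K U w (w ^ m * g) := by
  by_cases hm : m = 0
  · simpa [hm] using hg
  obtain ⟨a, h, b, ha, hb, hh, rfl⟩ := hg
  rcases hh with rfl | hh
  · exact ⟨1, w ^ m, a * b, one_mem _, mul_mem ha hb, Or.inr (T.pow m hm), by group⟩
  by_cases ha1 : a = 1
  · subst ha1
    cases hh with
    | pow n hn =>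
      refine ⟨1, w ^ (m + n), b, one_mem _, hb, ?_, by group⟩
      by_cases hmn : m + n = 0
      · left; simp [hmn]
      · exact Or.inr (T.pow _ hmn)
    | cons n hn c h hc hc1 hh =>
      by_cases hmn : m + n = 0
      · refine ⟨c, h, b, hc, hb, Or.inr hh, ?_⟩
        obtain rfl : n = -m := by omega
        group
      · refine ⟨1, w ^ (m + n) * c * h, b, one_mem _, hb, 
          Or.inr (T.cons _ hmn c h hc hc1 hh), by group⟩
  · exact ⟨1, w ^ m * a * h, b, one_mem _, hb, Or.inr (T.cons m hm a h ha ha1 hh), by group⟩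

theorem K.of_closure {u w g : G} (hg : g ∈ Subgroup.closure {u, w}) :
    K (Subgroup.zpowers u) w g := by
  induction hg using Subgroup.closure_induction_left with
  | one => exact ⟨1, 1, 1, one_mem _, one_mem _, Or.inl rfl, by simp⟩
  | mul_left x hx y hy ih =>
    rcases hx with rfl | rfl
    · exact ih.mulU (Subgroup.mem_zpowers _)
    · simpa using ih.mulw 1
  | inv_mul_cancel x hx y hy ih =>
    rcases hx with rfl | rfl
    · exact ih.mulU (inv_mem (Subgroup.mem_zpowers _))
    · simpa using ih.mulw (-1)

theorem T.toS {w h : G} (hw : ∀ n : ℤ, n ≠ 0 → S H true (w ^ n)) (hh : T (H false) w h) :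
    S H true h := by
  induction hh with
  | pow n hn => exact hw n hn
  | cons n hn c h hc hc1 hh ih => exact ((hw n hn).concat c h hc hc1 ih).toS

theorem T.toL {w h : G} (hw : ∀ n : ℤ, n ≠ 0 → L H true (w ^ n)) (hh : T (H false) w h) :
    L H true h := by
  induction hh with
  | pow n hn => exact hw n hn
  | cons n hn c h hc hc1 hh ih => exact ((hw n hn).toS.concat c h hc hc1 ih.toS)

theorem L.not_letter (hN : NF H) {a h b v : G} (ha : a ∈ H false) (hb : b ∈ H false)
    (hh : L H true h) (hv : v ∈ H true) : a * h * b ≠ v := by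
  intro e
  obtain ⟨x, h, y, hx, hx1, hy, hy1, hs, rfl⟩ := hh
  by_cases ha1 : a = 1
  · by_cases hb1 : b = 1
    · subst ha1 hb1
      refine hN false h hs ?_
      have : h = x⁻¹ * v * y⁻¹ := by rw [← e]; group
      rw [this]
      exact mul_mem (mul_mem (inv_mem hx) hv) (inv_mem hy)
    · subst ha1
      refine hN false _ (hs.right b y hb hb1 hy hy1).toS ?_
      have : h * y * b = x⁻¹ * v := by rw [← e]; group
      rw [this]
      exact mul_mem (inv_mem hx) hv
  · by_cases hb1 : b = 1
    · subst hb1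
      refine hN false _ (hs.left a x ha ha1 hx hx1).toS ?_
      have : a * x * h = v * y⁻¹ := by rw [← e]; group
      rw [this]
      exact mul_mem hv (inv_mem hy)
    · refine hN false _ (S.long false a _ b ha ha1 hb hb1
        (S.long true x h y hx hx1 hy hy1 hs)) ?_
      rw [e]; exact hv

section concrete

variable (k : ℕ)

/-- orders of the factors -/
def ord (i : Bool) : ℕ := if i then 0 else k

/-- The free factors. -/
abbrev M (i : Bool) : Type := Multiplicative (ZMod (ord k i))

abbrev P : Type := PresentedGroup (relCkZ k)

def x (i : Bool) : P k := PresentedGroup.of (if i then 1 else 0)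

theorem x_pow (i : Bool) : x k i ^ (ord k i) = 1 := by
  cases i
  · have : PresentedGroup.mk (relCkZ k) (FreeGroup.of 0 ^ k) = 1 :=
      PresentedGroup.one_of_mem (by simp [relCkZ])
    rw [map_pow] at this
    exact this
  · simp [ord]

def HH (i : Bool) : Subgroup (P k) := Subgroup.zpowers (x k i)

def gen (i : Bool) : Monoid.CoprodI (M k) :=
  Monoid.CoprodI.of (i := i) (Multiplicative.ofAdd (1 : ZMod (ord k i)))

def psi : P k →* Monoid.CoprodI (M k) :=
  PresentedGroup.toGroup (f := fun j : Fin 2 => if j = 0 then gen k false else gen k true) (by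
    intro r hr
    rw [relCkZ, Set.mem_singleton_iff] at hr
    subst hr
    simp only [map_pow, FreeGroup.lift_apply_of, if_true, gen]
    rw [← map_pow, ← ofAdd_nsmul]
    have : k • (1 : ZMod (ord k false)) = 0 := by
      have h := CharP.cast_eq_zero (ZMod k) k
      rw [← nsmul_one] at h
      exact h
    rw [this]; simp)

theorem psi_x (i : Bool) : psi k (x k i) = gen k i := by
  cases i <;> simp [psi, x]

def ex : P k →* Multiplicative ℤ :=
  PresentedGroup.toGroup
    (f := fun j : Fin 2 => if j = 0 then 1 else Multiplicative.ofAdd (1 : ℤ)) (by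
    intro r hr
    rw [relCkZ, Set.mem_singleton_iff] at hr
    subst hr
    simp)

theorem ex_u : ex k (x k false) = 1 := by simp [ex, x]
theorem ex_v : ex k (x k true) = Multiplicative.ofAdd 1 := by simp [ex, x]

theorem psi_mem {i : Bool} {z : P k} (hz : z ∈ HH k i) (hz1 : z ≠ 1) :
    ∃ m : M k i, m ≠ 1 ∧ psi k z = Monoid.CoprodI.of m := by
  obtain ⟨t, rfl⟩ := Subgroup.mem_zpowers_iff.mp hz
  refine ⟨Multiplicative.ofAdd (t : ZMod (ord k i)), ?_, ?_⟩
  · intro h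
    apply hz1
    have h' : ((t : ℤ) : ZMod (ord k i)) = 0 := h
    rw [ZMod.intCast_zmod_eq_zero_iff_dvd] at h'
    obtain ⟨c, rfl⟩ := h'
    rw [zpow_mul, zpow_natCast, x_pow, one_zpow]
  · rw [map_zpow, psi_x, gen, ← map_zpow, ← ofAdd_zsmul]
    simp

theorem newWord_ne {i j : Bool} (w : Monoid.CoprodI.NeWord (M k) i j) : w.prod ≠ 1 := by
  classical
  intro h
  have : w.toWord = Monoid.CoprodI.Word.empty :=
    Monoid.CoprodI.Word.equiv.symm.injective
      (by simpa [Monoid.CoprodI.Word.equiv, Monoid.CoprodI.NeWord.prod] using h)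
  apply w.toList_ne_nil
  have h2 := congrArg Monoid.CoprodI.Word.toList this
  simpa [Monoid.CoprodI.NeWord.toWord] using h2

theorem S.word {i : Bool} {g : P k} (hg : S (HH k) i g) :
    ∃ w : Monoid.CoprodI.NeWord (M k) i i, w.prod = psi k g := by
  induction hg with
  | letter i a ha ha1 =>
    obtain ⟨m, hm, e⟩ := psi_mem k ha ha1
    exact ⟨.singleton m hm, by simp [e]⟩
  | long i a h b ha ha1 hb hb1 hh ih =>
    obtain ⟨m, hm, e⟩ := psi_mem k ha ha1
    obtain ⟨m', hm', e'⟩ := psi_mem k hb hb1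
    obtain ⟨w, hw⟩ := ih
    exact ⟨.append (.append (.singleton m hm) (by simp) w) (by simp) (.singleton m' hm'),
      by simp [e, e', hw]⟩

theorem nf : NF (HH k) := by
  intro i g hg hg'
  obtain ⟨w, hw⟩ := hg.word k
  by_cases h1 : g = 1
  · rw [h1, map_one] at hw
    exact newWord_ne k w hw
  obtain ⟨m, hm, e⟩ := psi_mem k hg' h1
  apply newWord_ne k (.append w (by simp) (.singleton m⁻¹ (by simpa using hm)))
  simp [hw, e]

theorem v_zpow_ne (n : ℤ) (hn : n ≠ 0) : x k true ^ n ≠ 1 := by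
  intro h
  have := congrArg (ex k) h
  rw [map_zpow, ex_v, map_one (ex k), ← ofAdd_zsmul] at this
  apply hn
  simpa using this

theorem v_S (n : ℤ) (hn : n ≠ 0) : S (HH k) true (x k true ^ n) :=
  S.letter _ _ (zpow_mem (Subgroup.mem_zpowers _) n) (v_zpow_ne k n hn)

theorem closure_top : Subgroup.closure {x k false, x k true} = ⊤ := by
  rw [← PresentedGroup.closure_range_of (relCkZ k)]
  congr 1
  ext z
  simp [x, Fin.exists_fin_two, eq_comm]

theorem decomp (g : P k) : ∃ a h b, a ∈ HH k false ∧ b ∈ HH k false ∧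
    (h = 1 ∨ S (HH k) true h) ∧ g = a * h * b := by
  obtain ⟨a, h, b, ha, hb, hh, e⟩ := K.of_closure (u := x k false) (w := x k true) (g := g)
    (by rw [closure_top]; trivial)
  exact ⟨a, h, b, ha, hb, hh.imp id (fun hh => T.toS (H := HH k) (v_S k) hh), e⟩

theorem torsion {g : P k} {n : ℕ} (hn : 0 < n) (hg : g ^ n = 1) :
    ∃ y c, c ∈ HH k false ∧ g = y * c * y⁻¹ := by
  obtain ⟨a, h, b, ha, hb, hh, rfl⟩ := decomp k g
  rcases hh with rfl | hh
  · exact ⟨1, a * b, mul_mem ha hb, by group⟩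
  have e : (a * h * b) ^ n = a * (h * (b * a)) ^ n * a⁻¹ := by
    rw [← conj_pow]; congr 1; group
  rw [e, conj_eq_one_iff] at hg
  by_cases hba : b * a = 1
  · rw [hba, mul_one] at hg
    obtain ⟨j, y, c, hc, rfl⟩ := hh.torsion (nf k) n hn hg
    cases j
    · refine ⟨a * y, c, hc, ?_⟩
      rw [eq_inv_of_mul_eq_one_left hba]; group
    · exfalso
      obtain ⟨t, rfl⟩ := Subgroup.mem_zpowers_iff.mp hc
      rw [conj_pow, conj_eq_one_iff, ← zpow_natCast, ← zpow_mul] at hg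
      by_cases ht : t = 0
      · subst ht
        exact nf k _ _ hh (by simp)
      · exact v_zpow_ne k _ (mul_ne_zero ht (by exact_mod_cast hn.ne')) hg
  · exact absurd hg (hh.mul_not_torsion (nf k) (mul_mem hb ha) hba n hn)

theorem ex_U {a : P k} (ha : a ∈ HH k false) : ex k a = 1 := by
  obtain ⟨t, rfl⟩ := Subgroup.mem_zpowers_iff.mp ha
  rw [map_zpow, ex_u, one_zpow]

theorem ex_closure {w : P k} (hw : Subgroup.closure {x k false, w} = ⊤) :
    Multiplicative.ofAdd (1 : ℤ) ∈ Subgroup.zpowers (ex k w) := by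
  have : Subgroup.closure {x k false, w} ≤ (Subgroup.zpowers (ex k w)).comap (ex k) := by
    rw [Subgroup.closure_le]
    rintro z (rfl | rfl)
    · simp [ex_u]
    · simp
  have h2 := this (show x k true ∈ _ by rw [hw]; trivial)
  simpa [ex_v] using h2

theorem key {w : P k} (hw : Subgroup.closure {x k false, w} = ⊤) :
    ∃ (a b : P k) (m : ℤ), a ∈ HH k false ∧ b ∈ HH k false ∧ (m = 1 ∨ m = -1) ∧
      w = a * x k true ^ m * b := by
  have hex := ex_closure k hw
  obtain ⟨a, h, b, ha, hb, hh, rfl⟩ := decomp k w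
  have hexw : ex k (a * h * b) = ex k h := by simp [ex_U k ha, ex_U k hb]
  rw [hexw] at hex
  have htor : ∀ n : ℕ, 0 < n → h ^ n ≠ 1 := by
    intro n hn h1
    have h2 := congrArg (ex k) h1
    rw [map_pow, map_one, pow_eq_one_iff_left hn.ne'] at h2
    rw [h2] at hex
    simp at hex
  rcases hh with rfl | hh
  · exact absurd (one_pow 1) (htor 1 one_pos)
  rcases hh.cases' with ⟨hv, hv1⟩ | hL
  · obtain ⟨m, rfl⟩ := Subgroup.mem_zpowers_iff.mp hv
    refine ⟨a, b, m, ha, hb, ?_, rfl⟩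
    rw [map_zpow, ex_v] at hex
    obtain ⟨t, ht⟩ := Subgroup.mem_zpowers_iff.mp hex
    have ht' : t * m = 1 := by
      have := congrArg Multiplicative.toAdd ht
      simpa using this
    exact Int.isUnit_iff.mp (IsUnit.of_mul_eq_one_right t ht')
  · exfalso
    have hle : Subgroup.closure {x k false, a * h * b} ≤ Subgroup.closure {x k false, h} := by
      have hU : HH k false ≤ Subgroup.closure {x k false, h} := by
        rw [HH, Subgroup.zpowers_le]; exact Subgroup.subset_closure (by simp)
      rw [Subgroup.closure_le]
      rintro z (rfl | rfl)
      · exact Subgroup.subset_closure (by simp)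
      · exact mul_mem (mul_mem (hU ha) (Subgroup.subset_closure (by simp))) (hU hb)
    rw [hw] at hle
    have hv : x k true ∈ HH k true := Subgroup.mem_zpowers _
    obtain ⟨a', h', b', ha', hb', hh', e⟩ := K.of_closure (hle (Subgroup.mem_top (x k true)))
    rcases hh' with rfl | hh'
    · refine nf k true (x k true) (by simpa using v_S k 1 one_ne_zero) ?_
      rw [e, mul_one]
      exact mul_mem ha' hb'
    · exact L.not_letter (nf k) ha' hb' (T.toL (H := HH k) (fun n hn => hL.zpow htor n hn) hh') hv
        e.symm

theorem exists_nat (hk : 2 ≤ k) {a : P k} (ha : a ∈ HH k false) :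
    ∃ s < k, a = x k false ^ s := by
  obtain ⟨t, rfl⟩ := Subgroup.mem_zpowers_iff.mp ha
  have hk0 : (k : ℤ) ≠ 0 := by omega
  have h1 := Int.emod_nonneg t hk0
  have h2 := Int.emod_lt_of_pos t (show (0 : ℤ) < k by omega)
  refine ⟨(t % k).toNat, by omega, ?_⟩
  rw [← zpow_natCast, Int.toNat_of_nonneg h1]
  conv_lhs => rw [← Int.emod_add_mul_ediv t k]
  have := x_pow k false
  rw [show ord k false = k from rfl] at this
  rw [zpow_add, zpow_mul, zpow_natCast, this, one_zpow, mul_one]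

theorem order_u : orderOf (x k false) = k := by
  apply Nat.dvd_antisymm
  · exact orderOf_dvd_of_pow_eq_one (x_pow k false)
  · have h := pow_orderOf_eq_one (x k false)
    have h2 := congrArg (psi k) h
    rw [map_pow, psi_x, map_one, gen, ← map_pow, ← ofAdd_nsmul] at h2
    have h3 := Monoid.CoprodI.of_injective _ (h2.trans (map_one _).symm)
    have h4 : ((orderOf (x k false) : ℕ) : ZMod k) = 0 := by
      have h5 : (orderOf (x k false)) • (1 : ZMod k) = 0 := h3
      simpa using h5
    rwa [ZMod.natCast_eq_zero_iff] at h4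

end concrete

end CkZ

open CkZ in
theorem stmt3 (k : ℕ) (hk : 2 ≤ k)
    (φ : PresentedGroup (relCkZ k) ≃* PresentedGroup (relCkZ k)) :
    ∃ (ε : ℤ) (r s : ℕ) (g : PresentedGroup (relCkZ k)),
      (ε = 1 ∨ ε = -1) ∧ r < k ∧ s < k ∧ Nat.Coprime r k ∧
      φ (PresentedGroup.of 0) = g * (PresentedGroup.of 0) ^ r * g⁻¹ ∧
      φ (PresentedGroup.of 1) =
        g * ((PresentedGroup.of 1) ^ ε * (PresentedGroup.of 0) ^ s) * g⁻¹ := by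
  have hu : (PresentedGroup.of 0 : PresentedGroup (relCkZ k)) = x k false := rfl
  have hv : (PresentedGroup.of 1 : PresentedGroup (relCkZ k)) = x k true := rfl
  rw [hu, hv]
  have hpow : φ (x k false) ^ k = 1 := by
    rw [← map_pow, show x k false ^ k = 1 from x_pow k false, map_one]
  obtain ⟨y, c, hc, hy⟩ := torsion k (by omega) hpow
  obtain ⟨r, hr, rfl⟩ := exists_nat k hk hc
  have hcop : Nat.Coprime r k := by
    have h1 : orderOf (φ (x k false)) = k := by rw [MulEquiv.orderOf_eq, order_u]
    have h2 : orderOf (x k false ^ r) = k := by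
      rw [hy] at h1
      exact (MulEquiv.orderOf_eq (MulAut.conj y) (x k false ^ r)).symm.trans h1
    have hfin : IsOfFinOrder (x k false) :=
      isOfFinOrder_iff_pow_eq_one.mpr ⟨k, by omega, x_pow k false⟩
    rw [hfin.orderOf_pow, order_u, Nat.div_eq_self] at h2
    rw [Nat.coprime_comm]
    exact h2.resolve_left (by omega)
  set w := y⁻¹ * φ (x k true) * y with hw
  have hcl : Subgroup.closure {x k false, w} = ⊤ := by
    let χ : P k ≃* P k := φ.trans (MulAut.conj y⁻¹)
    have hχ : ∀ z, χ z = y⁻¹ * φ z * y := fun z => by simp [χ]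
    have hle : Subgroup.closure {x k false, x k true} ≤
        (Subgroup.closure {x k false, w}).comap χ.toMonoidHom := by
      rw [Subgroup.closure_le]
      rintro z (rfl | rfl)
      · have : χ (x k false) = x k false ^ r := by rw [hχ, hy]; group
        show χ (x k false) ∈ Subgroup.closure {x k false, w}
        rw [this]
        exact pow_mem (Subgroup.subset_closure (by simp)) r
      · show χ (x k true) ∈ Subgroup.closure {x k false, w}
        rw [hχ, ← hw]
        exact Subgroup.subset_closure (by simp)
    rw [closure_top] at hle
    rw [eq_top_iff]
    intro z _
    have := hle (Subgroup.mem_top (χ.symm z))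
    simpa using this
  obtain ⟨a, b, m, ha, hb, hm, e⟩ := key k hcl
  obtain ⟨s, hs, hs'⟩ := exists_nat k hk (mul_mem hb ha)
  refine ⟨m, r, s, y * a, hm, hr, hs, hcop, ?_, ?_⟩
  · have hcomm : a * x k false ^ r * a⁻¹ = x k false ^ r := by
      obtain ⟨t, rfl⟩ := Subgroup.mem_zpowers_iff.mp ha
      group
    rw [hy]
    calc _ = y * (a * x k false ^ r * a⁻¹) * y⁻¹ := by rw [hcomm]
      _ = _ := by group
  · rw [← hs']
    have : φ (x k true) = y * w * y⁻¹ := by rw [hw]; group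
    rw [this, e]
    group
end

section
/- Let A(Γ) be the Artin group of rank 2 with presentation ⟨α, β | w(α,β:m) = w(β,α:m)⟩ where m ≥ 3 is odd and w(α,β:m) denotes the alternating word αβα… of length m. Then the outer automorphism group Out(A) is cyclic of order 2, generated by the class of the automorphism ε which sends α ↦ α⁻¹ and β ↦ β⁻¹. -/
/-- The alternating word `x y x y ⋯` of length `m`. -/
def altWord : ℕ → FreeGroup (Fin 2) → FreeGroup (Fin 2) → FreeGroup (Fin 2)
  | 0, _, _ => 1
  | n + 1, x, y => x * altWord n y x

/-- Relator for the rank-2 Artin group `⟨α, β | w(α,β:m) = w(β,α:m)⟩`,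
with `α = of 0`, `β = of 1`. -/
def dihedralArtinRel (m : ℕ) : Set (FreeGroup (Fin 2)) :=
  {altWord m (FreeGroup.of 0) (FreeGroup.of 1) *
    (altWord m (FreeGroup.of 1) (FreeGroup.of 0))⁻¹}

namespace ArtinOut
open Monoid Monoid.CoprodI

section FreeProd
variable {ι : Type} {H : ι → Type} [∀ i, Group (H i)]

open Classical in
/-- Syllable length. -/
noncomputable def len (g : CoprodI H) : ℕ := (Word.equiv g).toList.length

theorem len_prod {i j} (w : NeWord H i j) : len w.prod = w.toList.length := by
  classical
  unfold len
  have : Word.equiv w.prod = w.toWord := by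
    rw [NeWord.prod]
    convert (Word.equiv (M := H)).apply_symm_apply w.toWord
    rfl
  convert congrArg (fun v => v.toList.length) this
  rfl

theorem len_one : len (1 : CoprodI H) = 0 := by
  classical
  unfold len
  have : Word.equiv (1 : CoprodI H) = Word.empty := by
    convert (Word.equiv (M := H)).apply_symm_apply Word.empty
    rfl
  simpa using congrArg (fun v => v.toList.length) this

theorem pos {i j} (w : NeWord H i j) : 0 < w.toList.length :=
  List.length_pos_iff.mpr w.toList_ne_nil

theorem ne_one {i j} (w : NeWord H i j) : w.prod ≠ 1 := by
  intro h
  have h1 := len_prod w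
  rw [h, len_one] at h1
  have := pos w
  omega

theorem exists_neWord (g : CoprodI H) (hg : g ≠ 1) : ∃ i j, ∃ w : NeWord H i j, w.prod = g := by
  classical
  have h : Word.equiv g ≠ Word.empty := by
    intro h
    apply hg
    have := (Word.equiv (M := H)).symm_apply_apply g
    rw [h] at this
    rw [← this]
    exact Word.prod_empty
  obtain ⟨i, j, w, hw⟩ := NeWord.of_word _ h
  refine ⟨i, j, w, ?_⟩
  rw [NeWord.prod, hw]
  exact (Word.equiv (M := H)).symm_apply_apply g

theorem len_of {i} (h : H i) (hh : h ≠ 1) : len (of h) = 1 := by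
  rw [← NeWord.prod_singleton h hh, len_prod]; rfl

theorem split_left {i j} (w : NeWord H i j) :
    (∃ h : H i, h ≠ 1 ∧ i = j ∧ w.prod = of h) ∨
    ∃ (h : H i) (k : ι) (w' : NeWord H k j), i ≠ k ∧ h ≠ 1 ∧ w.prod = of h * w'.prod ∧
      w.toList.length = w'.toList.length + 1 := by
  induction w with
  | singleton x hx => exact Or.inl ⟨x, hx, rfl, by simp⟩
  | @append i j k l w₁ hne w₂ h1 h2 =>
    right
    rcases h1 with ⟨h, hh, hij, hp⟩ | ⟨h, k', w', hk, hh, hp, hl⟩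
    · subst hij
      refine ⟨h, k, w₂, hne, hh, by simp [hp], ?_⟩
      have := len_prod w₁
      rw [hp, len_of h hh] at this
      simp [NeWord.toList, ← this, add_comm]
    · refine ⟨h, k', NeWord.append w' hne w₂, hk, hh, by simp [hp, mul_assoc], ?_⟩
      simp [NeWord.toList, hl]; omega

theorem split_right {i j} (w : NeWord H i j) :
    (∃ h : H j, h ≠ 1 ∧ i = j ∧ w.prod = of h) ∨
    ∃ (h : H j) (k : ι) (w' : NeWord H i k), k ≠ j ∧ h ≠ 1 ∧ w.prod = w'.prod * of h ∧
      w.toList.length = w'.toList.length + 1 := by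
  induction w with
  | singleton x hx => exact Or.inl ⟨x, hx, rfl, by simp⟩
  | @append i j k l w₁ hne w₂ h1 h2 =>
    right
    rcases h2 with ⟨h, hh, hij, hp⟩ | ⟨h, k', w', hk, hh, hp, hl⟩
    · subst hij
      refine ⟨h, j, w₁, hne, hh, by simp [hp], ?_⟩
      have := len_prod w₂
      rw [hp, len_of h hh] at this
      simp [NeWord.toList, ← this]
    · refine ⟨h, k', NeWord.append w₁ hne w', hk, hh, by simp [hp, mul_assoc], ?_⟩
      simp [NeWord.toList, hl]; omega

theorem pow_word {i j} (w : NeWord H i j) (hij : i ≠ j) (n : ℕ) :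
    ∃ w' : NeWord H i j, w'.prod = w.prod ^ (n + 1) := by
  induction n with
  | zero => exact ⟨w, by simp⟩
  | succ n ih =>
    obtain ⟨w', hw'⟩ := ih
    exact ⟨NeWord.append w' hij.symm w, by simp [hw', pow_succ]⟩

/-- Torsion elements of a free product are conjugate into a factor. -/
theorem torsion [Nonempty ι] (n : ℕ) : ∀ (N : ℕ) (g : CoprodI H), len g ≤ N → g ^ (n + 1) = 1 →
    ∃ (i : ι) (h : H i) (c : CoprodI H), g = c * of h * c⁻¹ := by
  intro N
  induction N using Nat.strong_induction_on with
  | _ N ih =>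
  intro g hN hg
  by_cases h1 : g = 1
  · exact ⟨Classical.arbitrary ι, 1, 1, by simp [h1]⟩
  obtain ⟨i, j, w, rfl⟩ := exists_neWord g h1
  by_cases hij : i = j
  · subst hij
    rcases split_left w with ⟨h, -, -, hp⟩ | ⟨a, k, w', hk, ha, hp, hl⟩
    · exact ⟨i, h, 1, by simp [hp]⟩
    rcases split_right w' with ⟨_, _, h, _⟩ | ⟨b, l, w'', hl', hb, hp', hl2⟩
    · exact absurd h.symm hk
    have key : (of a)⁻¹ * w.prod * of a = w''.prod * of (b * a) := by
      rw [hp, hp', map_mul]; group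
    have hlen : len (w''.prod * of (b * a)) ≤ w'.toList.length := by
      by_cases hba : b * a = 1
      · rw [hba, map_one, mul_one, len_prod]; omega
      · rw [← NeWord.prod_singleton _ hba, ← NeWord.append_prod (hne := hl'), len_prod]
        simp [NeWord.toList, hl2]
    rw [len_prod] at hN
    obtain ⟨i', h, c, hc⟩ := ih w'.toList.length (by omega) _ hlen (by
      rw [← key]
      have : ((of a)⁻¹ * w.prod * of a) ^ (n + 1) = (of a)⁻¹ * w.prod ^ (n + 1) * of a := by
        simpa using conj_pow (i := n + 1) (a := (of a : CoprodI H)⁻¹) (b := w.prod)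
      rw [this, hg]; simp)
    refine ⟨i', h, of a * c, ?_⟩
    rw [← key] at hc
    calc w.prod = of a * ((of a)⁻¹ * w.prod * of a) * (of a)⁻¹ := by group
      _ = _ := by rw [hc]; group
  · obtain ⟨w', hw'⟩ := pow_word w hij n
    exact absurd (hw'.trans hg) (ne_one w')

theorem conj_word {i j k} (w : NeWord H i j) (hjk : j ≠ k) (h : H k) (hh : h ≠ 1) :
    ∃ w' : NeWord H i i, w'.prod = w.prod * of h * w.prod⁻¹ ∧ 3 ≤ w'.toList.length := by
  refine ⟨NeWord.append (NeWord.append w hjk (NeWord.singleton h hh)) hjk.symm w.inv, by simp, ?_⟩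
  have := pos w
  have := pos w.inv
  simp [NeWord.toList]; omega

theorem center_trivial [Nontrivial ι] [∀ i, Nontrivial (H i)] (g : CoprodI H)
    (hg : ∀ u, u * g = g * u) : g = 1 := by
  by_contra h1
  obtain ⟨i, j, w, rfl⟩ := exists_neWord g h1
  obtain ⟨k, hk⟩ := exists_ne j
  obtain ⟨h, hh⟩ := exists_ne (1 : H k)
  obtain ⟨w', hw', hl⟩ := conj_word w hk.symm h hh
  rw [← hg, mul_inv_cancel_right] at hw'
  have := len_prod w'
  rw [hw', len_of h hh] at this
  omega

end FreeProd

section Two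
variable {H : Bool → Type} [∀ i, Group (H i)]

theorem decomp : ∀ (N : ℕ) (g : CoprodI H), len g ≤ N →
    ∃ (a : H false) (b : H true) (g' : CoprodI H), g = of a * g' * of b ∧
      (g' = 1 ∨ ∃ w : NeWord H true false, w.prod = g') := by
  intro N
  induction N using Nat.strong_induction_on with
  | _ N ih =>
  intro g hN
  by_cases h1 : g = 1
  · exact ⟨1, 1, 1, by simp [h1], Or.inl rfl⟩
  obtain ⟨i, j, w, rfl⟩ := exists_neWord g h1
  rw [len_prod] at hN
  have hpos := pos w
  cases i with
  | false =>
    rcases split_left w with ⟨h, _, _, hp⟩ | ⟨h, k, w', hk, hh, hp, hl⟩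
    · exact ⟨h, 1, 1, by simp [hp], Or.inl rfl⟩
    · obtain ⟨a, b, g', hg, hor⟩ := ih w'.toList.length (by omega) w'.prod (len_prod w').le
      exact ⟨h * a, b, g', by rw [hp, hg, map_mul]; group, hor⟩
  | true =>
    cases j with
    | false => exact ⟨1, 1, w.prod, by simp, Or.inr ⟨w, rfl⟩⟩
    | true =>
    rcases split_right w with ⟨h, _, _, hp⟩ | ⟨h, k, w', hk, hh, hp, hl⟩
    · exact ⟨1, h, 1, by simp [hp], Or.inl rfl⟩
    · obtain ⟨a, b, g', hg, hor⟩ := ih w'.toList.length (by omega) w'.prod (len_prod w').le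
      exact ⟨a, b * h, g', by rw [hp, hg, map_mul]; group, hor⟩

theorem image_word (w : NeWord H true false) (f : CoprodI H →* CoprodI H)
    (hf0 : ∀ h : H false, f (of h) = of h)
    (hf1 : ∀ h : H true, f (of h) = w.prod * of h * w.prod⁻¹) {i j} (v : NeWord H i j) :
    ∃ v' : NeWord H i j, v'.prod = f v.prod ∧ (i = true → 3 ≤ v'.toList.length) := by
  induction v with
  | @singleton i h hh =>
    cases i with
    | false => exact ⟨NeWord.singleton h hh, by simp [hf0], by simp⟩
    | true =>
      obtain ⟨w', hw', hl⟩ := conj_word w (by simp) h hh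
      exact ⟨w', by simp [hf1, hw'], fun _ => hl⟩
  | append v₁ hne v₂ h1 h2 =>
    obtain ⟨a, ha, hl⟩ := h1
    obtain ⟨b, hb, -⟩ := h2
    refine ⟨NeWord.append a hne b, by simp [ha, hb], fun h => ?_⟩
    have := hl h
    simp [NeWord.toList]; omega

theorem head_index {i j k l} (v : NeWord H i j) (w : NeWord H k l) (h : v.prod = w.prod) :
    i = k := by
  classical
  have : v.toWord = w.toWord := (Word.equiv (M := H)).symm.injective h
  have h2 : v.toList = w.toList := congrArg Word.toList this
  have h3 := v.toList_head?
  rw [h2, w.toList_head?] at h3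
  simp at h3
  exact h3.1.symm

theorem not_surj [Nontrivial (H true)] (w : NeWord H true false) (f : CoprodI H →* CoprodI H)
    (hf0 : ∀ h : H false, f (of h) = of h)
    (hf1 : ∀ h : H true, f (of h) = w.prod * of h * w.prod⁻¹) : ¬ Function.Surjective f := by
  intro hs
  obtain ⟨q, hq⟩ := exists_ne (1 : H true)
  obtain ⟨u, hu⟩ := hs (of q)
  have hw := NeWord.prod_singleton q hq
  have hu1 : u ≠ 1 := by
    rintro rfl
    rw [map_one, ← hw] at hu
    exact ne_one _ hu.symm
  obtain ⟨i, j, v, rfl⟩ := exists_neWord u hu1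
  obtain ⟨v', hv', hl⟩ := image_word w f hf0 hf1 v
  have hi : i = true := head_index v' (NeWord.singleton q hq) (by rw [hv', hu, hw])
  have := hl hi
  rw [← len_prod, hv', hu, len_of q hq] at this
  omega

end Two

section Core
variable {H : Bool → Type} [∀ i, Group (H i)] [∀ i, Nontrivial (H i)]
variable {A : Type} [Group A] {x y : A} {m : ℕ} {p : H false} {q : H true} {π : A →* CoprodI H}

theorem central (hgen : Subgroup.closure {x, y} = ⊤) (hxy : x ^ 2 = y ^ m) (g : A) :
    Commute (x ^ 2) g := by
  have h : Subgroup.closure {x, y} ≤ Subgroup.centralizer {x ^ 2} := by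
    rw [Subgroup.closure_le]
    rintro u (rfl | rfl)
    · rw [SetLike.mem_coe, Subgroup.mem_centralizer_singleton_iff]
      exact (Commute.refl u).pow_right 2
    · rw [SetLike.mem_coe, Subgroup.mem_centralizer_singleton_iff, hxy]
      exact (Commute.refl u).pow_right m
  have hg : g ∈ Subgroup.centralizer {x ^ 2} := h (by rw [hgen]; trivial)
  exact (Subgroup.mem_centralizer_singleton_iff.mp hg).symm

theorem phi_z (hgen : Subgroup.closure {x, y} = ⊤) (hxy : x ^ 2 = y ^ m)
    (hπs : Function.Surjective π)
    (hker : ∀ g, π g = 1 → ∃ i : ℤ, g = (x ^ 2) ^ i)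
    (hinf : ∀ i j : ℤ, (x ^ 2) ^ i = (x ^ 2) ^ j → i = j) (φ : MulAut A) :
    φ (x ^ 2) = (x ^ 2) ^ (1 : ℤ) ∨ φ (x ^ 2) = (x ^ 2) ^ (-1 : ℤ) := by
  have key : ∀ ψ : MulAut A, ∃ i : ℤ, ψ (x ^ 2) = (x ^ 2) ^ i := by
    intro ψ
    apply hker
    apply center_trivial
    intro u
    obtain ⟨v, rfl⟩ := hπs u
    obtain ⟨v, rfl⟩ := ψ.surjective v
    rw [← map_mul, ← map_mul, ← map_mul, ← map_mul, (central hgen hxy v).eq]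
  obtain ⟨i, hi⟩ := key φ
  obtain ⟨j, hj⟩ := key φ⁻¹
  have h : (x ^ 2) ^ (1 : ℤ) = (x ^ 2) ^ (i * j) := by
    have : φ⁻¹ (φ (x ^ 2)) = x ^ 2 := by simp
    rw [hi, map_zpow, hj, ← zpow_mul, mul_comm j i] at this
    rw [this, zpow_one]
  have h1 := hinf _ _ h
  rcases Int.eq_one_or_neg_one_of_mul_eq_one h1.symm with rfl | rfl
  · exact Or.inl hi
  · exact Or.inr hi

theorem phi_x (hgen : Subgroup.closure {x, y} = ⊤) (hxy : x ^ 2 = y ^ m) (hodd : Odd m)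
    (hπs : Function.Surjective π) (hπx : π x = of p)
    (hker : ∀ g, π g = 1 → ∃ i : ℤ, g = (x ^ 2) ^ i)
    (hinf : ∀ i j : ℤ, (x ^ 2) ^ i = (x ^ 2) ^ j → i = j)
    (hp : ∀ h : H false, ∃ j : ℤ, p ^ j = h)
    (hq' : ∀ h : H true, h ^ m = 1) (φ : MulAut A) :
    ∃ c, φ x = c * x * c⁻¹ ∨ φ x = c * x⁻¹ * c⁻¹ := by
  have hcen := central hgen hxy
  have hz := phi_z hgen hxy hπs hker hinf φ
  have hπz : π (x ^ 2) = 1 := by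
    apply center_trivial
    intro u
    obtain ⟨v, rfl⟩ := hπs u
    rw [← map_mul, ← map_mul, (hcen v).eq]
  have ht : π (φ x) ^ (1 + 1) = 1 := by
    rw [← map_pow, ← map_pow]
    rcases hz with h | h <;> rw [h, map_zpow, hπz, one_zpow]
  -- `π (φ x)` is conjugate to a power of `π x`
  have h1 : ∃ (j : ℤ) (C : CoprodI H), π (φ x) = C * of (p ^ j) * C⁻¹ := by
    obtain ⟨i, h, C, hC⟩ := torsion 1 _ _ le_rfl ht
    cases i with
    | false => obtain ⟨j, rfl⟩ := hp h; exact ⟨j, C, hC⟩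
    | true =>
      refine ⟨0, C, ?_⟩
      have h2 : h ^ 2 = 1 := by
        apply of_injective true
        rw [hC, conj_pow] at ht
        rw [map_pow, map_one]
        simpa using ht
      have h3 : h = 1 := by
        obtain ⟨k, rfl⟩ := hodd
        have := hq' h
        rwa [pow_succ, pow_mul, h2, one_pow, one_mul] at this
      rw [hC, h3]; simp
  obtain ⟨j, C, hC⟩ := h1
  obtain ⟨c, rfl⟩ := hπs C
  obtain ⟨i, hi⟩ := hker (c * x ^ (-j) * c⁻¹ * φ x) (by
    rw [map_mul, hC]; simp only [map_mul, map_zpow, map_inv, hπx]; group)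
  have h2 : φ x = c * x ^ (j + 2 * i) * c⁻¹ := by
    have e : φ x = c * x ^ j * c⁻¹ * (x ^ 2) ^ i := by rw [← hi]; group
    rw [e, mul_assoc (c * x ^ j), ← ((hcen c⁻¹).zpow_left i).eq, zpow_add, zpow_mul]
    simp [mul_assoc]
  have h3 : φ (x ^ 2) = (x ^ 2) ^ (j + 2 * i) := by
    rw [map_pow, h2, conj_pow, ← zpow_natCast, ← zpow_mul, mul_comm, zpow_mul, zpow_natCast,
      ← ((hcen c).zpow_left _).eq, mul_inv_cancel_right]
  refine ⟨c, ?_⟩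
  rcases hz with h | h
  · left; rw [h2, hinf _ _ (h3.symm.trans h), zpow_one]
  · right; rw [h2, hinf _ _ (h3.symm.trans h), zpow_neg_one]

theorem fix_x (hgen : Subgroup.closure {x, y} = ⊤) (hxy : x ^ 2 = y ^ m) (hodd : Odd m)
    (hπs : Function.Surjective π) (hπx : π x = of p) (hπy : π y = of q)
    (hker : ∀ g, π g = 1 → ∃ i : ℤ, g = (x ^ 2) ^ i)
    (hinf : ∀ i j : ℤ, (x ^ 2) ^ i = (x ^ 2) ^ j → i = j)
    (hp : ∀ h : H false, ∃ j : ℤ, p ^ j = h) (hp' : ∀ h : H false, h ^ 2 = 1)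
    (hq : ∀ h : H true, ∃ j : ℤ, q ^ j = h) (φ : MulAut A) (hφ : φ x = x) :
    φ ∈ (MulAut.conj : A →* MulAut A).range := by
  have hcen := central hgen hxy
  have hπz : π (x ^ 2) = 1 := by
    apply center_trivial
    intro u
    obtain ⟨v, rfl⟩ := hπs u
    rw [← map_mul, ← map_mul, (hcen v).eq]
  obtain ⟨n, rfl⟩ : ∃ n, m = n + 1 := ⟨m - 1, by have := hodd.pos; omega⟩
  have ht : π (φ y) ^ (n + 1) = 1 := by
    rw [← map_pow, ← map_pow, ← hxy, map_pow, hφ, hπz]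
  have h1 : ∃ (j : ℤ) (C : CoprodI H), π (φ y) = C * of (q ^ j) * C⁻¹ := by
    obtain ⟨i, h, C, hC⟩ := torsion n _ _ le_rfl ht
    cases i with
    | true => obtain ⟨j, rfl⟩ := hq h; exact ⟨j, C, hC⟩
    | false =>
      refine ⟨0, C, ?_⟩
      have h2 : h ^ (n + 1) = 1 := by
        apply of_injective false
        rw [hC, conj_pow] at ht
        rw [map_pow, map_one]
        simpa using ht
      have h3 : h = 1 := by
        obtain ⟨k, hk⟩ := hodd
        rwa [hk, pow_succ, pow_mul, hp' h, one_pow, one_mul] at h2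
      rw [hC, h3]; simp
  obtain ⟨j, C, hC⟩ := h1
  obtain ⟨c, rfl⟩ := hπs C
  obtain ⟨i, hi⟩ := hker (c * y ^ (-j) * c⁻¹ * φ y) (by
    rw [map_mul, hC]; simp only [map_mul, map_zpow, map_inv, hπy]; group)
  have h2 : φ y = c * y ^ (j + ((n + 1 : ℕ) : ℤ) * i) * c⁻¹ := by
    have e : φ y = c * y ^ j * c⁻¹ * (x ^ 2) ^ i := by rw [← hi]; group
    rw [e, mul_assoc (c * y ^ j), ← ((hcen c⁻¹).zpow_left i).eq, zpow_add, zpow_mul, hxy,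
      zpow_natCast]
    simp only [mul_assoc]
  have h3 : φ (x ^ 2) = (x ^ 2) ^ (j + ((n + 1 : ℕ) : ℤ) * i) := by
    rw [hxy, map_pow, h2, conj_pow, ← zpow_natCast, ← zpow_mul, mul_comm, zpow_mul, zpow_natCast,
      ← hxy, ← ((hcen c).zpow_left _).eq, mul_inv_cancel_right]
  have h4 : φ y = c * y * c⁻¹ := by
    have : (x ^ 2) ^ (1 : ℤ) = (x ^ 2) ^ (j + ((n + 1 : ℕ) : ℤ) * i) := by
      rw [← h3, map_pow, hφ, zpow_one]
    rw [h2, ← hinf _ _ this, zpow_one]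
  -- decompose `π c`
  obtain ⟨a, b, g', hg, hor⟩ := decomp _ (π c) le_rfl
  obtain ⟨s, rfl⟩ := hp a
  obtain ⟨t, rfl⟩ := hq b
  obtain ⟨d, hd⟩ : ∃ d, d = x ^ (-s) * c * y ^ (-t) := ⟨_, rfl⟩
  have hπd : π d = g' := by
    rw [hd]; simp only [map_mul, map_zpow, hπx, hπy, hg]; group
  obtain ⟨ψ, hψ⟩ : ∃ ψ : MulAut A, ψ = MulAut.conj (x ^ (-s)) * φ := ⟨_, rfl⟩
  have hψx : ψ x = x := by
    rw [hψ, MulAut.mul_apply, hφ, MulAut.conj_apply]; group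
  have hψy : ψ y = d * y * d⁻¹ := by
    rw [hψ, MulAut.mul_apply, h4, MulAut.conj_apply, hd]; group
  rcases hor with h | ⟨w, hw⟩
  · obtain ⟨r, hr⟩ := hker d (hπd.trans h)
    have hψy' : ψ y = y := by
      rw [hψy, hr, ((hcen y).zpow_left r).eq, mul_inv_cancel_right]
    have hψ1 : ψ = 1 := by
      have : (ψ : A →* A) = MonoidHom.id A := by
        apply MonoidHom.eq_of_eqOn_dense hgen
        rintro u (rfl | rfl)
        · exact hψx
        · exact hψy'
      ext u
      exact DFunLike.congr_fun this u
    refine ⟨(x ^ (-s))⁻¹, ?_⟩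
    rw [hψ] at hψ1
    rw [map_inv]
    exact inv_eq_of_mul_eq_one_right hψ1
  · exfalso
    let f : CoprodI H →* CoprodI H := CoprodI.lift (fun i => match i with
      | false => of
      | true => (MulAut.conj w.prod).toMonoidHom.comp of)
    have hf0 : ∀ h : H false, f (of h) = of h := fun h => by simp [f]
    have hf1 : ∀ h : H true, f (of h) = w.prod * of h * w.prod⁻¹ := fun h => by simp [f]
    apply not_surj w f hf0 hf1
    have hcomp : f.comp π = π.comp (ψ : A →* A) := by
      apply MonoidHom.eq_of_eqOn_dense hgen
      rintro u (rfl | rfl)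
      · simp [hψx, hπx, hf0]
      · simp [hψy, hπy, hf1, hπd, hw]
    intro u
    obtain ⟨v, rfl⟩ := hπs u
    obtain ⟨v, rfl⟩ := ψ.surjective v
    exact ⟨π v, DFunLike.congr_fun hcomp v⟩

theorem core (hgen : Subgroup.closure {x, y} = ⊤) (hxy : x ^ 2 = y ^ m) (hodd : Odd m)
    (hπs : Function.Surjective π) (hπx : π x = of p) (hπy : π y = of q)
    (hker : ∀ g, π g = 1 → ∃ i : ℤ, g = (x ^ 2) ^ i)
    (hinf : ∀ i j : ℤ, (x ^ 2) ^ i = (x ^ 2) ^ j → i = j)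
    (hp : ∀ h : H false, ∃ j : ℤ, p ^ j = h) (hp' : ∀ h : H false, h ^ 2 = 1)
    (hq : ∀ h : H true, ∃ j : ℤ, q ^ j = h) (hq' : ∀ h : H true, h ^ m = 1)
    (ε : MulAut A) (hε : ε x = x⁻¹) (φ : MulAut A) :
    φ ∈ (MulAut.conj : A →* MulAut A).range ∨ ε⁻¹ * φ ∈ (MulAut.conj : A →* MulAut A).range := by
  have key : ∀ (φ : MulAut A) (c : A), φ x = c * x * c⁻¹ →
      φ ∈ (MulAut.conj : A →* MulAut A).range := by
    intro φ c hc
    have := fix_x hgen hxy hodd hπs hπx hπy hker hinf hp hp' hq (MulAut.conj c⁻¹ * φ) (by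
      rw [MulAut.mul_apply, hc, MulAut.conj_apply]; group)
    exact (Subgroup.mul_mem_cancel_left _ (MonoidHom.mem_range.mpr ⟨c⁻¹, rfl⟩)).mp this
  obtain ⟨c, hc | hc⟩ := phi_x hgen hxy hodd hπs hπx hker hinf hp hq' φ
  · exact Or.inl (key φ c hc)
  · right
    apply key _ (ε⁻¹ c)
    have : ε⁻¹ x⁻¹ = x := by rw [← hε]; simp
    rw [MulAut.mul_apply, hc, map_mul, map_mul, this, map_inv]

end Core

theorem altWord_odd (k : ℕ) (a b : FreeGroup (Fin 2)) :
    altWord (2 * k + 1) a b = (a * b) ^ k * a := by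
  induction k with
  | zero => simp [altWord]
  | succ k ih =>
    have : altWord (2 * (k + 1) + 1) a b = a * (b * altWord (2 * k + 1) a b) := rfl
    rw [this, ih, pow_succ']; simp only [mul_assoc]

/-- Homomorphisms out of the Artin group. -/
theorem exists_hom {G : Type} [Group G] (k : ℕ) (a b : G)
    (h : (a * b) ^ k * a = (b * a) ^ k * b) :
    ∃ f : PresentedGroup (dihedralArtinRel (2 * k + 1)) →* G,
      f (PresentedGroup.of 0) = a ∧ f (PresentedGroup.of 1) = b := by
  have hr : ∀ r ∈ dihedralArtinRel (2 * k + 1), FreeGroup.lift ![a, b] r = 1 := by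
    rintro r rfl
    rw [altWord_odd, altWord_odd]
    simp [h]
  exact ⟨PresentedGroup.toGroup hr, by simp, by simp⟩

theorem rel (k : ℕ) : ((PresentedGroup.of 0 : PresentedGroup (dihedralArtinRel (2 * k + 1))) *
      PresentedGroup.of 1) ^ k * PresentedGroup.of 0 =
    (PresentedGroup.of 1 * PresentedGroup.of 0) ^ k * PresentedGroup.of 1 := by
  have := PresentedGroup.mk_eq_mk_of_mul_inv_mem (rels := dihedralArtinRel (2 * k + 1))
    (x := altWord (2 * k + 1) (FreeGroup.of 0) (FreeGroup.of 1))
    (y := altWord (2 * k + 1) (FreeGroup.of 1) (FreeGroup.of 0)) rfl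
  rw [altWord_odd, altWord_odd] at this
  simp only [map_mul, map_pow] at this
  exact this

theorem swap_pow {G : Type} [Group G] (a b : G) (k : ℕ) : a * (b * a) ^ k = (a * b) ^ k * a := by
  induction k with
  | zero => simp
  | succ k ih => rw [pow_succ, ← mul_assoc, ih, pow_succ]; simp only [mul_assoc]

/-- The factors of the central quotient. -/
abbrev Fac (m : ℕ) (b : Bool) : Type := Multiplicative (ZMod (cond b m 2))

theorem fac_gen (n : ℕ) (h : Multiplicative (ZMod n)) :
    ∃ j : ℤ, (Multiplicative.ofAdd (1 : ZMod n)) ^ j = h := by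
  obtain ⟨j, hj⟩ := ZMod.intCast_surjective (Multiplicative.toAdd h)
  refine ⟨j, ?_⟩
  rw [← ofAdd_zsmul]
  simp [hj]

theorem fac_pow (n : ℕ) (h : Multiplicative (ZMod n)) : h ^ n = 1 := by
  apply Multiplicative.toAdd.injective
  simp

theorem fac_hom {G : Type} [Group G] (n : ℕ) (g : G) (hg : g ^ n = 1) :
    ∃ f : Multiplicative (ZMod n) →* G, f (Multiplicative.ofAdd 1) = g := by
  have h : (zmultiplesHom (Additive G) (Additive.ofMul g)) (n : ℤ) = 0 := by
    simp [← ofMul_pow, hg]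
  refine ⟨AddMonoidHom.toMultiplicativeLeft (ZMod.lift n ⟨_, h⟩), ?_⟩
  have := ZMod.lift_coe n ⟨_, h⟩ 1
  simp at this
  simp [this]

end ArtinOut

open ArtinOut Monoid in
/-- for the rank-2 Artin group `A` with odd label `m ≥ 3`, `Out(A)` is cyclic
of order 2, generated by the class of the automorphism `ε : α ↦ α⁻¹, β ↦ β⁻¹`:
there is such an automorphism `ε`, it is not inner, and every automorphism lies in the
inner class or the class of `ε`. -/
theorem stmt6 (m : ℕ) (hm : 3 ≤ m) (hodd : Odd m) :
    ∃ ε : MulAut (PresentedGroup (dihedralArtinRel m)),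
      ε (PresentedGroup.of 0) = (PresentedGroup.of 0)⁻¹ ∧
      ε (PresentedGroup.of 1) = (PresentedGroup.of 1)⁻¹ ∧
      ε ∉ (MulAut.conj : PresentedGroup (dihedralArtinRel m) →*
            MulAut (PresentedGroup (dihedralArtinRel m))).range ∧
      ∀ φ : MulAut (PresentedGroup (dihedralArtinRel m)),
        φ ∈ (MulAut.conj : PresentedGroup (dihedralArtinRel m) →*
              MulAut (PresentedGroup (dihedralArtinRel m))).range ∨
        ε⁻¹ * φ ∈ (MulAut.conj : PresentedGroup (dihedralArtinRel m) →*
              MulAut (PresentedGroup (dihedralArtinRel m))).range := by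
  obtain ⟨k, rfl⟩ := hodd
  obtain ⟨α, hα⟩ : ∃ α : PresentedGroup (dihedralArtinRel (2 * k + 1)),
    α = PresentedGroup.of 0 := ⟨_, rfl⟩
  obtain ⟨β, hβ⟩ : ∃ β : PresentedGroup (dihedralArtinRel (2 * k + 1)),
    β = PresentedGroup.of 1 := ⟨_, rfl⟩
  have hr : (α * β) ^ k * α = (β * α) ^ k * β := by rw [hα, hβ]; exact rel k
  have hom : ∀ {G : Type} [Group G] (a b : G), (a * b) ^ k * a = (b * a) ^ k * b →
      ∃ f : PresentedGroup (dihedralArtinRel (2 * k + 1)) →* G, f α = a ∧ f β = b := by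
    intro G _ a b h
    rw [hα, hβ]
    exact exists_hom k a b h
  have hext : ∀ {G : Type} [Group G] (f g : PresentedGroup (dihedralArtinRel (2 * k + 1)) →* G),
      f α = g α → f β = g β → f = g := by
    intro G _ f g h0 h1
    apply PresentedGroup.ext
    intro i
    fin_cases i
    · rw [hα] at h0; exact h0
    · rw [hβ] at h1; exact h1
  rw [← hα, ← hβ]
  -- the automorphism `ε`
  obtain ⟨e, heα, heβ⟩ := hom α⁻¹ β⁻¹ (by
    apply inv_injective
    simpa [← inv_pow, swap_pow] using hr)
  have hee : e.comp e = MonoidHom.id _ := by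
    apply hext <;> simp [heα, heβ]
  let ε : MulAut (PresentedGroup (dihedralArtinRel (2 * k + 1))) := MonoidHom.toMulEquiv e e hee hee
  have hεα : ε α = α⁻¹ := heα
  have hεβ : ε β = β⁻¹ := heβ
  -- the degree homomorphism
  obtain ⟨deg, hdα, hdβ⟩ := hom (Multiplicative.ofAdd (1 : ℤ)) (Multiplicative.ofAdd (1 : ℤ)) rfl
  refine ⟨ε, hεα, hεβ, ?_, ?_⟩
  · rintro ⟨c, hc⟩
    have h1 : c * α * c⁻¹ = α⁻¹ := by rw [← hεα, ← hc, MulAut.conj_apply]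
    have h2 := congrArg deg h1
    rw [map_mul, map_mul, map_inv, map_inv, hdα, mul_inv_cancel_comm] at h2
    have h3 := congrArg Multiplicative.toAdd h2
    simp at h3
  · obtain ⟨y, hy⟩ : ∃ y, y = α * β := ⟨_, rfl⟩
    obtain ⟨x, hx⟩ : ∃ x, x = y ^ k * α := ⟨_, rfl⟩
    have hxy : x ^ 2 = y ^ (2 * k + 1) := by
      have : x = (β * α) ^ k * β := by rw [hx, hy, hr]
      rw [pow_two]
      nth_rw 2 [this]
      rw [hx, mul_assoc, ← mul_assoc α, swap_pow, ← hy, mul_assoc, ← hy, ← pow_succ,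
        ← pow_add]
      congr 1; omega
    have hαx : α = (y ^ k)⁻¹ * x := by rw [hx]; group
    have hβx : β = x⁻¹ * y ^ (k + 1) := by rw [hx, pow_succ, mul_inv_rev, mul_assoc, inv_mul_cancel_left, hy, inv_mul_cancel_left]
    have hgen : Subgroup.closure {x, y} = ⊤ := by
      rw [eq_top_iff, ← PresentedGroup.closure_range_of, Subgroup.closure_le]
      have hx' : x ∈ Subgroup.closure {x, y} := Subgroup.subset_closure (by simp)
      have hy' : y ∈ Subgroup.closure {x, y} := Subgroup.subset_closure (by simp)
      rintro _ ⟨i, rfl⟩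
      fin_cases i
      · change PresentedGroup.of 0 ∈ Subgroup.closure {x, y}
        rw [← hα, hαx]
        exact mul_mem (inv_mem (pow_mem hy' _)) hx'
      · change PresentedGroup.of 1 ∈ Subgroup.closure {x, y}
        rw [← hβ, hβx]
        exact mul_mem (inv_mem hx') (pow_mem hy' _)
    obtain ⟨p, hp⟩ : ∃ p : Fac (2 * k + 1) false, p = Multiplicative.ofAdd (1 : ZMod 2) := ⟨_, rfl⟩
    obtain ⟨q, hq⟩ : ∃ q : Fac (2 * k + 1) true,
      q = Multiplicative.ofAdd (1 : ZMod (2 * k + 1)) := ⟨_, rfl⟩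
    have hp2 : p ^ 2 = 1 := fac_pow 2 p
    have hqm : q ^ (2 * k + 1) = 1 := fac_pow (2 * k + 1) q
    have hgx : ∀ h : Fac (2 * k + 1) false, ∃ j : ℤ, p ^ j = h := by
      rw [hp]; exact fac_gen 2
    have hgy : ∀ h : Fac (2 * k + 1) true, ∃ j : ℤ, q ^ j = h := by
      rw [hq]; exact fac_gen (2 * k + 1)
    have : ∀ i, Nontrivial (Fac (2 * k + 1) i) := by
      intro i
      cases i with
      | false => exact inferInstanceAs (Nontrivial (Multiplicative (ZMod 2)))
      | true =>
        have : Fact (1 < 2 * k + 1) := ⟨by omega⟩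
        exact inferInstanceAs (Nontrivial (Multiplicative (ZMod (2 * k + 1))))
    obtain ⟨P, hP⟩ : ∃ P : CoprodI (Fac (2 * k + 1)), P = CoprodI.of p := ⟨_, rfl⟩
    obtain ⟨Q, hQ⟩ : ∃ Q : CoprodI (Fac (2 * k + 1)), Q = CoprodI.of q := ⟨_, rfl⟩
    have hPQ : P ^ 2 = Q ^ (2 * k + 1) := by
      rw [hP, hQ, ← map_pow, ← map_pow, hp2, hqm, map_one, map_one]
    obtain ⟨π, hπα, hπβ⟩ := hom ((Q ^ k)⁻¹ * P) (P⁻¹ * Q ^ (k + 1)) (by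
      have e1 : (Q ^ k)⁻¹ * P * (P⁻¹ * Q ^ (k + 1)) = Q := by rw [pow_succ]; group
      rw [← swap_pow (P⁻¹ * Q ^ (k + 1)), e1]
      have e2 : P⁻¹ * Q ^ (k + 1) * Q ^ k = P⁻¹ * P ^ 2 := by
        rw [hPQ, mul_assoc, ← pow_add]; congr 2; omega
      rw [e2]; group)
    have hπy : π y = Q := by rw [hy, map_mul, hπα, hπβ, pow_succ]; group
    have hπx : π x = P := by rw [hx, map_mul, map_pow, hπy, hπα]; group
    have hπs : Function.Surjective π := by
      rw [← MonoidHom.range_eq_top, eq_top_iff]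
      have : (CoprodI.lift (fun i => (CoprodI.of : Fac (2 * k + 1) i →* _))).range ≤ π.range := by
        apply CoprodI.lift_range_le
        intro i
        rintro _ ⟨h, rfl⟩
        cases i with
        | false =>
          obtain ⟨j, rfl⟩ := hgx h
          exact ⟨x ^ j, by rw [map_zpow, map_zpow, hπx, hP]⟩
        | true =>
          obtain ⟨j, rfl⟩ := hgy h
          exact ⟨y ^ j, by rw [map_zpow, map_zpow, hπy, hQ]⟩
      rw [CoprodI.lift_of'] at this
      intro u _
      exact this ⟨u, rfl⟩
    have hcen := central hgen hxy
    have hker : ∀ g, π g = 1 → ∃ i : ℤ, g = (x ^ 2) ^ i := by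
      intro g hg
      let Z : Subgroup (PresentedGroup (dihedralArtinRel (2 * k + 1))) := Subgroup.zpowers (x ^ 2)
      have : Z.Normal := by
        constructor
        rintro _ ⟨i, rfl⟩ c
        refine ⟨i, ?_⟩
        change (x ^ 2) ^ i = c * (x ^ 2) ^ i * c⁻¹
        rw [← ((hcen c).zpow_left i).eq, mul_inv_cancel_right]
      have hz : (QuotientGroup.mk' Z) (x ^ 2) = 1 :=
        (QuotientGroup.eq_one_iff _).mpr (Subgroup.mem_zpowers _)
      obtain ⟨f0, hf0⟩ := fac_hom 2 (QuotientGroup.mk' Z x) (by rw [← map_pow, hz])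
      obtain ⟨f1, hf1⟩ := fac_hom (2 * k + 1) (QuotientGroup.mk' Z y) (by
        rw [← map_pow, ← hxy, hz])
      let F : CoprodI (Fac (2 * k + 1)) →* _ ⧸ Z := CoprodI.lift (fun i => match i with
        | false => f0
        | true => f1)
      have hFP : F P = QuotientGroup.mk' Z x := by
        rw [hP, ← hf0, hp]; exact CoprodI.lift_of _ _
      have hFQ : F Q = QuotientGroup.mk' Z y := by
        rw [hQ, ← hf1, hq]; exact CoprodI.lift_of _ _
      have hF : F.comp π = QuotientGroup.mk' Z := by
        apply MonoidHom.eq_of_eqOn_dense hgen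
        rintro u (rfl | rfl)
        · rw [MonoidHom.comp_apply, hπx, hFP]
        · rw [MonoidHom.comp_apply, hπy, hFQ]
      have h1 : QuotientGroup.mk' Z g = 1 := by
        rw [← hF, MonoidHom.comp_apply, hg, map_one]
      obtain ⟨i, hi⟩ := (QuotientGroup.eq_one_iff g).mp h1
      exact ⟨i, hi.symm⟩
    have hinf : ∀ i j : ℤ, (x ^ 2) ^ i = (x ^ 2) ^ j → i = j := by
      intro i j h
      have h2 := congrArg (fun u => Multiplicative.toAdd (deg u)) h
      simp only [hxy, hy, map_zpow, map_pow, map_mul, hdα, hdβ, toAdd_zpow, toAdd_pow, toAdd_mul,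
        toAdd_ofAdd] at h2
      simp only [smul_eq_mul, nsmul_eq_mul] at h2
      refine mul_right_cancel₀ ?_ h2
      positivity
    have hεx : ε x = x⁻¹ := by
      rw [hx, hy, map_mul, map_pow, map_mul, hεα, hεβ, mul_inv_rev, ← swap_pow, ← inv_pow,
        mul_inv_rev, swap_pow]
    intro φ
    exact core hgen hxy ⟨k, rfl⟩ hπs (hπx.trans hP) (hπy.trans hQ) hker hinf hgx (fac_pow 2) hgy
      (fac_pow (2 * k + 1)) ε hεx φ
end

section
/- Let A be the Artin group of rank 2 with presentation ⟨α, β | w(α,β:m) = w(β,α:m)⟩ where m ≥ 4 is even. Then Out(A) is infinite and isomorphic to (ℤ ⋊ C₂) × C₂, where C₂ acts on ℤ by inversion. -/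
/-- `Red s t k p q l x`: `x` is a reduced word `s^p t^n ⋯ s^q` with `l` letters `s^±1`. -/
inductive Red {A : Type*} [Group A] (s t : A) (k : ℕ) : ℤˣ → ℤˣ → ℕ → A → Prop
  | single (p : ℤˣ) : Red s t k p p 1 (s ^ (p : ℤ))
  | cons (p : ℤˣ) (n : ℤ) (p' q : ℤˣ) (l : ℕ) (x : A) (h : Red s t k p' q l x)
      (hc : p = p' ∨ ¬ (k : ℤ) ∣ n) : Red s t k p q (l + 1) (s ^ (p : ℤ) * t ^ n * x)

namespace Red

variable {A : Type*} [Group A] {s t : A} {k : ℕ}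

theorem append {p q l x p' q' l' y} (h : Red s t k p q l x) (h' : Red s t k p' q' l' y)
    (n : ℤ) (hc : q = p' ∨ ¬ (k : ℤ) ∣ n) : Red s t k p q' (l + l') (x * t ^ n * y) := by
  induction h with
  | single p => rw [add_comm]; exact Red.cons _ _ _ _ _ _ h' hc
  | cons p m p1 q l x h1 hc1 ih =>
    have := Red.cons p m p1 _ _ _ (ih hc) hc1
    convert this using 1
    · omega
    · simp only [mul_assoc]

theorem inv {p q l x} (h : Red s t k p q l x) : Red s t k (-q) (-p) l x⁻¹ := by
  induction h with
  | single p =>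
    have := Red.single (s := s) (t := t) (k := k) (-p)
    simpa using this
  | cons p m p1 q l x h1 hc1 ih =>
    have := ih.append (Red.single (s := s) (t := t) (k := k) (-p)) (-m)
      (by rcases hc1 with h | h
          · left; rw [h]
          · right; rwa [dvd_neg])
    convert this using 1
    simp [mul_assoc]

theorem pos {p q l x} (h : Red s t k p q l x) : 1 ≤ l ∧ (l = 1 → p = q ∧ x = s ^ (p : ℤ)) := by
  cases h with
  | single p => simp
  | cons p n p' q l x h hc =>
    have : 1 ≤ l := by
      cases h <;> omega
    exact ⟨by omega, fun h => by omega⟩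

theorem snoc {p q l x} (h : Red s t k p q l x) :
    (p = q ∧ l = 1 ∧ x = s ^ (p : ℤ)) ∨ ∃ y n q' l', l = l' + 1 ∧ Red s t k p q' l' y ∧
      (q' = q ∨ ¬ (k : ℤ) ∣ n) ∧ x = y * t ^ n * s ^ (q : ℤ) := by
  induction h with
  | single p => simp
  | cons p m p1 q l x h1 hc1 ih =>
    right
    rcases ih with ⟨rfl, rfl, rfl⟩ | ⟨y, n, q', l', rfl, hy, hc, rfl⟩
    · exact ⟨s ^ (p : ℤ), m, p, 1, by omega, Red.single p, hc1, rfl⟩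
    · exact ⟨s ^ (p : ℤ) * t ^ m * y, n, q', l' + 1, rfl, Red.cons _ _ _ _ _ _ hy hc1, hc,
        by simp only [mul_assoc]⟩

theorem pow_aux {p q l y} (h : Red s t k p q l y) (r : ℤ) (hc : q = p ∨ ¬ (k : ℤ) ∣ r) (N : ℕ) :
    ∃ l', Red s t k p q l' ((y * t ^ r) ^ N * y) := by
  induction N with
  | zero => exact ⟨l, by simpa using h⟩
  | succ N ih =>
    obtain ⟨l', hl'⟩ := ih
    refine ⟨l + l', ?_⟩
    have := h.append hl' r hc
    rw [pow_succ', mul_assoc (y * t ^ r)]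
    exact this

end Red

theorem unit_ne {p q : ℤˣ} (h : ¬ p = q) : q = -p := by
  rcases Int.units_eq_one_or p with rfl | rfl <;> rcases Int.units_eq_one_or q with rfl | rfl <;>
    simp_all

section cen

variable {A : Type*} [Group A] {s t : A} {k : ℕ}

/-- Powers of `t^k` are central. -/
def Cen (t : A) (k : ℕ) : Prop := ∀ n : ℤ, (k : ℤ) ∣ n → ∀ g : A, t ^ n * g = g * t ^ n

theorem exists_red (hcen : Cen t k) (hgen : Subgroup.closure {s, t} = ⊤) (g : A) :
    (∃ n : ℤ, g = t ^ n) ∨ ∃ i j p q l x, Red s t k p q l x ∧ g = t ^ (i : ℤ) * x * t ^ (j : ℤ) := by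
  have hs : ∀ (p : ℤˣ) (g : A), ((∃ n : ℤ, g = t ^ n) ∨ ∃ i j p q l x, Red s t k p q l x ∧
      g = t ^ (i : ℤ) * x * t ^ (j : ℤ)) → ((∃ n : ℤ, s ^ (p : ℤ) * g = t ^ n) ∨
      ∃ i j p' q l x, Red s t k p' q l x ∧
      s ^ (p : ℤ) * g = t ^ (i : ℤ) * x * t ^ (j : ℤ)) := by
    rintro p g (⟨n, rfl⟩ | ⟨i, j, p', q, l, x, hx, rfl⟩)
    · exact Or.inr ⟨0, n, p, p, 1, _, Red.single p, by simp⟩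
    · by_cases hc : p = p' ∨ ¬ (k : ℤ) ∣ i
      · exact Or.inr ⟨0, j, p, q, _, _, Red.cons p i _ _ _ _ hx hc, by simp [mul_assoc]⟩
      · push Not at hc
        obtain ⟨h1, h2⟩ := hc
        obtain rfl := unit_ne h1
        cases hx with
        | single =>
          left
          refine ⟨i + j, ?_⟩
          rw [← mul_assoc, ← mul_assoc, ← hcen i h2, zpow_add]
          simp
        | cons _ n p' _ l x h hc =>
          right
          refine ⟨i + n, j, _, _, _, _, h, ?_⟩
          rw [← mul_assoc, ← mul_assoc, ← hcen i h2, zpow_add]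
          simp [mul_assoc]
  have ht : ∀ (m : ℤ) (g : A), ((∃ n : ℤ, g = t ^ n) ∨ ∃ i j p q l x, Red s t k p q l x ∧
      g = t ^ (i : ℤ) * x * t ^ (j : ℤ)) → ((∃ n : ℤ, t ^ m * g = t ^ n) ∨
      ∃ i j p' q l x, Red s t k p' q l x ∧
      t ^ m * g = t ^ (i : ℤ) * x * t ^ (j : ℤ)) := by
    rintro m g (⟨n, rfl⟩ | ⟨i, j, p', q, l, x, hx, rfl⟩)
    · exact Or.inl ⟨m + n, by rw [zpow_add]⟩
    · exact Or.inr ⟨m + i, j, _, _, _, _, hx, by simp only [zpow_add, mul_assoc]⟩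
  have hg : g ∈ Subgroup.closure {s, t} := by rw [hgen]; trivial
  induction hg using Subgroup.closure_induction_left with
  | one => exact Or.inl ⟨0, by simp⟩
  | mul_left x hx y hy ih =>
    rcases hx with rfl | rfl
    · simpa using hs 1 y ih
    · simpa using ht 1 y ih
  | inv_mul_cancel x hx y hy ih =>
    rcases hx with rfl | rfl
    · simpa using hs (-1) y ih
    · simpa using ht (-1) y ih

theorem red_pow (hcen : Cen t k) (l : ℕ) : ∀ p q (x : A), Red s t k p q l x →
    (∃ (h : A) (n : ℤ), x = h * t ^ n * h⁻¹) ∨ ∀ N : ℕ, ∃ l', Red s t k p q l' (x ^ (N + 1)) := by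
  induction l using Nat.strong_induction_on with
  | _ l IH =>
  intro p q x hx
  by_cases hpq : p = q
  · right
    intro N
    obtain ⟨l', h⟩ := hx.pow_aux 0 (Or.inl hpq.symm) N
    refine ⟨l', ?_⟩
    rw [pow_succ]
    simpa using h
  have hq := unit_ne hpq
  cases hx with
  | single => simp at hpq
  | cons _ n p2 _ l1 z hz hc1 =>
  subst hq
  rcases hz.snoc with ⟨rfl, -, rfl⟩ | ⟨y, m, q2, l2, rfl, hy, hc2, rfl⟩
  · left
    exact ⟨s ^ (p : ℤ), n, by simp⟩
  have key : ∀ N : ℕ, (s ^ (p : ℤ) * t ^ n * (y * t ^ m * s ^ ((-p : ℤˣ) : ℤ))) ^ (N + 1) =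
      s ^ (p : ℤ) * t ^ n * ((y * t ^ (m + n)) ^ N * y) * t ^ m * s ^ ((-p : ℤˣ) : ℤ) := by
    intro N
    induction N with
    | zero => simp [mul_assoc]
    | succ N ih =>
      rw [pow_succ, ih, pow_succ]
      simp only [mul_assoc, zpow_add, Units.val_neg, zpow_neg, inv_mul_cancel_left]
  by_cases hc : q2 = p2 ∨ ¬ (k : ℤ) ∣ m + n
  · right
    intro N
    obtain ⟨l', h⟩ := hy.pow_aux (m + n) hc N
    refine ⟨l' + 1 + 1, ?_⟩
    rw [key]
    have := Red.cons p n _ _ _ _ (h.append (Red.single (-p)) m hc2) hc1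
    simpa only [mul_assoc] using this
  · push Not at hc
    obtain ⟨-, hd⟩ := hc
    rcases IH l2 (by omega) _ _ _ hy with ⟨h, r, rfl⟩ | h
    · left
      refine ⟨s ^ (p : ℤ) * t ^ n * h, r + (m + n), ?_⟩
      have h1 : t ^ m = t ^ (m + n) * t ^ (-n) := by rw [← zpow_add]; congr 1; ring
      rw [h1, zpow_add t r, mul_inv_rev, mul_inv_rev]
      have h2 := hcen _ hd h⁻¹
      simp only [mul_assoc] at h2 ⊢
      rw [← mul_assoc h⁻¹ (t ^ (m + n)), ← h2]
      simp [mul_assoc]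
    · right
      intro N
      obtain ⟨l', h⟩ := h N
      have h3 : (y * t ^ (m + n)) ^ N * y = y ^ (N + 1) * t ^ ((m + n) * N) := by
        have hcm : Commute y (t ^ (m + n)) := (hcen _ hd y).symm
        rw [hcm.mul_pow, pow_succ, mul_assoc, mul_assoc, zpow_mul, zpow_natCast]
        rw [(hcm.pow_right N).eq]
      refine ⟨l' + 1 + 1, ?_⟩
      rw [key, h3]
      have := Red.cons p n _ _ _ _ (h.append (Red.single (-p)) ((m + n) * N + m) (by
        rcases hc2 with h | h
        · exact Or.inl h
        · right
          rwa [dvd_add_right (hd.mul_right _)])) hc1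
      simpa only [mul_assoc, zpow_add] using this

end cen

/-- The abstract properties of the group that we use. -/
structure BSData (A : Type*) [Group A] (k : ℕ) where
  s : A
  t : A
  two_le : 2 ≤ k
  gen : Subgroup.closure {s, t} = ⊤
  cen : Cen t k
  len : A → ℕ
  len_red : ∀ p q l x, Red s t k p q l x → ∀ i j : ℤ, len (t ^ i * x * t ^ j) = l
  len_t : ∀ n : ℤ, len (t ^ n) = 0
  S : A → ℤ
  T : A → ℤ
  S_mul : ∀ g h, S (g * h) = S g + S h
  T_mul : ∀ g h, T (g * h) = T g + T h
  S_s : S s = 1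
  S_t : S t = 0
  T_s : T s = 0
  T_t : T t = 1
  lift : ∀ s' t' : A, Commute (t' ^ k) s' → ∃ φ : A →* A, φ s = s' ∧ φ t = t'

theorem add_hom_props {A : Type*} [Group A] (S : A → ℤ) (h : ∀ g h, S (g * h) = S g + S h) :
    S 1 = 0 ∧ (∀ g, S g⁻¹ = - S g) ∧ (∀ g (n : ℤ), S (g ^ n) = n * S g) := by
  let f : A →* Multiplicative ℤ := MonoidHom.mk' (fun g => Multiplicative.ofAdd (S g))
    (fun a b => by rw [h]; rfl)
  have hf : ∀ g, S g = (f g).toAdd := fun g => rfl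
  refine ⟨?_, ?_, ?_⟩
  · rw [hf, map_one]; rfl
  · intro g; rw [hf, map_inv]; rfl
  · intro g n; rw [hf, map_zpow, hf]; simp

namespace BSData

variable {A : Type*} [Group A] {k : ℕ} (D : BSData A k)

theorem S_one : D.S 1 = 0 := (add_hom_props D.S D.S_mul).1
theorem S_inv (g) : D.S g⁻¹ = - D.S g := (add_hom_props D.S D.S_mul).2.1 g
theorem S_zpow (g) (n : ℤ) : D.S (g ^ n) = n * D.S g := (add_hom_props D.S D.S_mul).2.2 g n
theorem T_one : D.T 1 = 0 := (add_hom_props D.T D.T_mul).1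
theorem T_inv (g) : D.T g⁻¹ = - D.T g := (add_hom_props D.T D.T_mul).2.1 g
theorem T_zpow (g) (n : ℤ) : D.T (g ^ n) = n * D.T g := (add_hom_props D.T D.T_mul).2.2 g n

theorem not_dvd_one (D : BSData A k) : ¬ (k : ℤ) ∣ 1 := by
  intro h
  have := Int.le_of_dvd one_pos h
  have := D.two_le
  omega

theorem red_ne {p q l x} (h : Red D.s D.t k p q l x) (n : ℤ) : x ≠ D.t ^ n := by
  rintro rfl
  have h1 := D.len_red _ _ _ _ h 0 0
  have h2 := h.pos.1
  simp [D.len_t] at h1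
  omega

theorem red_not_central {p q l x} (h : Red D.s D.t k p q l x) (r : ℤ) :
    ¬ ∀ g, Commute (x * D.t ^ r) g := by
  intro hc
  have h1 := h.append h.inv 1 (Or.inr D.not_dvd_one)
  apply D.red_ne h1 1
  have h2 := (hc D.t).eq
  have h3 : x * D.t ^ (1 : ℤ) * x⁻¹ = (x * D.t ^ r) * D.t * (x * D.t ^ r)⁻¹ := by
    rw [mul_assoc x (D.t ^ r) D.t, (Commute.zpow_left (Commute.refl D.t) r).eq]
    simp [mul_assoc]
  rw [h3, h2]
  simp [mul_assoc]

theorem torsion (g : A) (hg : ∀ h, Commute (g ^ k) h) : ∃ (h : A) (n : ℤ), g = h * D.t ^ n * h⁻¹ := by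
  obtain ⟨N, hN⟩ : ∃ N, k = N + 1 := ⟨k - 1, by have := D.two_le; omega⟩
  rcases exists_red D.cen D.gen g with ⟨n, rfl⟩ | ⟨i, j, p, q, l, x, hx, rfl⟩
  · exact ⟨1, n, by simp⟩
  -- reduce to `x * t ^ r`
  have hconj : D.t ^ i * x * D.t ^ j = D.t ^ i * (x * D.t ^ (j + i)) * (D.t ^ i)⁻¹ := by
    simp [zpow_add, mul_assoc]
  have hcen' : ∀ h, Commute ((x * D.t ^ (j + i)) ^ k) h := by
    intro h
    have h1 := hg (D.t ^ i * h * (D.t ^ i)⁻¹)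
    rw [hconj, conj_pow] at h1
    have h2 := h1.eq
    simp only [mul_assoc, inv_mul_cancel_left, mul_left_cancel_iff] at h2
    simp only [← mul_assoc, mul_right_cancel_iff] at h2
    exact h2
  rw [hconj]
  suffices H : ∃ (h : A) (n : ℤ), x * D.t ^ (j + i) = h * D.t ^ n * h⁻¹ by
    obtain ⟨h, n, e⟩ := H
    exact ⟨D.t ^ i * h, n, by rw [e]; simp [mul_assoc]⟩
  generalize j + i = r at hcen' ⊢
  by_cases hc : q = p ∨ ¬ (k : ℤ) ∣ r
  · exfalso
    obtain ⟨l', h⟩ := hx.pow_aux r hc N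
    apply D.red_not_central h r
    have e : (x * D.t ^ r) ^ N * x * D.t ^ r = (x * D.t ^ r) ^ k := by
      rw [mul_assoc, ← pow_succ]
      exact congrArg _ hN.symm
    rw [e]
    exact hcen'
  · push Not at hc
    obtain ⟨-, hd⟩ := hc
    rcases red_pow D.cen l p q x hx with ⟨h, n, rfl⟩ | h
    · refine ⟨h, n + r, ?_⟩
      rw [mul_assoc _ h⁻¹, ← D.cen r hd, zpow_add]
      simp only [mul_assoc]
    · exfalso
      obtain ⟨l', h⟩ := h N
      apply D.red_not_central h (r * k)
      have hcm : Commute x (D.t ^ r) := (D.cen _ hd x).symm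
      rw [hcm.mul_pow, ← zpow_natCast (D.t ^ r), ← zpow_mul] at hcen'
      have e : x ^ (N + 1) = x ^ k := congrArg _ hN.symm
      rw [e]
      exact hcen'

theorem image_t (φ : MulAut A) : ∃ (h : A) (n : ℤ), φ D.t = h * D.t ^ n * h⁻¹ := by
  apply D.torsion
  intro h
  have := D.cen k (dvd_refl _) (φ.symm h)
  have h2 := congrArg φ this
  simpa [Commute, SemiconjBy] using h2

theorem red_scale {W : A} {d : ℕ} {p : ℤˣ} (hW : Red D.s D.t k p p d W) {p' q' l y}
    (h : Red W D.t k p' q' l y) : Red D.s D.t k (p' * p) (q' * p) (l * d) y := by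
  have hs : ∀ p' : ℤˣ, Red D.s D.t k (p' * p) (p' * p) d (W ^ (p' : ℤ)) := by
    intro p'
    rcases Int.units_eq_one_or p' with rfl | rfl
    · simpa using hW
    · simpa using hW.inv
  induction h with
  | single p' => simpa using hs p'
  | cons p1 n p2 q l x h hc ih =>
    have := (hs p1).append ih n (hc.imp (fun h => by rw [h]) id)
    convert this using 1
    ring

theorem red_fold {W : A} {p : ℤˣ}
    (hW : ∀ N : ℕ, ∃ l', Red D.s D.t k p (-p) l' (W ^ (N + 1))) {p' q' l y}
    (h : Red W D.t k p' q' l y) : ∃ (c : ℤ) (l : ℕ) (z : A), Red D.s D.t k p (-p) l z ∧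
      y = D.t ^ c * z := by
  have hW' : ∀ (p' : ℤˣ) (N : ℕ), ∃ l', Red D.s D.t k p (-p) l' (W ^ ((p' : ℤ) * ((N : ℤ) + 1))) := by
    intro p' N
    obtain ⟨l', h⟩ := hW N
    refine ⟨l', ?_⟩
    rcases Int.units_eq_one_or p' with rfl | rfl
    · have e : W ^ (((1 : ℤˣ) : ℤ) * ((N : ℤ) + 1)) = W ^ (N + 1) := by
        rw [← zpow_natCast]; simp
      rw [e]; exact h
    · have e : W ^ (((-1 : ℤˣ) : ℤ) * ((N : ℤ) + 1)) = (W ^ (N + 1))⁻¹ := by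
        rw [← zpow_natCast, ← zpow_neg]; simp
      rw [e]; simpa using h.inv
  have key : ∃ (c : ℤ) (N : ℕ), (k : ℤ) ∣ c ∧ (y = D.t ^ c * W ^ ((p' : ℤ) * ((N : ℤ) + 1)) ∨
      ∃ (i : ℤ) (z : A) (l : ℕ), ¬ (k : ℤ) ∣ i ∧ Red D.s D.t k p (-p) l z ∧
        y = D.t ^ c * W ^ ((p' : ℤ) * ((N : ℤ) + 1)) * D.t ^ i * z) := by
    induction h with
    | single p' => exact ⟨0, 0, by simp, Or.inl (by simp)⟩
    | cons p1 n p2 q l x h hc ih =>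
      obtain ⟨c, N, hd, ih⟩ := ih
      by_cases hn : (k : ℤ) ∣ n
      · have e : p1 = p2 := by tauto
        subst e
        have e2 : (p1 : ℤ) * (((N + 1 : ℕ) : ℤ) + 1) = (p1 : ℤ) + (p1 : ℤ) * ((N : ℤ) + 1) := by
          push_cast; ring
        have e3 := D.cen (n + c) (dvd_add hn hd) (W ^ (p1 : ℤ))
        rw [zpow_add, ← mul_assoc] at e3
        refine ⟨n + c, N + 1, dvd_add hn hd, ?_⟩
        rw [e2, zpow_add, zpow_add, ← mul_assoc, e3]
        rcases ih with rfl | ⟨i, z, l, hi, hz, rfl⟩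
        · left; simp only [mul_assoc]
        · right
          exact ⟨i, z, l, hi, hz, by simp only [mul_assoc]⟩
      · refine ⟨0, 0, by simp, Or.inr ?_⟩
        have hi' : ¬ (k : ℤ) ∣ n + c := by rwa [dvd_add_left hd]
        obtain ⟨l1, hl1⟩ := hW' p2 N
        rcases ih with rfl | ⟨i, z, l, hi, hz, rfl⟩
        · exact ⟨n + c, _, _, hi', hl1, by simp [zpow_add, mul_assoc]⟩
        · exact ⟨n + c, _, _, hi', hl1.append hz i (Or.inr hi), by simp [zpow_add, mul_assoc]⟩
  obtain ⟨c, N, hd, H⟩ := key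
  obtain ⟨l1, hl1⟩ := hW' p' N
  rcases H with rfl | ⟨i, z, l, hi, hz, rfl⟩
  · exact ⟨c, _, _, hl1, rfl⟩
  · exact ⟨c, _, _, hl1.append hz i (Or.inr hi), by simp only [mul_assoc]⟩

theorem len_s : D.len D.s = 1 := by
  simpa using D.len_red _ _ _ _ (Red.single 1) 0 0

theorem gen_S {W : A} (hgen : Subgroup.closure {W, D.t} = ⊤) : D.S W ≠ 0 := by
  intro h0
  have : ∀ g : A, D.S g = 0 := by
    intro g
    have hg : g ∈ Subgroup.closure {W, D.t} := by rw [hgen]; trivial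
    induction hg using Subgroup.closure_induction with
    | mem x hx =>
      rcases hx with rfl | rfl
      · exact h0
      · exact D.S_t
    | one => exact D.S_one
    | mul x y _ _ hx hy => rw [D.S_mul, hx, hy]; rfl
    | inv x _ hx => rw [D.S_inv, hx]; rfl
  have h1 := this D.s
  rw [D.S_s] at h1
  omega

theorem gen_red {W : A} (hgen : Subgroup.closure {W, D.t} = ⊤) {p q l}
    (hW : Red D.s D.t k p q l W) : W = D.s ^ (p : ℤ) := by
  by_cases hpq : p = q
  · subst hpq
    rcases exists_red D.cen hgen D.s with ⟨n, h⟩ | ⟨i, j, p', q', l', x, hx, h⟩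
    · have := D.len_s
      rw [h, D.len_t] at this
      omega
    · have h1 := D.len_red _ _ _ _ (D.red_scale hW hx) i j
      rw [← h, D.len_s] at h1
      exact (hW.pos.2 (Nat.eq_one_of_mul_eq_one_left h1.symm)).2
  · exfalso
    obtain rfl := unit_ne hpq
    rcases red_pow D.cen _ _ _ _ hW with ⟨h, n, rfl⟩ | hW'
    · apply D.gen_S hgen
      rw [D.S_mul, D.S_mul, D.S_inv, D.S_zpow, D.S_t]; ring
    · rcases exists_red D.cen hgen D.s with ⟨n, h⟩ | ⟨i, j, p', q', l', x, hx, h⟩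
      · have := D.len_s
        rw [h, D.len_t] at this
        omega
      · obtain ⟨c, l, z, hz, rfl⟩ := D.red_fold hW' hx
        have h1 := D.len_red _ _ _ _ hz (i + c) j
        rw [zpow_add, mul_assoc (D.t ^ i), ← h, D.len_s] at h1
        exact hpq (hz.pos.2 h1.symm).1

theorem gen_form {W : A} (hgen : Subgroup.closure {W, D.t} = ⊤) :
    ∃ (i j : ℤ) (p : ℤˣ), W = D.t ^ i * D.s ^ (p : ℤ) * D.t ^ j := by
  rcases exists_red D.cen D.gen W with ⟨n, rfl⟩ | ⟨i, j, p, q, l, x, hx, rfl⟩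
  · exact absurd (by rw [D.S_zpow, D.S_t]; ring) (D.gen_S hgen)
  · refine ⟨i, j, p, ?_⟩
    rw [← D.gen_red (W := x) ?_ hx]
    rw [eq_top_iff, ← hgen, Subgroup.closure_le]
    have ht : D.t ∈ Subgroup.closure {x, D.t} := Subgroup.subset_closure (by simp)
    rintro y (rfl | rfl)
    · exact mul_mem (mul_mem (zpow_mem ht _) (Subgroup.subset_closure (by simp))) (zpow_mem ht _)
    · exact ht

theorem hom_ext {B : Type*} [Group B] {φ ψ : A →* B} (hs : φ D.s = ψ D.s) (ht : φ D.t = ψ D.t) :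
    φ = ψ := by
  apply MonoidHom.eq_of_eqOn_dense D.gen
  rintro x (rfl | rfl)
  · exact hs
  · exact ht

theorem S_T_ext {f : A → ℤ} (hf : ∀ g h, f (g * h) = f g + f h) (g : A) :
    f g = f D.s * D.S g + f D.t * D.T g := by
  have hp := add_hom_props f hf
  have hg : g ∈ Subgroup.closure {D.s, D.t} := by rw [D.gen]; trivial
  induction hg using Subgroup.closure_induction with
  | mem x hx =>
    rcases hx with rfl | rfl
    · rw [D.S_s, D.T_s]; ring
    · rw [D.S_t, D.T_t]; ring
  | one => rw [hp.1, D.S_one, D.T_one]; ring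
  | mul x y _ _ hx hy => rw [hf, hx, hy, D.S_mul, D.T_mul]; ring
  | inv x _ hx => rw [hp.2.1, hx, D.S_inv, D.T_inv]; ring

theorem S_image_t (φ : MulAut A) : D.S (φ D.t) = 0 := by
  obtain ⟨h, n, e⟩ := D.image_t φ
  rw [e, D.S_mul, D.S_mul, D.S_inv, D.S_zpow, D.S_t]; ring

theorem S_image (φ : MulAut A) (g : A) : D.S (φ g) = D.S (φ D.s) * D.S g := by
  have := D.S_T_ext (f := fun g => D.S (φ g)) (fun g h => by simp [D.S_mul]) g
  simpa [D.S_image_t] using this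

theorem T_image (φ : MulAut A) (g : A) :
    D.T (φ g) = D.T (φ D.s) * D.S g + D.T (φ D.t) * D.T g :=
  D.S_T_ext (f := fun g => D.T (φ g)) (fun g h => by simp [D.T_mul]) g

theorem eps_unit (φ : MulAut A) : D.S (φ D.s) = 1 ∨ D.S (φ D.s) = -1 := by
  have h := D.S_image φ (φ.symm D.s)
  rw [MulEquiv.apply_symm_apply, D.S_s] at h
  exact Int.eq_one_or_neg_one_of_mul_eq_one h.symm

theorem del_unit (φ : MulAut A) : D.T (φ D.t) = 1 ∨ D.T (φ D.t) = -1 := by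
  have h := D.T_image φ (φ.symm D.t)
  rw [MulEquiv.apply_symm_apply, D.T_t] at h
  have h2 := D.S_image_t φ⁻¹
  rw [show φ.symm D.t = φ⁻¹ D.t from rfl, h2] at h
  exact Int.eq_one_or_neg_one_of_mul_eq_one (v := D.T (φ⁻¹ D.t)) (by linarith)

/-- An automorphism acting trivially on the abelianization is inner. -/
theorem inner_of (φ : MulAut A) (h1 : D.S (φ D.s) = 1) (h2 : D.T (φ D.t) = 1)
    (h3 : D.T (φ D.s) = 0) : ∃ g, φ = MulAut.conj g := by
  obtain ⟨h, n, e⟩ := D.image_t φ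
  have hn : n = 1 := by
    rw [e, D.T_mul, D.T_mul, D.T_inv, D.T_zpow, D.T_t] at h2
    linarith
  subst hn
  let ψ : MulAut A := MulAut.conj h⁻¹ * φ
  have ht : ψ D.t = D.t := by simp [ψ, e, mul_assoc]
  have hgen : Subgroup.closure {ψ D.s, D.t} = ⊤ := by
    have := congrArg (Subgroup.map ψ.toMonoidHom) D.gen
    rw [MonoidHom.map_closure, Subgroup.map_top_of_surjective _ ψ.surjective, Set.image_pair] at this
    rw [← this]
    congr 2
    exact congrArg _ ht.symm
  obtain ⟨i, j, p, hW⟩ := D.gen_form hgen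
  have hψs : ψ D.s = h⁻¹ * φ D.s * h := by simp [ψ]
  have hS : D.S (ψ D.s) = 1 := by
    rw [hψs, D.S_mul, D.S_mul, D.S_inv, h1]; ring
  have hT : D.T (ψ D.s) = 0 := by
    rw [hψs, D.T_mul, D.T_mul, D.T_inv, h3]; ring
  rw [hW] at hS hT
  simp only [D.S_mul, D.S_zpow, D.S_s, D.S_t, D.T_mul, D.T_zpow, D.T_s, D.T_t] at hS hT
  have hp : (p : ℤ) = 1 := by linarith
  have hj : j = - i := by linarith
  rw [hp, hj] at hW
  have hψ : ψ = MulAut.conj (D.t ^ i) := by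
    have : ψ.toMonoidHom = (MulAut.conj (D.t ^ i)).toMonoidHom := by
      apply D.hom_ext
      · change ψ D.s = MulAut.conj (D.t ^ i) D.s
        rw [hW, MulAut.conj_apply]; simp
      · change ψ D.t = MulAut.conj (D.t ^ i) D.t
        rw [ht, MulAut.conj_apply, (Commute.zpow_left (Commute.refl D.t) i).eq]
        simp
    ext x
    exact DFunLike.congr_fun this x
  refine ⟨h * D.t ^ i, ?_⟩
  rw [map_mul, ← hψ]
  simp [ψ]

theorem exists_aut (ε δ j : ℤ) (hε : ε = 1 ∨ ε = -1) (hδ : δ = 1 ∨ δ = -1) :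
    ∃ φ : MulAut A, D.S (φ D.s) = ε ∧ D.T (φ D.t) = δ ∧ D.T (φ D.s) = j := by
  have hcomm : ∀ (δ : ℤ) (x : A), Commute ((D.t ^ δ) ^ k) x := by
    intro δ x
    have := D.cen (δ * k) (Dvd.intro_left _ rfl) x
    rw [zpow_mul, zpow_natCast] at this
    exact this
  have hδ2 : δ * δ = 1 := by rcases hδ with rfl | rfl <;> rfl
  obtain ⟨φ, hs, ht⟩ := D.lift (D.s ^ ε * D.t ^ j) (D.t ^ δ) (hcomm _ _)
  obtain ⟨ψ, hs', ht'⟩ : ∃ ψ : A →* A, ψ D.s = (if ε = 1 then D.s * D.t ^ (- δ * j) else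
      D.t ^ (δ * j) * D.s⁻¹) ∧ ψ D.t = D.t ^ δ := D.lift _ _ (hcomm _ _)
  have c1 : φ.comp ψ = MonoidHom.id A := by
    apply D.hom_ext
    · rcases hε with rfl | rfl
      · simp only [MonoidHom.comp_apply, hs', if_true, map_mul, map_zpow, hs, ht, ← zpow_mul]
        rw [show δ * (-δ * j) = -j by linear_combination (-j) * hδ2]
        simp
      · rw [MonoidHom.comp_apply, hs', if_neg (by decide)]
        simp only [map_mul, map_inv, map_zpow, hs, ht, ← zpow_mul]
        rw [show δ * (δ * j) = j by linear_combination j * hδ2]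
        simp
    · simp [ht', ht, ← zpow_mul, hδ2]
  have c2 : ψ.comp φ = MonoidHom.id A := by
    apply D.hom_ext
    · rcases hε with rfl | rfl
      · simp [hs, hs', ht', ← zpow_mul]
      · simp only [MonoidHom.comp_apply, hs, map_mul, map_zpow, hs', ht', ← zpow_mul]
        rw [if_neg (by decide)]
        simp [mul_assoc]
    · simp [ht', ht, ← zpow_mul, hδ2]
  refine ⟨MonoidHom.toMulEquiv φ ψ c2 c1, ?_, ?_, ?_⟩
  · change D.S (φ D.s) = ε
    rw [hs, D.S_mul, D.S_zpow, D.S_zpow, D.S_s, D.S_t]; ring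
  · change D.T (φ D.t) = δ
    rw [ht, D.T_zpow, D.T_t]; ring
  · change D.T (φ D.s) = j
    rw [hs, D.T_mul, D.T_zpow, D.T_zpow, D.T_s, D.T_t]; ring

/-- The invariant in `D_∞`. -/
def dih (e j : ℤ) : DihedralGroup 0 := if e = 1 then DihedralGroup.r j else DihedralGroup.sr j

/-- The sign invariant. -/
def sgn (e : ℤ) : Multiplicative (ZMod 2) := Multiplicative.ofAdd (if e = 1 then 0 else 1)

theorem dih_mul (e j e' j' : ℤ) (he : e = 1 ∨ e = -1) (he' : e' = 1 ∨ e' = -1) :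
    dih (e * e') (e' * j + j') = dih e j * dih e' j' := by
  rcases he with rfl | rfl <;> rcases he' with rfl | rfl <;> simp only [dih] <;> norm_num <;>
    congr 1 <;> exact neg_add_eq_sub _ _

theorem sgn_mul (e e' : ℤ) (he : e = 1 ∨ e = -1) (he' : e' = 1 ∨ e' = -1) :
    sgn (e * e') = sgn e * sgn e' := by
  rcases he with rfl | rfl <;> rcases he' with rfl | rfl <;> decide

/-- The classifying homomorphism. -/
def F : MulAut A →* DihedralGroup 0 × Multiplicative (ZMod 2) :=
  MonoidHom.mk' (fun φ => (dih (D.S (φ D.s) * D.T (φ D.t)) (D.T (φ D.s) * D.T (φ D.t)),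
    sgn (D.T (φ D.t)))) (by
    intro φ ψ
    have a1 : D.S ((φ * ψ) D.s) = D.S (φ D.s) * D.S (ψ D.s) := by
      rw [MulAut.mul_apply, D.S_image]
    have a2 : D.T ((φ * ψ) D.t) = D.T (φ D.t) * D.T (ψ D.t) := by
      rw [MulAut.mul_apply, D.T_image, D.S_image_t]; ring
    have a3 : D.T ((φ * ψ) D.s) = D.T (φ D.s) * D.S (ψ D.s) + D.T (φ D.t) * D.T (ψ D.s) := by
      rw [MulAut.mul_apply, D.T_image]
    rw [a1, a2, a3]
    have hu : ∀ φ : MulAut A, D.S (φ D.s) * D.T (φ D.t) = 1 ∨ D.S (φ D.s) * D.T (φ D.t) = -1 := by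
      intro φ
      rcases D.eps_unit φ with h | h <;> rcases D.del_unit φ with h' | h' <;> simp [h, h']
    have hsq : D.T (φ D.t) * D.T (φ D.t) = 1 := by
      rcases D.del_unit φ with h | h <;> rw [h] <;> rfl
    rw [Prod.mk_mul_mk, ← dih_mul _ _ _ _ (hu φ) (hu ψ),
      ← sgn_mul _ _ (D.del_unit φ) (D.del_unit ψ)]
    congr 2
    · ring
    · linear_combination D.T (ψ D.s) * D.T (ψ D.t) * hsq)

theorem F_apply (φ : MulAut A) : D.F φ =
    (dih (D.S (φ D.s) * D.T (φ D.t)) (D.T (φ D.s) * D.T (φ D.t)), sgn (D.T (φ D.t))) := rfl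

theorem F_surjective : Function.Surjective D.F := by
  rintro ⟨d, z⟩
  obtain ⟨δ, hδ, rfl⟩ : ∃ δ : ℤ, (δ = 1 ∨ δ = -1) ∧ sgn δ = z := by
    have : z = sgn 1 ∨ z = sgn (-1) := by revert z; decide
    rcases this with rfl | rfl
    · exact ⟨1, by simp⟩
    · exact ⟨-1, by simp⟩
  obtain ⟨e, j, he, rfl⟩ : ∃ e j : ℤ, (e = 1 ∨ e = -1) ∧ dih e j = d := by
    rcases d with j | j
    · exact ⟨1, j, by simp, by simp [dih]⟩
    · exact ⟨-1, j, by simp, by simp [dih]⟩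
  have hδ2 : δ * δ = 1 := by rcases hδ with rfl | rfl <;> rfl
  obtain ⟨φ, h1, h2, h3⟩ := D.exists_aut (e * δ) δ (j * δ)
    (by rcases he with rfl | rfl <;> rcases hδ with rfl | rfl <;> simp) hδ
  refine ⟨φ, ?_⟩
  rw [F_apply, h1, h2, h3, mul_assoc, hδ2, mul_assoc, hδ2, mul_one, mul_one]

theorem F_ker : D.F.ker = (MulAut.conj : A →* MulAut A).range := by
  ext φ
  rw [MonoidHom.mem_ker, MonoidHom.mem_range]
  constructor
  · intro h
    rw [F_apply, Prod.mk_eq_one] at h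
    obtain ⟨ha, hb⟩ := h
    have hd : D.T (φ D.t) = 1 := by
      rcases D.del_unit φ with h | h
      · exact h
      · rw [h] at hb; exact absurd hb (by decide)
    rw [hd, mul_one, mul_one, dih, DihedralGroup.one_def] at ha
    split_ifs at ha with he
    obtain ⟨g, hg⟩ := D.inner_of φ he hd (DihedralGroup.r.inj ha)
    exact ⟨g, hg.symm⟩
  · rintro ⟨g, rfl⟩
    have h1 : D.S (MulAut.conj g D.s) = 1 := by
      rw [MulAut.conj_apply, D.S_mul, D.S_mul, D.S_inv, D.S_s]; ring
    have h2 : D.T (MulAut.conj g D.t) = 1 := by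
      rw [MulAut.conj_apply, D.T_mul, D.T_mul, D.T_inv, D.T_t]; ring
    have h3 : D.T (MulAut.conj g D.s) = 0 := by
      rw [MulAut.conj_apply, D.T_mul, D.T_mul, D.T_inv, D.T_s]; ring
    rw [F_apply, h1, h2, h3]
    rfl

end BSData

section hnn

/-- The subgroup `kℤ`. -/
def kZ (k : ℕ) : Subgroup (Multiplicative ℤ) := Subgroup.zpowers (Multiplicative.ofAdd (k : ℤ))

theorem mem_kZ (k : ℕ) (n : ℤ) : Multiplicative.ofAdd n ∈ kZ k ↔ (k : ℤ) ∣ n := by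
  rw [kZ, Subgroup.mem_zpowers_iff]
  constructor
  · rintro ⟨z, h⟩
    rw [← ofAdd_zsmul] at h
    have := Multiplicative.ofAdd.injective h
    exact ⟨z, by rw [← this]; simp [mul_comm]⟩
  · rintro ⟨z, rfl⟩
    exact ⟨z, by rw [← ofAdd_zsmul]; simp [mul_comm]⟩

/-- The HNN extension. -/
abbrev HH (k : ℕ) := HNNExtension (Multiplicative ℤ) (kZ k) (kZ k) (MulEquiv.refl _)

theorem mem_toSubgroup (k : ℕ) (u : ℤˣ) (n : ℤ) :
    Multiplicative.ofAdd n ∈ HNNExtension.toSubgroup (kZ k) (kZ k) u ↔ (k : ℤ) ∣ n := by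
  rw [← mem_kZ]
  rcases Int.units_eq_one_or u with rfl | rfl <;> simp

variable {A : Type*} [Group A] {s t : A} {k : ℕ}

theorem red_word (π : A →* HH k) (hs : π s = HNNExtension.t)
    (ht : π t = HNNExtension.of (Multiplicative.ofAdd 1)) {p q l x} (h : Red s t k p q l x) (j : ℤ) :
    ∃ L : List (ℤˣ × Multiplicative ℤ), L.IsChain
      (fun a b => a.2 ∈ HNNExtension.toSubgroup (kZ k) (kZ k) a.1 → a.1 = b.1) ∧
      L.head?.map Prod.fst = some p ∧ L.length = l ∧
      (L.map (fun x => (HNNExtension.t ^ (x.1 : ℤ) * HNNExtension.of x.2 : HH k))).prod =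
        π (x * t ^ j) := by
  have htn : ∀ n : ℤ, π (t ^ n) = HNNExtension.of (Multiplicative.ofAdd n) := by
    intro n
    rw [map_zpow, ht, ← map_zpow, ← ofAdd_zsmul]; simp
  induction h with
  | single p =>
    exact ⟨[(p, Multiplicative.ofAdd j)], List.isChain_singleton _, rfl, rfl, by
      simp [htn, hs, -map_zpow, map_zpow π s]⟩
  | cons p n p' q l x h hc ih =>
    obtain ⟨L, hL, hh, hl, hp⟩ := ih
    refine ⟨(p, Multiplicative.ofAdd n) :: L, ?_, rfl, by simp [hl], ?_⟩
    · rw [List.isChain_cons]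
      refine ⟨?_, hL⟩
      intro y hy hm
      rw [mem_toSubgroup] at hm
      have : y.1 = p' := by
        rw [Option.mem_def] at hy
        rw [hy] at hh
        simpa using hh
      rw [this]
      tauto
    · rw [List.map_cons, List.prod_cons, hp]
      simp only [mul_assoc, map_mul, htn, map_zpow π s, hs]

open Classical in
/-- Length function. -/
noncomputable def hlen (π : A →* HH k) (g : A) : ℕ :=
  if h : ∃ w : HNNExtension.NormalWord.ReducedWord (Multiplicative ℤ) (kZ k) (kZ k),
    w.prod (MulEquiv.refl _) = π g then h.choose.toList.length else 0

theorem hlen_eq (π : A →* HH k) (g : A)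
    (w : HNNExtension.NormalWord.ReducedWord (Multiplicative ℤ) (kZ k) (kZ k))
    (hw : w.prod (MulEquiv.refl _) = π g) : hlen π g = w.toList.length := by
  have h : ∃ w : HNNExtension.NormalWord.ReducedWord (Multiplicative ℤ) (kZ k) (kZ k),
    w.prod (MulEquiv.refl _) = π g := ⟨w, hw⟩
  rw [hlen, dif_pos h]
  have := (HNNExtension.ReducedWord.map_fst_eq_and_of_prod_eq (MulEquiv.refl _)
    (h.choose_spec.trans hw.symm)).1
  simpa using congrArg List.length this

theorem hlen_red (π : A →* HH k) (hs : π s = HNNExtension.t)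
    (ht : π t = HNNExtension.of (Multiplicative.ofAdd 1)) (p q l x) (h : Red s t k p q l x)
    (i j : ℤ) : hlen π (t ^ i * x * t ^ j) = l := by
  obtain ⟨L, hL, -, hl, hp⟩ := red_word π hs ht h j
  rw [hlen_eq π _ ⟨Multiplicative.ofAdd i, L, hL⟩, hl]
  rw [HNNExtension.NormalWord.ReducedWord.prod, hp, mul_assoc, map_mul π (t ^ i), map_zpow π t, ht,
    ← map_zpow, ← ofAdd_zsmul]
  simp

theorem hlen_t (π : A →* HH k)
    (ht : π t = HNNExtension.of (Multiplicative.ofAdd 1)) (i : ℤ) : hlen π (t ^ i) = 0 := by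
  rw [hlen_eq π _ ⟨Multiplicative.ofAdd i, [], List.isChain_nil⟩]
  · rfl
  rw [HNNExtension.NormalWord.ReducedWord.prod, map_zpow π t, ht,
    ← map_zpow, ← ofAdd_zsmul]
  simp

end hnn

section artin

theorem altWord_even (k : ℕ) (x y : FreeGroup (Fin 2)) : altWord (k + k) x y = (x * y) ^ k := by
  induction k with
  | zero => rfl
  | succ k ih =>
    rw [show k + 1 + (k + 1) = (k + k) + 1 + 1 by ring, altWord, altWord, ih, pow_succ', mul_assoc]

variable {k : ℕ}

/-- The Artin group. -/
abbrev AA (k : ℕ) := PresentedGroup (dihedralArtinRel (k + k))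

/-- first generator -/
def gs (k : ℕ) : AA k := PresentedGroup.of 0

/-- product of the generators -/
def gt (k : ℕ) : AA k := PresentedGroup.of 0 * PresentedGroup.of 1

theorem AA_rel : (gt k) ^ k * gs k = gs k * (gt k) ^ k := by
  have h := PresentedGroup.one_of_mem (rels := dihedralArtinRel (k + k)) (Set.mem_singleton _)
  rw [altWord_even, altWord_even, map_mul, map_inv, mul_inv_eq_one, map_pow, map_pow, map_mul,
    map_mul] at h
  change (gt k) ^ k = (PresentedGroup.of 1 * gs k) ^ k at h
  have h2 : PresentedGroup.of 1 * gs k = (gs k)⁻¹ * gt k * (gs k) := by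
    simp [gs, gt]
  have h3 : ((gs k)⁻¹ * gt k * (gs k)) ^ k = (gs k)⁻¹ * gt k ^ k * (gs k) := by
    have := conj_pow (b := gt k) (a := (gs k)⁻¹) (i := k)
    rwa [inv_inv] at this
  rw [h2, h3] at h
  rw [mul_assoc, eq_inv_mul_iff_mul_eq] at h
  exact h.symm

theorem AA_lift {G : Type*} [Group G] (s' t' : G) (h : Commute (t' ^ k) s') :
    ∃ φ : AA k →* G, φ (gs k) = s' ∧ φ (gt k) = t' := by
  have hr : ∀ r ∈ dihedralArtinRel (k + k), FreeGroup.lift ![s', s'⁻¹ * t'] r = 1 := by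
    intro r hr
    rw [dihedralArtinRel, Set.mem_singleton_iff] at hr
    rw [hr, altWord_even, altWord_even, map_mul, map_inv, mul_inv_eq_one, map_pow, map_pow, map_mul,
      map_mul]
    simp only [FreeGroup.lift_apply_of, Matrix.cons_val_zero, Matrix.cons_val_one]
    have h3 : (s'⁻¹ * t' * s') ^ k = s'⁻¹ * t' ^ k * s' := by
      have := conj_pow (b := t') (a := s'⁻¹) (i := k)
      rwa [inv_inv] at this
    rw [h3, mul_assoc, h.eq]
    simp
  refine ⟨PresentedGroup.toGroup hr, ?_, ?_⟩
  · simp [gs, PresentedGroup.toGroup.of]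
  · simp [gt, PresentedGroup.toGroup.of]

theorem AA_gen : Subgroup.closure {gs k, gt k} = ⊤ := by
  rw [eq_top_iff, ← PresentedGroup.closure_range_of, Subgroup.closure_le]
  have hs : gs k ∈ Subgroup.closure {gs k, gt k} := Subgroup.subset_closure (by simp)
  have ht : gt k ∈ Subgroup.closure {gs k, gt k} := Subgroup.subset_closure (by simp)
  rintro _ ⟨i, rfl⟩
  fin_cases i
  · exact hs
  · have : (PresentedGroup.of 1 : AA k) = (gs k)⁻¹ * gt k := by simp [gs, gt]
    change (PresentedGroup.of 1 : AA k) ∈ _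
    rw [this]
    exact mul_mem (inv_mem hs) ht

theorem AA_cen : Cen (gt k) k := by
  rintro n ⟨c, rfl⟩ g
  have h : ∀ g, Commute ((gt k) ^ k) g := by
    intro g
    have hg : g ∈ Subgroup.closure {gs k, gt k} := by rw [AA_gen]; trivial
    induction hg using Subgroup.closure_induction with
    | mem x hx =>
      rcases hx with rfl | rfl
      · exact AA_rel
      · exact Commute.pow_left (Commute.refl _) _
    | one => exact Commute.one_right _
    | mul x y _ _ hx hy => exact hx.mul_right hy
    | inv x _ hx => exact hx.inv_right
  rw [zpow_mul, zpow_natCast]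
  exact ((h g).zpow_left c).eq

theorem AA_data (hk : 2 ≤ k) : Nonempty (BSData (AA k) k) := by
  obtain ⟨S, hS1, hS2⟩ := AA_lift (k := k) (Multiplicative.ofAdd (1 : ℤ)) 1 (Commute.all _ _)
  obtain ⟨T, hT1, hT2⟩ := AA_lift (k := k) 1 (Multiplicative.ofAdd (1 : ℤ)) (Commute.all _ _)
  obtain ⟨π, hs, ht⟩ := AA_lift (k := k) (HNNExtension.t : HH k)
    (HNNExtension.of (Multiplicative.ofAdd 1)) (by
      rw [← map_pow, ← ofAdd_nsmul]
      have := HNNExtension.t_mul_of (φ := MulEquiv.refl (kZ k))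
        ⟨Multiplicative.ofAdd (k : ℤ), Subgroup.mem_zpowers _⟩
      have h2 := this.symm
      simpa [Commute, SemiconjBy] using h2)
  exact ⟨{
    s := gs k
    t := gt k
    two_le := hk
    gen := AA_gen
    cen := AA_cen
    len := hlen π
    len_red := hlen_red π hs ht
    len_t := hlen_t π ht
    S := fun g => (S g).toAdd
    T := fun g => (T g).toAdd
    S_mul := fun g h => by simp
    T_mul := fun g h => by simp
    S_s := by simp [hS1]
    S_t := by simp [hS2]
    T_s := by simp [hT1]
    T_t := by simp [hT2]
    lift := fun s' t' h => AA_lift s' t' h }⟩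

end artin

/-- for the rank-2 Artin group `A` with even label `m ≥ 4`,
`Out(A) = Aut(A)/Inn(A)` is infinite and isomorphic to `(ℤ ⋊ C₂) × C₂`
(the infinite dihedral group `DihedralGroup 0` times `C₂`): there is a surjective
homomorphism `Aut(A) → (ℤ ⋊ C₂) × C₂` whose kernel is exactly the inner
automorphism group (whence `Out(A) ≅ (ℤ ⋊ C₂) × C₂`, an infinite group). -/
theorem stmt7 (m : ℕ) (hm : 4 ≤ m) (heven : Even m) :
    Infinite (DihedralGroup 0 × Multiplicative (ZMod 2)) ∧
    ∃ f : MulAut (PresentedGroup (dihedralArtinRel m)) →*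
        DihedralGroup 0 × Multiplicative (ZMod 2),
      Function.Surjective f ∧
      f.ker = (MulAut.conj : PresentedGroup (dihedralArtinRel m) →*
        MulAut (PresentedGroup (dihedralArtinRel m))).range := by
  obtain ⟨k, rfl⟩ := heven
  obtain ⟨D⟩ := AA_data (k := k) (by omega)
  refine ⟨?_, D.F, D.F_surjective, D.F_ker⟩
  have : Infinite (DihedralGroup 0) :=
    Infinite.of_injective (fun n : ℤ => (DihedralGroup.r n : DihedralGroup 0))
      (fun a b h => DihedralGroup.r.inj h)
  infer_instance
end

section
/- Let K = ⟨x₁, …, x_n | x_i² = 1⟩ with the braid action as above (α_i : x_i ↦ x_{i+1}, x_{i+1} ↦ x_{i+1} x_i x_{i+1}). If w ∈ K satisfies α_j(w) is conjugate to w in K for all j = 1, …, n-1, then w is conjugate in K to a power of δ = x₁x₂⋯x_n. -/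
/-- Relators for the free product `⋆_k C₂ = ⟨x₀, …, x_{k-1} | xᵢ² = 1⟩`. -/
def relC2s (k : ℕ) : Set (FreeGroup (Fin k)) :=
  {r | ∃ i : Fin k, r = FreeGroup.of i ^ 2}

namespace BraidC2

abbrev G (k : ℕ) := PresentedGroup (relC2s k)

variable {k : ℕ}

/-- generator -/
def X (i : Fin k) : G k := PresentedGroup.of i

lemma X_sq (i : Fin k) : X i * X i = 1 := by
  have : (PresentedGroup.mk (relC2s k)) (FreeGroup.of i ^ 2) = 1 :=
    PresentedGroup.one_of_mem ⟨i, rfl⟩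
  rw [pow_two, map_mul] at this
  exact this

lemma X_inv (i : Fin k) : (X i)⁻¹ = X i := inv_eq_of_mul_eq_one_left (X_sq i)

lemma X_sq_assoc (i : Fin k) (g : G k) : X i * (X i * g) = g := by
  rw [← mul_assoc, X_sq, one_mul]

/-- evaluation of a word -/
def ev (l : List (Fin k)) : G k := (l.map X).prod

@[simp] lemma ev_nil : ev ([] : List (Fin k)) = 1 := rfl
@[simp] lemma ev_cons (a : Fin k) (l) : ev (a :: l) = X a * ev l := by simp [ev]
@[simp] lemma ev_append (l l' : List (Fin k)) : ev (l ++ l') = ev l * ev l' := by simp [ev]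

lemma ev_reverse (l : List (Fin k)) : ev l.reverse = (ev l)⁻¹ := by
  induction l with
  | nil => simp
  | cons a l ih => simp [ih, X_inv]

abbrev Red (l : List (Fin k)) : Prop := l.IsChain (· ≠ ·)

/-- left multiplication on reduced words -/
def step (i : Fin k) : List (Fin k) → List (Fin k)
  | [] => [i]
  | a :: l => if a = i then l else i :: a :: l

lemma step_red (i : Fin k) (l : List (Fin k)) (h : Red l) : Red (step i l) := by
  cases l with
  | nil => simp [step]
  | cons a l =>
    simp only [step]
    split_ifs with hh
    · exact h.tail
    · exact List.IsChain.cons_cons (Ne.symm hh) h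

lemma step_step (i : Fin k) (l : List (Fin k)) (h : Red l) : step i (step i l) = l := by
  cases l with
  | nil => simp [step]
  | cons a l =>
    by_cases hh : a = i
    · subst hh
      cases l with
      | nil => simp [step]
      | cons b l =>
        have : a ≠ b := by
          rw [Red, List.isChain_cons_cons] at h; exact h.1
        simp [step, this.symm]
    · simp [step, hh]

lemma ev_step (i : Fin k) (l : List (Fin k)) : ev (step i l) = X i * ev l := by
  cases l with
  | nil => simp [step]
  | cons a l =>
    simp only [step]
    split_ifs with hh
    · subst hh; simp [X_sq_assoc]
    · simp

lemma step_subset (i : Fin k) (l : List (Fin k)) : ∀ a ∈ step i l, a = i ∨ a ∈ l := by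
  cases l with
  | nil => simp [step]
  | cons a l =>
    intro b hb
    simp only [step] at hb
    split_ifs at hb with hh
    · right; simp [hb]
    · simpa using hb

lemma step_length (i : Fin k) (l : List (Fin k)) : (step i l).length ≤ l.length + 1 := by
  cases l with
  | nil => simp [step]
  | cons a l =>
    simp only [step]
    split_ifs with hh
    · simp; omega
    · simp

/-- generator as a permutation of reduced words -/
def stepPerm (i : Fin k) : Equiv.Perm {l : List (Fin k) // Red l} where
  toFun l := ⟨step i l.1, step_red i l.1 l.2⟩
  invFun l := ⟨step i l.1, step_red i l.1 l.2⟩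
  left_inv l := Subtype.ext (step_step i l.1 l.2)
  right_inv l := Subtype.ext (step_step i l.1 l.2)

def act (k : ℕ) : G k →* Equiv.Perm {l : List (Fin k) // Red l} :=
  PresentedGroup.toGroup (f := stepPerm) (by
    rintro r ⟨i, rfl⟩
    ext l : 2
    simp only [pow_two,
      Equiv.Perm.coe_one, id]
    exact step_step i l.1 l.2)

lemma act_X (i : Fin k) : act k (X i) = stepPerm i := PresentedGroup.toGroup.of _

/-- normal form -/
def nf (g : G k) : List (Fin k) := (act k g ⟨[], List.IsChain.nil⟩).1

lemma nf_red (g : G k) : Red (nf g) := (act k g _).2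

lemma nf_X_mul (i : Fin k) (g : G k) : nf (X i * g) = step i (nf g) := by
  simp [nf, act_X, stepPerm]

lemma nf_ev (l : List (Fin k)) (h : Red l) : nf (ev l) = l := by
  induction l with
  | nil => simp [nf]
  | cons a l ih =>
    rw [ev_cons, nf_X_mul, ih h.tail]
    cases l with
    | nil => rfl
    | cons b l =>
      rw [Red, List.isChain_cons_cons] at h
      simp [step, h.1.symm]

lemma exists_word (g : G k) : ∃ l : List (Fin k), ev l = g := by
  have : g ∈ Subgroup.closure (Set.range (PresentedGroup.of (rels := relC2s k))) := by
    rw [PresentedGroup.closure_range_of]; trivial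
  induction this using Subgroup.closure_induction with
  | mem x hx => obtain ⟨i, rfl⟩ := hx; exact ⟨[i], by simp [X]⟩
  | one => exact ⟨[], rfl⟩
  | mul x y _ _ hx hy =>
    obtain ⟨l, rfl⟩ := hx; obtain ⟨l', rfl⟩ := hy; exact ⟨l ++ l', by simp⟩
  | inv x _ hx => obtain ⟨l, rfl⟩ := hx; exact ⟨l.reverse, ev_reverse l⟩

lemma ev_nf_ev (l : List (Fin k)) : ev (nf (ev l)) = ev l := by
  induction l with
  | nil => simp [nf]
  | cons a l ih => rw [ev_cons, nf_X_mul, ev_step, ih]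

lemma ev_nf (g : G k) : ev (nf g) = g := by
  obtain ⟨l, rfl⟩ := exists_word g; exact ev_nf_ev l

lemma nf_subset (l : List (Fin k)) : ∀ a ∈ nf (ev l), a ∈ l := by
  induction l with
  | nil => simp [nf]
  | cons b l ih =>
    intro a ha
    rw [ev_cons, nf_X_mul] at ha
    rcases step_subset _ _ a ha with h | h
    · simp [h]
    · simp [ih a h]

lemma nf_ev_length (l : List (Fin k)) : (nf (ev l)).length ≤ l.length := by
  induction l with
  | nil => simp [nf]
  | cons b l ih =>
    rw [ev_cons, nf_X_mul]
    have := step_length b (nf (ev l))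
    simp; omega

def norm (g : G k) : ℕ := (nf g).length

lemma norm_mul (g h : G k) : norm (g * h) ≤ norm g + norm h := by
  have := nf_ev_length (nf g ++ nf h)
  rw [ev_append, ev_nf, ev_nf, List.length_append] at this
  exact this

/-- cyclically reduced -/
def CR (l : List (Fin k)) : Prop := Red (l ++ l)

lemma CR_pow (l : List (Fin k)) (h : CR l) (N : ℕ) :
    Red (List.replicate N l).flatten := by
  rcases l with _ | ⟨a, l⟩
  · simp
  suffices H : Red ((List.replicate N (a :: l)).flatten ++ [a]) from
    (List.isChain_append.1 H).1
  have h1 : Red (a :: l ++ [a]) := by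
    have := h
    unfold CR at this
    exact (List.isChain_split.1 this).1
  induction N with
  | zero => simp
  | succ N ih =>
    rw [List.replicate_succ, List.flatten_cons]
    cases N with
    | zero => simpa using h1
    | succ N =>
      rw [List.replicate_succ, List.flatten_cons] at ih ⊢
      simp only [List.cons_append, List.append_assoc] at ih ⊢ h1
      rw [← List.cons_append]
      exact List.isChain_split.2 ⟨h1, ih⟩

lemma norm_pow (l : List (Fin k)) (h : CR l) (N : ℕ) : norm (ev l ^ N) = N * l.length := by
  have : ev l ^ N = ev (List.replicate N l).flatten := by
    induction N with
    | zero => simp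
    | succ N ih => rw [List.replicate_succ, List.flatten_cons, ev_append, ← ih, pow_succ']
  rw [this, norm, nf_ev _ (CR_pow l h N)]
  simp

lemma CR_conj_le (l l' : List (Fin k)) (h : CR l) (h' : CR l') (hc : IsConj (ev l) (ev l')) :
    l'.length ≤ l.length := by
  obtain ⟨g, hg⟩ := isConj_iff.1 hc
  by_contra hlt
  push Not at hlt
  set N := norm g + norm g⁻¹ + 1 with hN
  have e : ev l' ^ N = g * ev l ^ N * g⁻¹ := by rw [← hg, conj_pow]
  have h1 := norm_pow l' h' N
  rw [e] at h1
  have h2 := norm_mul (g * ev l ^ N) g⁻¹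
  have h3 := norm_mul g (ev l ^ N)
  rw [norm_pow l h] at h3
  nlinarith

lemma CR_conj (l l' : List (Fin k)) (h : CR l) (h' : CR l') (hc : IsConj (ev l) (ev l')) :
    l'.length = l.length :=
  le_antisymm (CR_conj_le l l' h h' hc) (CR_conj_le l' l h' h hc.symm)

/-- every element is conjugate to a generator or to a cyclically reduced word -/
lemma exists_CR (n : ℕ) : ∀ l : List (Fin k), Red l → l.length ≤ n →
    (∃ i, IsConj (ev l) (X i)) ∨ ∃ l', CR l' ∧ IsConj (ev l) (ev l') := by
  induction n with
  | zero =>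
    intro l h hl
    right
    have : l = [] := by simpa using hl
    subst this
    exact ⟨[], by simp [CR], IsConj.refl _⟩
  | succ n ih =>
    intro l h hl
    rcases l with _ | ⟨a, t⟩
    · right; exact ⟨[], by simp [CR], IsConj.refl _⟩
    rcases List.eq_nil_or_concat t with rfl | ⟨t, b, rfl⟩
    · left; exact ⟨a, by rw [ev_cons, ev_nil, mul_one]⟩
    by_cases hab : b = a
    · subst hab
      have hr : Red t := by
        have := h.tail
        exact (List.isChain_append.1 (by simpa using this)).1
      have hc : IsConj (ev (b :: t.concat b)) (ev t) := by
        refine isConj_iff.2 ⟨X b, ?_⟩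
        simp [X_inv, mul_assoc, X_sq, X_sq_assoc]
      rcases ih t hr (by simp at hl; omega) with ⟨i, hi⟩ | ⟨l', h', hl'⟩
      · left; exact ⟨i, hc.trans hi⟩
      · right; exact ⟨l', h', hc.trans hl'⟩
    · right
      refine ⟨_, ?_, IsConj.refl _⟩
      unfold CR
      refine List.isChain_append.2 ⟨h, h, ?_⟩
      intro x hx y hy
      rw [List.concat_eq_append, ← List.cons_append, List.getLast?_append] at hx
      simp at hx hy
      subst hx hy
      exact hab

end BraidC2
namespace BraidC2
variable {k : ℕ}

/-- the alternating word `(x y)^r x` -/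
def alt (x y : Fin k) : ℕ → List (Fin k)
  | 0 => [x]
  | r + 1 => x :: y :: alt x y r

lemma alt_length (x y : Fin k) (r : ℕ) : (alt x y r).length = 2 * r + 1 := by
  induction r with
  | zero => rfl
  | succ r ih => simp [alt, ih]; ring

lemma alt_ev (x y : Fin k) (r : ℕ) : ev (alt x y r) = (X x * X y) ^ r * X x := by
  induction r with
  | zero => simp [alt]
  | succ r ih => simp [alt, ih, pow_succ', mul_assoc]

lemma alt_mem (x y : Fin k) (r : ℕ) : ∀ a ∈ alt x y r, a = x ∨ a = y := by
  induction r with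
  | zero => simp [alt]
  | succ r ih =>
    intro a ha
    simp only [alt, List.mem_cons] at ha
    rcases ha with h | h | h
    · exact Or.inl h
    · exact Or.inr h
    · exact ih a h

lemma alt_cons (x y : Fin k) (r : ℕ) : ∃ t, alt x y r = x :: t := by
  cases r <;> simp [alt]

lemma alt_red (x y : Fin k) (hxy : x ≠ y) (r : ℕ) : Red (alt x y r) := by
  induction r with
  | zero => simp [alt]
  | succ r ih =>
    obtain ⟨t, ht⟩ := alt_cons x y r
    simp only [alt]
    rw [ht] at ih ⊢
    exact List.IsChain.cons_cons hxy (List.IsChain.cons_cons hxy.symm ih)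

/-- join two reduced words with disjoint letters at the junction -/
lemma red_join (S : Fin k → Prop) (u r : List (Fin k)) (hu : Red u) (hr : Red r)
    (h1 : ∀ a ∈ u, S a) (h2 : ∀ a ∈ r.head?, ¬ S a) : Red (u ++ r) := by
  refine List.isChain_append.2 ⟨hu, hr, ?_⟩
  rintro a ha b hb rfl
  exact h2 a hb (h1 a (List.mem_of_getLast? ha))

lemma swap_pow (x y : Fin k) (N : ℕ) :
    X x * ((X x * X y) ^ N)⁻¹ = (X x * X y) ^ N * X x := by
  induction N with
  | zero => simp
  | succ N ih =>
    rw [pow_succ' , mul_inv_rev, ← mul_assoc, ih, mul_inv_rev, X_inv, X_inv, ← pow_succ', pow_succ]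
    simp [mul_assoc]

lemma beta_word (S : Fin k → Prop) (β : MulAut (G k))
    (hS : ∀ a, S a → ∃ l : List (Fin k), (∀ b ∈ l, S b) ∧ ev l = β (X a))
    (u : List (Fin k)) (hu : ∀ a ∈ u, S a) :
    ∃ l : List (Fin k), (∀ b ∈ l, S b) ∧ ev l = β (ev u) := by
  induction u with
  | nil => exact ⟨[], by simp, by simp⟩
  | cons a u ih =>
    obtain ⟨l, hl, e⟩ := ih (fun b hb => hu b (by simp [hb]))
    obtain ⟨l', hl', e'⟩ := hS a (hu a (by simp))
    refine ⟨l' ++ l, ?_, by simp [e, e']⟩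
    intro b hb
    rcases List.mem_append.1 hb with h | h
    · exact hl' b h
    · exact hl b h

lemma beta_red (S : Fin k → Prop) (β : MulAut (G k))
    (hS : ∀ a, S a → ∃ l : List (Fin k), (∀ b ∈ l, S b) ∧ ev l = β (X a))
    (u : List (Fin k)) (hu : ∀ a ∈ u, S a) (hr : Red u) :
    ∃ l : List (Fin k), (∀ b ∈ l, S b) ∧ Red l ∧ ev l = β (ev u) ∧ (l = [] → u = []) := by
  obtain ⟨l, hl, e⟩ := beta_word S β hS u hu
  refine ⟨nf (ev l), fun b hb => hl b (nf_subset l b hb), nf_red _, by rw [ev_nf, e], ?_⟩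
  intro h
  have h1 : ev l = 1 := by rw [← ev_nf (ev l), h, ev_nil]
  rw [h1] at e
  have h2 : ev u = 1 := by
    have := e.symm
    simpa using this
  rw [← nf_ev u hr, h2]
  simp [nf]

lemma transduce (S : Fin k → Prop) (β : MulAut (G k))
    (hS : ∀ a, S a → ∃ l : List (Fin k), (∀ b ∈ l, S b) ∧ ev l = β (X a))
    (hnS : ∀ a, ¬ S a → β (X a) = X a) (s : Fin k) (hs : ¬ S s)
    (l : List (Fin k)) (hl : Red (l ++ [s])) :
    ∃ u r r' : List (Fin k), l = u ++ r ∧ (∀ a ∈ u, S a) ∧ (∀ a ∈ (r ++ [s]).head?, ¬ S a) ∧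
      Red (r' ++ [s]) ∧ ev r' = β (ev r) ∧ (r' ++ [s]).head? = (r ++ [s]).head? := by
  induction l with
  | nil => exact ⟨[], [], [], by simp [hs]⟩
  | cons c t ih =>
    obtain ⟨u, r, r', e, hu, hr, hr', er, eh⟩ := ih hl.tail
    by_cases hc : S c
    · refine ⟨c :: u, r, r', by simp [e], ?_, hr, hr', er, eh⟩
      intro a ha
      rcases List.mem_cons.1 ha with rfl | h
      · exact hc
      · exact hu a h
    · have hredu : Red u := by
        have := hl.tail
        subst e
        simp only [List.cons_append, List.tail_cons, List.append_assoc] at this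
        exact (List.isChain_append.1 this).1
      obtain ⟨u', hu', ru', eu', nu'⟩ := beta_red S β hS u hu hredu
      refine ⟨[], c :: (u ++ r), c :: (u' ++ r'), by simp [e], by simp, by simp [hc], ?_, ?_, by simp⟩
      · have hj : Red (u' ++ (r' ++ [s])) := red_join S _ _ ru' hr' hu' (by rw [eh]; exact hr)
        simp only [List.cons_append, List.append_assoc]
        refine List.isChain_cons.2 ⟨?_, hj⟩
        rintro y hy rfl
        rcases u' with _ | ⟨b, u'⟩
        · have := nu' rfl
          subst this
          simp only [List.nil_append] at hy e
          rw [eh] at hy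
          subst e
          rw [List.cons_append] at hl
          exact (List.isChain_cons.1 hl).1 c hy rfl
        · simp at hy
          subst hy
          exact hc (hu' _ (by simp))
      · simp [eu', er, hnS c hc]

/-- core growth lemma -/
lemma core (x y s : Fin k) (hxy : x ≠ y) (hsx : s ≠ x) (hsy : s ≠ y) (γ : MulAut (G k))
    (hx : γ (X x) = (X x * X y) * X x * (X x * X y)⁻¹)
    (hy : γ (X y) = (X x * X y) * X y * (X x * X y)⁻¹)
    (ho : ∀ a, a ≠ x → a ≠ y → γ (X a) = X a) (r : ℕ) (rest : List (Fin k))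
    (hl : CR (s :: (alt x y r ++ rest)))
    (hrest : ∀ a ∈ (rest ++ [s]).head?, a ≠ x ∧ a ≠ y)
    (hconj : ∀ N : ℕ, IsConj ((γ ^ N) (ev (s :: (alt x y r ++ rest))))
      (ev (s :: (alt x y r ++ rest)))) : False := by
  set S : Fin k → Prop := fun a => a = x ∨ a = y with hSdef
  have hc : γ (X x * X y) = X x * X y := by rw [map_mul, hx, hy]; group
  have hpow : ∀ N : ℕ, ∀ z, S z → (γ ^ N) (X z) = (X x * X y) ^ N * X z * ((X x * X y) ^ N)⁻¹ := by
    intro N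
    induction N with
    | zero => intro z _; simp
    | succ N ih =>
      intro z hz
      have hz' : γ (X z) = (X x * X y) * X z * (X x * X y)⁻¹ := by
        rcases hz with rfl | rfl
        · exact hx
        · exact hy
      rw [pow_succ', MulAut.mul_apply, ih z hz, map_mul, map_mul, map_inv, map_pow, hc, hz',
        pow_succ]
      group
  have hpo : ∀ N : ℕ, ∀ z, ¬ S z → (γ ^ N) (X z) = X z := by
    intro N z hz
    have hz' := ho z (fun h => hz (Or.inl h)) (fun h => hz (Or.inr h))
    induction N with
    | zero => simp
    | succ N ih => rw [pow_succ', MulAut.mul_apply, ih, hz']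
  have hpc : ∀ N : ℕ, (γ ^ N) (X x * X y) = X x * X y := by
    intro N
    induction N with
    | zero => simp
    | succ N ih => rw [pow_succ', MulAut.mul_apply, ih, hc]
  set N := rest.length + 1 with hN
  have hs : ¬ S s := by rintro (h | h) <;> contradiction
  have hwords : ∀ a, S a → ∃ l : List (Fin k), (∀ b ∈ l, S b) ∧ ev l = (γ ^ N) (X a) := by
    intro a ha
    refine ⟨(List.replicate N [x, y]).flatten ++ [a] ++ (List.replicate N [x, y]).flatten.reverse,
      ?_, ?_⟩
    · intro b hb
      simp only [List.mem_append, List.mem_reverse, List.mem_flatten, List.mem_replicate] at hb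
      rcases hb with (⟨l, ⟨_, rfl⟩, h⟩ | h) | ⟨l, ⟨_, rfl⟩, h⟩
      · simpa [hSdef] using h
      · simp at h; subst h; exact ha
      · simpa [hSdef] using h
    · have : ∀ M : ℕ, ev (List.replicate M [x, y]).flatten = (X x * X y) ^ M := by
        intro M
        induction M with
        | zero => simp
        | succ M ih => rw [List.replicate_succ, List.flatten_cons, ev_append, ih]; simp [pow_succ']
      rw [hpow N a ha, ev_append, ev_append, ev_reverse, this]
      simp
  have hred : Red (s :: (alt x y r ++ rest) ++ [s]) := by
    have := hl
    unfold CR at this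
    exact (List.isChain_split.1 this).1
  have hredr : Red (rest ++ [s]) := by
    have := hred.tail
    simp only [List.cons_append, List.tail_cons, List.append_assoc] at this
    exact (List.isChain_append.1 this).2.1
  obtain ⟨u, q, r', e, hu, hq, hr', er, eh⟩ := transduce S (γ ^ N) hwords (hpo N) s hs rest hredr
  have hunil : u = [] := by
    rcases u with _ | ⟨b, u⟩
    · rfl
    · subst e
      have := hrest b (by simp)
      rcases hu b (by simp) with h | h
      · exact absurd h this.1
      · exact absurd h this.2
  subst hunil
  simp only [List.nil_append] at e
  subst e
  have hA : ev (alt x y (r + 2 * N)) = (γ ^ N) (ev (alt x y r)) := by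
    rw [alt_ev, alt_ev, map_mul, map_pow, hpc, hpow N x (Or.inl rfl), mul_assoc ((X x * X y) ^ N),
      swap_pow, ← mul_assoc, ← mul_assoc, ← pow_add, ← pow_add]
    congr 2
    ring
  have hev : ev (s :: (alt x y (r + 2 * N) ++ r')) = (γ ^ N) (ev (s :: (alt x y r ++ rest))) := by
    rw [ev_cons, ev_cons, ev_append, ev_append, map_mul, map_mul, hA, er, hpo N s hs]
  have hR : Red (s :: (alt x y (r + 2 * N) ++ (r' ++ [s]))) := by
    refine List.isChain_cons.2 ⟨?_, red_join S _ _ (alt_red x y hxy _) hr' (alt_mem x y _) ?_⟩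
    · obtain ⟨t, ht⟩ := alt_cons x y (r + 2 * N)
      rw [ht]
      rintro b hb rfl
      simp at hb
      exact hsx hb.symm
    · rw [eh]; exact hq
  have hCR : CR (s :: (alt x y (r + 2 * N) ++ r')) := by
    unfold CR
    refine List.isChain_split.2 ⟨by simpa using hR, ?_⟩
    have : Red ((s :: (alt x y (r + 2 * N) ++ r')) ++ [s]) := by simpa using hR
    exact (List.isChain_append.1 this).1
  have := CR_conj _ _ hCR hl (by rw [hev]; exact hconj N)
  simp [alt_length] at this
  omega

end BraidC2
namespace BraidC2

/-- cyclic successor on `{0, …, m}` -/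
def nx (m a : ℕ) : ℕ := if a = m then 0 else a + 1

lemma comb_local (m : ℕ) (hm : 2 ≤ m) (v : ℕ → ℕ) (hv : ∀ j, v j ≤ m) (hne : ∀ j, v j ≠ v (j + 1))
    (H1 : ∀ i < m, ∀ p, (v p ≠ i ∧ v p ≠ i + 1) → (v (p + 1) = i ∨ v (p + 1) = i + 1) →
      (v (p + 2) ≠ i ∧ v (p + 2) ≠ i + 1) → False)
    (H3 : ∀ i < m, ∀ p, (v p ≠ i ∧ v p ≠ i + 1) →
      ((v (p + 1) = i ∧ v (p + 2) = i + 1 ∧ v (p + 3) = i) ∨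
       (v (p + 1) = i + 1 ∧ v (p + 2) = i ∧ v (p + 3) = i + 1)) →
      (v (p + 4) ≠ i ∧ v (p + 4) ≠ i + 1) → False) (p : ℕ) :
    (v (p + 2) = nx m (v (p + 1)) ∧ v (p + 3) = nx m (v (p + 2))) ∨
    (v (p + 1) = nx m (v (p + 2)) ∧ v (p + 2) = nx m (v (p + 3))) := by
  have H1' : ∀ i < m, ∀ p, ¬ ((v p ≠ i ∧ v p ≠ i + 1) ∧ (v (p + 1) = i ∨ v (p + 1) = i + 1) ∧
      (v (p + 2) ≠ i ∧ v (p + 2) ≠ i + 1)) := fun i hi p h => H1 i hi p h.1 h.2.1 h.2.2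
  have H3' : ∀ i < m, ∀ p, ¬ ((v p ≠ i ∧ v p ≠ i + 1) ∧
      ((v (p + 1) = i ∧ v (p + 2) = i + 1 ∧ v (p + 3) = i) ∨
       (v (p + 1) = i + 1 ∧ v (p + 2) = i ∧ v (p + 3) = i + 1)) ∧
      (v (p + 4) ≠ i ∧ v (p + 4) ≠ i + 1)) := fun i hi p h => H3 i hi p h.1 h.2.1 h.2.2
  have int : ∀ q, 0 < v (q + 1) → v (q + 1) < m →
      (v q + 1 = v (q + 1) ∧ v (q + 2) = v (q + 1) + 1) ∨
      (v q = v (q + 1) + 1 ∧ v (q + 2) + 1 = v (q + 1)) := by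
    intro q h0 h1
    have a := H1' (v (q + 1)) h1 q
    have b := H1' (v (q + 1) - 1) (by omega) q
    have c := hne q
    have d : v (q + 1) ≠ v (q + 2) := hne (q + 1)
    omega
  have i0 := int p
  have i1 : 0 < v (p + 2) → v (p + 2) < m →
      (v (p + 1) + 1 = v (p + 2) ∧ v (p + 3) = v (p + 2) + 1) ∨
      (v (p + 1) = v (p + 2) + 1 ∧ v (p + 3) + 1 = v (p + 2)) := int (p + 1)
  have i2 : 0 < v (p + 3) → v (p + 3) < m →
      (v (p + 2) + 1 = v (p + 3) ∧ v (p + 4) = v (p + 3) + 1) ∨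
      (v (p + 2) = v (p + 3) + 1 ∧ v (p + 4) + 1 = v (p + 3)) := int (p + 2)
  have n1 : v (p + 1) ≠ v (p + 2) := hne (p + 1)
  have n2 : v (p + 2) ≠ v (p + 3) := hne (p + 2)
  have b1 := hv (p + 1)
  have b2 := hv (p + 2)
  have b3 := hv (p + 3)
  have a0 : ¬ ((v (p + 1) ≠ 0 ∧ v (p + 1) ≠ 0 + 1) ∧ (v (p + 2) = 0 ∨ v (p + 2) = 0 + 1) ∧
      (v (p + 3) ≠ 0 ∧ v (p + 3) ≠ 0 + 1)) := H1' 0 (by omega) (p + 1)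
  have c0 := H3' 0 (by omega) p
  have am : ¬ ((v (p + 1) ≠ m - 1 ∧ v (p + 1) ≠ m - 1 + 1) ∧
      (v (p + 2) = m - 1 ∨ v (p + 2) = m - 1 + 1) ∧
      (v (p + 3) ≠ m - 1 ∧ v (p + 3) ≠ m - 1 + 1)) := H1' (m - 1) (by omega) (p + 1)
  have cm := H3' (m - 1) (by omega) p
  unfold nx
  rcases Nat.eq_zero_or_pos (v (p + 2)) with h | h
  · clear am cm
    split_ifs <;> omega
  · by_cases h' : v (p + 2) < m
    · clear am cm a0 c0
      split_ifs <;> omega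
    · clear a0 c0
      split_ifs <;> omega

lemma comb (m : ℕ) (hm : 1 ≤ m) (v : ℕ → ℕ) (hv : ∀ j, v j ≤ m) (hne : ∀ j, v j ≠ v (j + 1))
    (H1 : ∀ i < m, ∀ p, (v p ≠ i ∧ v p ≠ i + 1) → (v (p + 1) = i ∨ v (p + 1) = i + 1) →
      (v (p + 2) ≠ i ∧ v (p + 2) ≠ i + 1) → False)
    (H3 : ∀ i < m, ∀ p, (v p ≠ i ∧ v p ≠ i + 1) →
      ((v (p + 1) = i ∧ v (p + 2) = i + 1 ∧ v (p + 3) = i) ∨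
       (v (p + 1) = i + 1 ∧ v (p + 2) = i ∧ v (p + 3) = i + 1)) →
      (v (p + 4) ≠ i ∧ v (p + 4) ≠ i + 1) → False) :
    (∀ p, v (p + 2) = nx m (v (p + 1))) ∨ (∀ p, v (p + 1) = nx m (v (p + 2))) := by
  rcases Nat.lt_or_ge m 2 with h | h
  · left
    intro p
    have h1 := hv (p + 1)
    have h2 := hv (p + 2)
    have h3 : v (p + 1) ≠ v (p + 2) := hne (p + 1)
    unfold nx
    split_ifs <;> omega
  · have loc := comb_local m h v hv hne H1 H3
    rcases loc 0 with h0 | h0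
    · left
      have : ∀ p, v (p + 2) = nx m (v (p + 1)) ∧ v (p + 3) = nx m (v (p + 2)) := by
        intro p
        induction p with
        | zero => exact h0
        | succ p ih =>
          rcases loc (p + 1) with h1 | h1
          · exact h1
          · exfalso
            have e1 : v (p + 2) = nx m (v (p + 3)) := h1.1
            have e2 := ih.2
            have b := hv (p + 2)
            unfold nx at e1 e2
            split_ifs at e1 e2 <;> omega
      exact fun p => (this p).1
    · right
      have : ∀ p, v (p + 1) = nx m (v (p + 2)) ∧ v (p + 2) = nx m (v (p + 3)) := by
        intro p
        induction p with
        | zero => exact h0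
        | succ p ih =>
          rcases loc (p + 1) with h1 | h1
          · exfalso
            have e1 : v (p + 3) = nx m (v (p + 2)) := h1.1
            have e2 := ih.2
            have b := hv (p + 2)
            unfold nx at e1 e2
            split_ifs at e1 e2 <;> omega
          · exact h1
      exact fun p => (this p).1

lemma inc_form (m : ℕ) (v : ℕ → ℕ) (hv : ∀ j, v j ≤ m)
    (h : ∀ p, v (p + 2) = nx m (v (p + 1))) : ∃ p0, ∀ j, v (p0 + j) = j % (m + 1) := by
  have step : ∀ d, v 1 + d ≤ m → v (1 + d) = v 1 + d := by
    intro d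
    induction d with
    | zero => simp
    | succ d ih =>
      intro hd
      have e : v (1 + (d + 1)) = nx m (v (1 + d)) := by
        have := h d
        rw [show 1 + (d + 1) = d + 2 by ring, this, add_comm 1 d]
      rw [e, ih (by omega)]
      unfold nx
      split_ifs <;> omega
  have b := hv 1
  refine ⟨(m - v 1) + 2, ?_⟩
  intro j
  induction j with
  | zero =>
    rw [add_zero, h, add_comm _ 1, step _ (by omega)]
    unfold nx
    simp; omega
  | succ j ih =>
    have e : v (m - v 1 + 2 + (j + 1)) = nx m (v (m - v 1 + 2 + j)) := by
      have := h (m - v 1 + 1 + j)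
      rw [show m - v 1 + 2 + (j + 1) = m - v 1 + 1 + j + 2 by ring, this]
      congr 2; ring
    rw [e, ih]
    unfold nx
    have h1 : j % (m + 1) < m + 1 := Nat.mod_lt j (Nat.succ_pos m)
    rw [Nat.add_mod_eq_ite]
    rcases Nat.eq_zero_or_pos m with rfl | hm
    · simp [Nat.mod_one]
    · rw [Nat.mod_eq_of_lt (show 1 < m + 1 by omega)]
      clear ih e h step
      generalize j % (m + 1) = a at *
      split_ifs <;> omega

lemma dec_form (m : ℕ) (v : ℕ → ℕ) (hv : ∀ j, v j ≤ m)
    (h : ∀ p, v (p + 1) = nx m (v (p + 2))) : ∃ p0, ∀ j, v (p0 + j) = m - j % (m + 1) := by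
  obtain ⟨p0, hp⟩ := inc_form m (fun j => m - v j) (fun j => by omega) (by
    intro p
    have h1 := h p
    have h2 := hv (p + 1)
    have h3 := hv (p + 2)
    unfold nx at *
    split_ifs at * <;> omega)
  refine ⟨p0, fun j => ?_⟩
  have h1 := hp j
  have h2 := hv (p0 + j)
  omega

variable {k : ℕ}

def seg (f : ℕ → Fin k) (p d : ℕ) : List (Fin k) := (List.range d).map (fun j => f (p + j))

lemma seg_add (f : ℕ → Fin k) (p d e : ℕ) : seg f p (d + e) = seg f p d ++ seg f (p + d) e := by
  simp [seg, List.range_add, Function.comp_def, add_assoc]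

lemma seg_one (f : ℕ → Fin k) (p : ℕ) : seg f p 1 = [f p] := by simp [seg]

lemma seg_red (f : ℕ → Fin k) (h : ∀ j, f j ≠ f (j + 1)) (p d : ℕ) : Red (seg f p d) := by
  rw [Red, List.isChain_iff_getElem]
  intro i hi
  simp only [seg, List.getElem_map, List.getElem_range]
  exact h _

lemma seg_shift (f : ℕ → Fin k) (L : ℕ) (hper : ∀ j, f (j + L) = f j) (p d : ℕ) :
    seg f (p + L) d = seg f p d := by
  unfold seg
  congr 1
  ext j : 1
  rw [← hper (p + j)]; congr 1; ring

lemma seg_CR (f : ℕ → Fin k) (h : ∀ j, f j ≠ f (j + 1)) (L : ℕ) (hper : ∀ j, f (j + L) = f j)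
    (p : ℕ) : CR (seg f p L) := by
  have := seg_red f h p (L + L)
  rw [seg_add, seg_shift f L hper] at this
  exact this

lemma seg_conj (f : ℕ → Fin k) (L : ℕ) (hper : ∀ j, f (j + L) = f j) (p : ℕ) :
    IsConj (ev (seg f 0 L)) (ev (seg f p L)) := by
  induction p with
  | zero => exact IsConj.refl _
  | succ p ih =>
    refine ih.trans (isConj_iff.2 ⟨(X (f p))⁻¹, ?_⟩)
    have h1 := seg_add f p 1 L
    have h2 := seg_add f p L 1
    rw [add_comm 1 L, h2, seg_one, seg_one, hper] at h1
    have h3 := congrArg ev h1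
    simp only [ev_append, ev_cons, ev_nil, mul_one] at h3
    rw [inv_inv, mul_assoc, h3, inv_mul_cancel_left]

lemma no_run (f : ℕ → Fin k) (h : ∀ j, f j ≠ f (j + 1)) (L : ℕ) (hL : 0 < L)
    (hper : ∀ j, f (j + L) = f j)
    (x y : Fin k) (hxy : x ≠ y) (γ : MulAut (G k))
    (hx : γ (X x) = (X x * X y) * X x * (X x * X y)⁻¹)
    (hy : γ (X y) = (X x * X y) * X y * (X x * X y)⁻¹)
    (ho : ∀ a, a ≠ x → a ≠ y → γ (X a) = X a)
    (hconj : IsConj (γ (ev (seg f 0 L))) (ev (seg f 0 L))) (p r : ℕ)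
    (h1 : f p ≠ x ∧ f p ≠ y) (h2 : seg f (p + 1) (2 * r + 1) = alt x y r)
    (h3 : f (p + 1 + (2 * r + 1)) ≠ x ∧ f (p + 1 + (2 * r + 1)) ≠ y) : False := by
  have hLr : 1 + (2 * r + 1) ≤ L := by
    by_contra hlt
    push Not at hlt
    have hm : f (p + L) ∈ alt x y r := by
      rw [← h2]
      refine List.mem_map.2 ⟨L - 1, by simp; omega, ?_⟩
      congr 1; omega
    rw [hper] at hm
    rcases alt_mem x y r _ hm with e | e
    · exact h1.1 e
    · exact h1.2 e
  obtain ⟨e, rfl⟩ := Nat.exists_eq_add_of_le hLr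
  set L := 1 + (2 * r + 1) + e
  have hseg : seg f p L = f p :: (alt x y r ++ seg f (p + 1 + (2 * r + 1)) e) := by
    rw [seg_add, seg_add, seg_one, h2, add_assoc p]; simp
  have hcp := seg_conj f L hper p
  have key : ∀ N : ℕ, IsConj ((γ ^ N) (ev (seg f 0 L))) (ev (seg f 0 L)) := by
    intro N
    induction N with
    | zero => simpa using IsConj.refl (ev (seg f 0 L))
    | succ N ih =>
      rw [pow_succ', MulAut.mul_apply]
      exact (γ.toMonoidHom.map_isConj ih).trans hconj
  refine core x y (f p) hxy h1.1 h1.2 γ hx hy ho r (seg f (p + 1 + (2 * r + 1)) e) ?_ ?_ ?_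
  · rw [← hseg]; exact seg_CR f h L hper p
  · have : seg f (p + 1 + (2 * r + 1)) e ++ [f p] = seg f (p + 1 + (2 * r + 1)) (e + 1) := by
      rw [seg_add, seg_one, ← hper p]
      congr 3
      simp only [L]; ring
    rw [this, add_comm e 1, seg_add, seg_one]
    intro a ha
    simp at ha
    subst ha
    exact h3
  · intro N
    rw [← hseg]
    exact (((γ ^ N).toMonoidHom.map_isConj hcp).symm.trans (key N)).trans hcp

end BraidC2
namespace BraidC2

variable {k : ℕ}

lemma gamma_pos (a b : Fin k) (φ : MulAut (G k)) (ha : φ (X a) = X b)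
    (hb : φ (X b) = X b * X a * X b) :
    (φ * φ) (X b) = (X b * X a) * X b * (X b * X a)⁻¹ ∧
    (φ * φ) (X a) = (X b * X a) * X a * (X b * X a)⁻¹ := by
  constructor
  · simp only [MulAut.mul_apply, ha, hb, map_mul, mul_inv_rev, X_inv, mul_assoc, X_sq_assoc]
  · simp only [MulAut.mul_apply, ha, hb, mul_inv_rev, X_inv, mul_assoc, X_sq_assoc]

lemma gamma_neg (a b : Fin k) (φ : MulAut (G k)) (ha : φ (X a) = X b)
    (hb : φ (X b) = X b * X a * X b) :
    (φ * φ)⁻¹ (X a) = (X a * X b) * X a * (X a * X b)⁻¹ ∧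
    (φ * φ)⁻¹ (X b) = (X a * X b) * X b * (X a * X b)⁻¹ := by
  constructor
  · rw [MulAut.inv_apply, MulEquiv.symm_apply_eq]
    simp only [MulAut.mul_apply, ha, hb, map_mul, mul_inv_rev, X_inv, mul_assoc, X_sq_assoc, X_sq,
      mul_one]
  · rw [MulAut.inv_apply, MulEquiv.symm_apply_eq]
    simp only [MulAut.mul_apply, ha, hb, map_mul, mul_inv_rev, X_inv, mul_assoc, X_sq_assoc, X_sq,
      mul_one]

/-- exponent parity of the letter `j` -/
def chi (j : Fin k) : G k →* Multiplicative (ZMod 2) :=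
  PresentedGroup.toGroup (f := fun i => if i = j then Multiplicative.ofAdd 1 else 1) (by
    rintro r ⟨i, rfl⟩
    simp only [map_pow, FreeGroup.lift_apply_of]
    split_ifs
    · decide
    · simp)

lemma chi_X (i j : Fin k) : chi j (X i) = if i = j then Multiplicative.ofAdd 1 else 1 :=
  PresentedGroup.toGroup.of _

lemma chi_conj (j : Fin k) (g h : G k) (hc : IsConj g h) : chi j g = chi j h :=
  isConj_iff_eq.1 ((chi j).map_isConj hc)

lemma power_form (f : ℕ → Fin k) (n L p0 : ℕ) (hper : ∀ j, f (p0 + (j + n)) = f (p0 + j))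
    (q : ℕ) (hL : L = n * q) : ev (seg f p0 L) = ev (seg f p0 n) ^ q := by
  subst hL
  induction q with
  | zero => simp [seg]
  | succ q ih =>
    rw [Nat.mul_succ, seg_add, ev_append, ih, pow_succ]
    congr 2
    unfold seg
    congr 1
    ext j : 1
    clear ih
    induction q with
    | zero => simp
    | succ q ih => 
      rw [← ih, add_assoc p0 (n * q) j, ← hper (n * q + j)]; congr 1; ring

lemma main_CR (m : ℕ) (hm : 1 ≤ m) (φ : Fin m → MulAut (G (m + 1)))
    (h1 : ∀ i : Fin m, φ i (X i.castSucc) = X i.succ)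
    (h2 : ∀ i : Fin m, φ i (X i.succ) = X i.succ * X i.castSucc * X i.succ)
    (h3 : ∀ (i : Fin m) j, j ≠ i.castSucc → j ≠ i.succ → φ i (X j) = X j)
    (l : List (Fin (m + 1))) (hl : CR l) (hne : l ≠ [])
    (hw : ∀ i, IsConj (φ i (ev l)) (ev l)) :
    ∃ z : ℤ, IsConj (ev l) (ev (List.ofFn (id : Fin (m + 1) → Fin (m + 1))) ^ z) := by
  set L := l.length with hLdef
  have hL : 0 < L := List.length_pos_iff.2 hne
  set f : ℕ → Fin (m + 1) := fun j => l[j % L]'(Nat.mod_lt _ hL) with hf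
  have hper : ∀ j, f (j + L) = f j := by intro j; simp [hf]
  have hseg : seg f 0 L = l := by
    apply List.ext_getElem
    · simp [seg, hLdef]
    · intro i hi hi'
      simp [seg, hf, Nat.mod_eq_of_lt (show i < L from hi')]
  have hff : ∀ j, f j ≠ f (j + 1) := by
    have hr : Red (seg f 0 (L + L)) := by
      have := hl
      unfold CR at this
      rw [← hseg] at this
      rwa [seg_add, seg_shift f L hper]
    rw [Red, List.isChain_iff_getElem] at hr
    intro j
    have hj := Nat.mod_lt j hL
    have := hr (j % L) (by simp [seg]; omega)
    simp only [seg, List.getElem_map, List.getElem_range, zero_add] at this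
    have e1 : f (j % L) = f j := by simp [hf]
    have e2 : f (j % L + 1) = f (j + 1) := by simp [hf]
    rwa [e1, e2] at this
  have hw0 : ∀ i, IsConj (φ i (ev (seg f 0 L))) (ev (seg f 0 L)) := by rw [hseg]; exact hw
  have hpos : ∀ i, IsConj ((φ i * φ i) (ev (seg f 0 L))) (ev (seg f 0 L)) := fun i =>
    ((φ i).toMonoidHom.map_isConj (hw0 i)).trans (hw0 i)
  have hneg : ∀ i, IsConj ((φ i * φ i)⁻¹ (ev (seg f 0 L))) (ev (seg f 0 L)) := by
    intro i
    have := ((φ i * φ i)⁻¹).toMonoidHom.map_isConj (hpos i)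
    have e : ((φ i * φ i)⁻¹).toMonoidHom ((φ i * φ i) (ev (seg f 0 L))) = ev (seg f 0 L) := by
      show (φ i * φ i)⁻¹ ((φ i * φ i) (ev (seg f 0 L))) = _
      rw [← MulAut.mul_apply, inv_mul_cancel, MulAut.one_apply]
    rw [e] at this
    exact this.symm
  have hcs : ∀ i : Fin m, i.castSucc ≠ i.succ := fun i => by
    simp [Fin.ext_iff]
  have runA : ∀ (i : Fin m) p r, f p ≠ i.castSucc ∧ f p ≠ i.succ →
      seg f (p + 1) (2 * r + 1) = alt i.castSucc i.succ r →
      f (p + 1 + (2 * r + 1)) ≠ i.castSucc ∧ f (p + 1 + (2 * r + 1)) ≠ i.succ → False := by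
    intro i p r a b c
    obtain ⟨g1, g2⟩ := gamma_neg _ _ _ (h1 i) (h2 i)
    refine no_run f hff L hL hper _ _ (hcs i) _ g1 g2 ?_ (hneg i) p r a b c
    intro j hj hj'
    rw [MulAut.inv_apply, MulEquiv.symm_apply_eq, MulAut.mul_apply, h3 i j hj hj', h3 i j hj hj']
  have runB : ∀ (i : Fin m) p r, f p ≠ i.castSucc ∧ f p ≠ i.succ →
      seg f (p + 1) (2 * r + 1) = alt i.succ i.castSucc r →
      f (p + 1 + (2 * r + 1)) ≠ i.castSucc ∧ f (p + 1 + (2 * r + 1)) ≠ i.succ → False := by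
    intro i p r a b c
    obtain ⟨g1, g2⟩ := gamma_pos _ _ _ (h1 i) (h2 i)
    refine no_run f hff L hL hper _ _ (hcs i).symm _ g1 g2 ?_ (hpos i) p r a.symm b c.symm
    intro j hj hj'
    rw [MulAut.mul_apply, h3 i j hj' hj, h3 i j hj' hj]
  have cs : ∀ (i : ℕ) (hi : i < m) (a : Fin (m + 1)),
      (a = (⟨i, hi⟩ : Fin m).castSucc ↔ a.val = i) ∧ (a = (⟨i, hi⟩ : Fin m).succ ↔ a.val = i + 1) := by
    intro i hi a
    simp [Fin.ext_iff]
  have seg3 : ∀ p, seg f (p + 1) (2 * 1 + 1) = [f (p + 1), f (p + 2), f (p + 3)] := by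
    intro p; simp [seg, List.range_succ, add_assoc]
  have comb' := comb m hm (fun j => (f j).val) (fun j => by have := (f j).isLt; omega)
    (fun j h => hff j (Fin.ext h))
    (by
      intro i hi p a b c
      rw [← (cs i hi _).1, ← (cs i hi _).2] at b
      rw [ne_eq, ne_eq, ← (cs i hi _).1, ← (cs i hi _).2] at a c
      rcases b with b | b
      · exact runA ⟨i, hi⟩ p 0 a (by rw [seg_one, b]; rfl) c
      · exact runB ⟨i, hi⟩ p 0 a (by rw [seg_one, b]; rfl) c)
    (by
      intro i hi p a b c
      rw [← (cs i hi _).1, ← (cs i hi _).2, ← (cs i hi _).1, ← (cs i hi _).2,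
        ← (cs i hi _).1, ← (cs i hi _).2] at b
      rw [ne_eq, ne_eq, ← (cs i hi _).1, ← (cs i hi _).2] at a c
      rcases b with ⟨b1, b2, b3⟩ | ⟨b1, b2, b3⟩
      · exact runA ⟨i, hi⟩ p 1 a (by rw [seg3, b1, b2, b3]; rfl) c
      · exact runB ⟨i, hi⟩ p 1 a (by rw [seg3, b1, b2, b3]; rfl) c)
  rw [← hseg]
  rcases comb' with hc | hc
  · obtain ⟨p0, hp⟩ := inc_form m (fun j => (f j).val) (fun j => by have := (f j).isLt; omega) hc
    have hd : L % (m + 1) = 0 := by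
      rw [← hp, hper, ← add_zero p0, hp]; simp
    obtain ⟨q, hq⟩ := Nat.dvd_of_mod_eq_zero hd
    refine ⟨q, (seg_conj f L hper p0).trans ?_⟩
    rw [power_form f (m + 1) L p0 (fun j => Fin.ext (by rw [hp, hp]; simp)) q hq, zpow_natCast]
    have : seg f p0 (m + 1) = List.ofFn (id : Fin (m + 1) → Fin (m + 1)) := by
      apply List.ext_getElem
      · simp [seg]
      · intro i hi hi'
        have hi2 : i < m + 1 := by simpa using hi'
        simp only [seg, List.getElem_map, List.getElem_range, List.getElem_ofFn, id]
        apply Fin.ext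
        rw [hp, Nat.mod_eq_of_lt hi2]
    rw [this]
  · obtain ⟨p0, hp⟩ := dec_form m (fun j => (f j).val) (fun j => by have := (f j).isLt; omega) hc
    have hd : L % (m + 1) = 0 := by
      have e1 := hp L
      have e2 := hp 0
      rw [hper] at e1
      simp at e2
      have := Nat.mod_lt L (Nat.succ_pos m)
      simp only [Nat.succ_eq_add_one] at this
      omega
    obtain ⟨q, hq⟩ := Nat.dvd_of_mod_eq_zero hd
    refine ⟨-q, (seg_conj f L hper p0).trans ?_⟩
    rw [power_form f (m + 1) L p0 (fun j => Fin.ext (by rw [hp, hp]; simp)) q hq, zpow_neg,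
      zpow_natCast, ← inv_pow, ← ev_reverse]
    have : seg f p0 (m + 1) = (List.ofFn (id : Fin (m + 1) → Fin (m + 1))).reverse := by
      apply List.ext_getElem
      · simp [seg]
      · intro i hi hi'
        have hi2 : i < m + 1 := by simpa using hi'
        simp only [seg, List.getElem_map, List.getElem_range, List.getElem_reverse,
          List.getElem_ofFn, id, List.length_ofFn]
        apply Fin.ext
        rw [hp, Nat.mod_eq_of_lt hi2]
        simp
    rw [this]

end BraidC2

/-- let `K = ⋆_{m+1} C₂` (`n = m+1 ≥ 2` factors) with the braid action
given by automorphisms `φᵢ : xᵢ ↦ x_{i+1}, x_{i+1} ↦ x_{i+1} xᵢ x_{i+1}, x_j ↦ x_j`.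
If `w ∈ K` satisfies `φᵢ(w)` conjugate to `w` for all `i`, then `w` is conjugate to a
power of `δ = x₀x₁⋯x_m`. -/
theorem stmt16 (m : ℕ) (hm : 1 ≤ m)
    (φ : Fin m → MulAut (PresentedGroup (relC2s (m + 1))))
    (hφ : ∀ (i : Fin m) (j : Fin (m + 1)),
      φ i (PresentedGroup.of j) =
        if j = i.castSucc then PresentedGroup.of i.succ
        else if j = i.succ then
          PresentedGroup.of i.succ * PresentedGroup.of i.castSucc * PresentedGroup.of i.succ
        else PresentedGroup.of j)
    (w : PresentedGroup (relC2s (m + 1)))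
    (hw : ∀ i : Fin m, IsConj (φ i w) w) :
    ∃ k : ℤ, IsConj w
      (((List.ofFn fun j : Fin (m + 1) =>
        (PresentedGroup.of j : PresentedGroup (relC2s (m + 1)))).prod) ^ k) := by
  have hX : ∀ j : Fin (m + 1), (PresentedGroup.of j : PresentedGroup (relC2s (m + 1))) =
    BraidC2.X j := fun _ => rfl
  simp only [hX] at hφ ⊢
  have hδ : (List.ofFn fun j : Fin (m + 1) => BraidC2.X j).prod =
      BraidC2.ev (List.ofFn (id : Fin (m + 1) → Fin (m + 1))) := by
    rw [BraidC2.ev, List.map_ofFn]; rfl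
  rw [hδ]
  have hcs : ∀ i : Fin m, i.castSucc ≠ i.succ := fun i => by
    simp [Fin.ext_iff]
  have h1 : ∀ i : Fin m, φ i (BraidC2.X i.castSucc) = BraidC2.X i.succ := by
    intro i; rw [hφ, if_pos rfl]
  have h2 : ∀ i : Fin m, φ i (BraidC2.X i.succ) =
      BraidC2.X i.succ * BraidC2.X i.castSucc * BraidC2.X i.succ := by
    intro i; rw [hφ, if_neg (hcs i).symm, if_pos rfl]
  have h3 : ∀ (i : Fin m) j, j ≠ i.castSucc → j ≠ i.succ →
      φ i (BraidC2.X j) = BraidC2.X j := by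
    intro i j hj hj'; rw [hφ, if_neg hj, if_neg hj']
  have hconj : ∀ v, IsConj w v → ∀ i, IsConj (φ i v) v := fun v hv i =>
    (((φ i).toMonoidHom.map_isConj hv).symm.trans (hw i)).trans hv
  rcases BraidC2.exists_CR _ (BraidC2.nf w) (BraidC2.nf_red w) le_rfl with ⟨j, hj⟩ | ⟨l, hl, hlw⟩
  · exfalso
    rw [BraidC2.ev_nf] at hj
    have hc := hconj _ hj
    rcases Fin.eq_castSucc_or_eq_last j with ⟨i, rfl⟩ | rfl
    · have := BraidC2.chi_conj i.castSucc _ _ (hc i)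
      rw [h1, BraidC2.chi_X, BraidC2.chi_X, if_neg (hcs i).symm, if_pos rfl] at this
      exact absurd this (by decide)
    · obtain ⟨m, rfl⟩ : ∃ m', m = m' + 1 := ⟨m - 1, by omega⟩
      have := BraidC2.chi_conj (Fin.last m).castSucc _ _ (hc (Fin.last m))
      rw [← Fin.succ_last, h2, map_mul, map_mul, BraidC2.chi_X, BraidC2.chi_X,
        if_neg (hcs (Fin.last m)).symm, if_pos rfl] at this
      exact absurd this (by decide)
  · rw [BraidC2.ev_nf] at hlw
    by_cases hne : l = []
    · subst hne
      exact ⟨0, by simpa using hlw⟩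
    · obtain ⟨z, hz⟩ := BraidC2.main_CR m hm φ h1 h2 h3 l hl hne (hconj _ hlw)
      exact ⟨z, hlw.trans hz⟩
end

section
/- Let F_n be free on u₁, …, u_n with B_n acting by Artin's representation, and suppose n ≥ 3. If x ∈ F_n satisfies α_i(x) conjugate to x (in F_n) for all i = 1, …, n-1, then x is conjugate to a power of u₁u₂⋯u_n. -/
namespace Artin17

open Classical in
/-- Retraction of a free group onto the free factor spanned by the letters in `S`. -/
noncomputable def kill {J : Type*} (S : Set J) : FreeGroup J →* FreeGroup J :=
  FreeGroup.lift (fun j => if j ∈ S then FreeGroup.of j else 1)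

lemma kill_kill {J : Type*} (S T : Set J) (k : FreeGroup J) :
    kill T (kill S k) = kill (S ∩ T) k := by
  have : (kill T).comp (kill S) = kill (S ∩ T) := by
    ext j
    by_cases h1 : j ∈ S <;> by_cases h2 : j ∈ T <;> simp [kill, h1, h2]
  exact DFunLike.congr_fun this k

lemma kill_exists_finite {J : Type*} (k : FreeGroup J) :
    ∃ S : Finset J, ∀ S' : Set J, (S : Set J) ⊆ S' → kill S' k = k := by
  classical
  induction k using FreeGroup.induction_on with
  | C1 => exact ⟨∅, fun _ _ => map_one _⟩
  | of j =>
    refine ⟨{j}, fun S' h => ?_⟩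
    have : j ∈ S' := h (by simp)
    simp [kill, this]
  | inv_of j ih =>
    obtain ⟨S, hS⟩ := ih
    exact ⟨S, fun S' h => by rw [map_inv, hS S' h]⟩
  | mul a b ha hb =>
    obtain ⟨S, hS⟩ := ha
    obtain ⟨T, hT⟩ := hb
    refine ⟨S ∪ T, fun S' h => ?_⟩
    rw [Finset.coe_union] at h
    rw [map_mul, hS S' (Set.subset_union_left.trans h), hT S' (Set.subset_union_right.trans h)]

lemma isConj_map {G H : Type*} [Group G] [Group H] (f : G →* H) {a b : G} (h : IsConj a b) :
    IsConj (f a) (f b) := f.map_isConj h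

/-- The minimal conjugacy support. -/
lemma exists_supp {J : Type*} (k : FreeGroup J) :
    ∃ S : Finset J, IsConj (kill (S : Set J) k) k ∧
      ∀ S' : Set J, IsConj (kill S' k) k → (S : Set J) ⊆ S' := by
  classical
  have hex : ∃ n : ℕ, ∃ S : Finset J, S.card = n ∧ IsConj (kill (S : Set J) k) k := by
    obtain ⟨S, hS⟩ := kill_exists_finite k
    exact ⟨_, S, rfl, by rw [hS S subset_rfl]⟩
  obtain ⟨S, hc, hS⟩ := Nat.find_spec hex
  refine ⟨S, hS, fun S' h' => ?_⟩
  have h2 : IsConj (kill ((S.filter (· ∈ S') : Finset J) : Set J) k) k := by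
    have : ((S.filter (· ∈ S') : Finset J) : Set J) = (S : Set J) ∩ S' := by
      ext; simp
    rw [this, ← kill_kill]
    exact (isConj_map _ hS).trans h'
  have h3 : S.card ≤ (S.filter (· ∈ S')).card := by
    rw [hc]; exact Nat.find_min' hex ⟨_, rfl, h2⟩
  have h4 := Finset.eq_of_subset_of_card_le (Finset.filter_subset (· ∈ S') S) h3
  intro j hj
  rw [Finset.mem_coe, ← h4] at hj
  exact (Finset.mem_filter.1 hj).2

lemma map_kill {J : Type*} (π : J ≃ J) (S : Set J) (k : FreeGroup J) :
    FreeGroup.map π (kill S k) = kill (π '' S) (FreeGroup.map π k) := by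
  have : (FreeGroup.map π).comp (kill S) = (kill (π '' S)).comp (FreeGroup.map π) := by
    ext j
    by_cases h1 : j ∈ S <;> simp [kill, h1]
  exact DFunLike.congr_fun this k

lemma supp_perm {J : Type*} (k : FreeGroup J) (S : Finset J)
    (hS : IsConj (kill (S : Set J) k) k)
    (hmin : ∀ S' : Set J, IsConj (kill S' k) k → (S : Set J) ⊆ S')
    (π : J ≃ J) (hπ : IsConj (FreeGroup.map π k) k) : (S : Set J) ⊆ π '' S := by
  apply hmin
  have h1 := isConj_map (FreeGroup.map π) hS
  rw [map_kill] at h1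
  exact ((isConj_map _ hπ).symm.trans h1).trans hπ

lemma no_shift {I : Type*} (S : Finset (I × ℤ)) (j : I) (d : ℤ) (hd : d ≠ 0)
    (h : ∀ n, (j, n) ∈ S → (j, n + d) ∈ S) (n : ℤ) : (j, n) ∉ S := by
  intro hn
  have : ∀ t : ℕ, (j, n + t * d) ∈ S := by
    intro t
    induction t with
    | zero => simpa using hn
    | succ t ih =>
      have := h _ ih
      have e : n + (t : ℤ) * d + d = n + ((t + 1 : ℕ) : ℤ) * d := by push_cast; ring
      rwa [e] at this
  refine Set.infinite_univ (α := ℕ) ?_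
  refine Set.Finite.subset (Set.Finite.preimage (f := fun t : ℕ => (j, n + t * d)) ?_
    S.finite_toSet) (fun t _ => this t)
  intro a _ b _ hab
  simp only [Prod.mk.injEq, true_and, add_right_inj] at hab
  exact_mod_cast mul_right_cancel₀ hd hab

/-- shift all letters by `s` -/
def shiftE (I : Type*) (s : ℤ) : I × ℤ ≃ I × ℤ where
  toFun p := (p.1, p.2 + s)
  invFun p := (p.1, p.2 - s)
  left_inv p := by simp
  right_inv p := by simp

/-- shift the letters with first index `i` by `-1` -/
def twE {I : Type*} [DecidableEq I] (i : I) : I × ℤ ≃ I × ℤ where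
  toFun p := (p.1, if p.1 = i then p.2 - 1 else p.2)
  invFun p := (p.1, if p.1 = i then p.2 + 1 else p.2)
  left_inv p := by rcases p with ⟨a, b⟩; by_cases h : a = i <;> simp [h]
  right_inv p := by rcases p with ⟨a, b⟩; by_cases h : a = i <;> simp [h]

lemma isConj_kill_of_subset {J : Type*} {k : FreeGroup J} {S T : Set J} (hST : S ⊆ T)
    (h : IsConj (kill S k) k) : IsConj (kill T k) k := by
  have h1 := isConj_map (kill T) h
  rw [kill_kill, Set.inter_eq_left.2 hST] at h1
  exact h1.symm.trans h

lemma core {I : Type*} [DecidableEq I] (i : I) (s : ℤ) (k : FreeGroup (I × ℤ))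
    (h : IsConj (FreeGroup.map (twE i) k) (FreeGroup.map (shiftE I s) k)) :
    IsConj (kill {p | p.1 = i} k) k ∨ IsConj (kill {p | p.1 ≠ i} k) k := by
  obtain ⟨S, hS, hmin⟩ := exists_supp k
  have hπ : IsConj (FreeGroup.map ((twE i).trans (shiftE I s).symm) k) k := by
    have := isConj_map (FreeGroup.map (shiftE I s).symm) h
    rw [FreeGroup.map.comp, FreeGroup.map.comp] at this
    have e : (⇑(shiftE I s).symm ∘ ⇑(shiftE I s)) = id := by ext p <;> simp
    rw [e, FreeGroup.map.id] at this
    exact this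
  have hsub := supp_perm k S hS hmin _ hπ
  by_cases hs : s = 0
  · right
    refine isConj_kill_of_subset ?_ hS
    rintro ⟨j, n⟩ hp (rfl : j = i)
    refine no_shift S j 1 one_ne_zero ?_ n hp
    intro n hn
    obtain ⟨⟨a, b⟩, hq, he⟩ := hsub hn
    simp only [Equiv.trans_apply, twE, shiftE, Equiv.coe_fn_mk, Equiv.coe_fn_symm_mk,
      Prod.mk.injEq] at he
    obtain ⟨rfl, he⟩ := he
    rw [if_pos rfl] at he
    have : b = n + 1 := by omega
    rw [← this]; exact hq
  · left
    refine isConj_kill_of_subset ?_ hS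
    rintro ⟨j, n⟩ hp
    by_contra hj
    change j ≠ i at hj
    refine no_shift S j s hs ?_ n hp
    intro n hn
    obtain ⟨⟨a, b⟩, hq, he⟩ := hsub hn
    simp only [Equiv.trans_apply, twE, shiftE, Equiv.coe_fn_mk, Equiv.coe_fn_symm_mk,
      Prod.mk.injEq] at he
    obtain ⟨rfl, he⟩ := he
    rw [if_neg hj] at he
    have : b = n + s := by omega
    rw [← this]; exact hq

/-- The shift action. -/
def shiftHom (I : Type*) : Multiplicative ℤ →* MulAut (FreeGroup (I × ℤ)) where
  toFun s := FreeGroup.freeGroupCongr (shiftE I s.toAdd)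
  map_one' := by
    ext x
    have : ⇑(shiftE I 0) = id := by ext p <;> simp [shiftE]
    simp [this]
  map_mul' s t := by
    ext x
    simp only [FreeGroup.freeGroupCongr_apply, MulAut.mul_apply, FreeGroup.map.comp]
    congr 2
    ext p <;> simp [shiftE]; ring

lemma shiftHom_apply {I : Type*} (s : Multiplicative ℤ) (x : FreeGroup (I × ℤ)) :
    shiftHom I s x = FreeGroup.map (shiftE I s.toAdd) x := by
  simp [shiftHom]

lemma isConj_semi {I : Type*} (y k : FreeGroup (I × ℤ))
    (h : IsConj (SemidirectProduct.inl y : FreeGroup (I × ℤ) ⋊[shiftHom I] Multiplicative ℤ)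
      (SemidirectProduct.inl k)) : ∃ s : ℤ, IsConj y (FreeGroup.map (shiftE I s) k) := by
  obtain ⟨c, hc⟩ := isConj_iff.1 h.symm
  refine ⟨c.right.toAdd, IsConj.symm (isConj_iff.2 ⟨c.left, ?_⟩)⟩
  rw [mul_inv_eq_iff_eq_mul] at hc ⊢
  have := congrArg SemidirectProduct.left hc
  simpa [shiftHom_apply] using this

/-- The retraction onto `D_i`. -/
def retr {I : Type*} [DecidableEq I] (i i' : I) : FreeGroup I →* FreeGroup I :=
  FreeGroup.lift (fun j => if j = i then 1 else if j = i' then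
    FreeGroup.of i * FreeGroup.of i' else FreeGroup.of j)

open SemidirectProduct in
lemma twist_alternative {I : Type*} [DecidableEq I] (i i' l : I) (h1 : i ≠ i') (h2 : i ≠ l) (h3 : i' ≠ l)
    (τ : FreeGroup I →* FreeGroup I)
    (hi : τ (FreeGroup.of i) = (FreeGroup.of i * FreeGroup.of i')⁻¹ * FreeGroup.of i *
      (FreeGroup.of i * FreeGroup.of i'))
    (hi' : τ (FreeGroup.of i') = (FreeGroup.of i * FreeGroup.of i')⁻¹ * FreeGroup.of i' *
      (FreeGroup.of i * FreeGroup.of i'))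
    (hj : ∀ j, j ≠ i → j ≠ i' → τ (FreeGroup.of j) = FreeGroup.of j)
    (x : FreeGroup I) (hx : IsConj (τ x) x)
    (he : FreeGroup.lift (fun j => if j = i' then Multiplicative.ofAdd (1 : ℤ) else
      if j = l then Multiplicative.ofAdd (-1 : ℤ) else 1) x = 1) :
    (∃ y ∈ Subgroup.closure {FreeGroup.of i, FreeGroup.of i'}, IsConj x y) ∨
      IsConj x (retr i i' x) := by
  classical
  set C : FreeGroup (I × ℤ) ⋊[shiftHom I] Multiplicative ℤ :=
    inr (Multiplicative.ofAdd (1 : ℤ)) with hC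
  set Ψ : FreeGroup I →* FreeGroup (I × ℤ) ⋊[shiftHom I] Multiplicative ℤ :=
    FreeGroup.lift (fun j => if j = i' then (inl (FreeGroup.of (i, 0)))⁻¹ * C else
      if j = l then inl (FreeGroup.of (l, 0)) * C⁻¹ else inl (FreeGroup.of (j, 0))) with hΨ
  have hΨi : Ψ (FreeGroup.of i) = inl (FreeGroup.of (i, 0)) := by simp [hΨ, h1, h2]
  have hΨi' : Ψ (FreeGroup.of i') = (inl (FreeGroup.of (i, 0)))⁻¹ * C := by simp [hΨ]
  have hΨl : Ψ (FreeGroup.of l) = inl (FreeGroup.of (l, 0)) * C⁻¹ := by simp [hΨ, h3.symm]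
  have hΨj : ∀ j, j ≠ i' → j ≠ l → Ψ (FreeGroup.of j) = inl (FreeGroup.of (j, 0)) := by
    intro j a b; simp [hΨ, a, b]
  have hr : (Ψ x).right = 1 := by
    rw [← he]
    have : rightHom.comp Ψ = FreeGroup.lift (fun j => if j = i' then Multiplicative.ofAdd (1 : ℤ)
      else if j = l then Multiplicative.ofAdd (-1 : ℤ) else 1) := by
      ext j
      by_cases a : j = i'
      · subst a; simp [hΨi', hC]
      · by_cases b : j = l
        · subst b; simp [hΨl, hC, a]
        · simp [hΨj j a b, a, b]
    exact DFunLike.congr_fun this x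
  set k := (Ψ x).left with hk
  have hxk : Ψ x = inl k := by
    ext1
    · simp [hk]
    · simp [hr]
  have hcomm : ∀ s : Multiplicative ℤ, (FreeGroup.map (twE i)).comp (shiftHom I s).toMonoidHom =
      (shiftHom I ((MonoidHom.id _) s)).toMonoidHom.comp (FreeGroup.map (twE i)) := by
    intro s
    ext ⟨a, b⟩
    by_cases h : a = i <;> simp [shiftHom_apply, twE, shiftE, h]
    ring_nf
  set T := SemidirectProduct.map (FreeGroup.map (twE i)) (MonoidHom.id _) hcomm with hT
  have hTC : T C = C := by simp [hT, hC]
  have hconj : C⁻¹ * inl (FreeGroup.of (i, (0 : ℤ))) * C = inl (FreeGroup.of (i, -1)) := by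
    have := inl_aut_inv (φ := shiftHom I) (Multiplicative.ofAdd (1 : ℤ)) (FreeGroup.of (i, (0 : ℤ)))
    rw [map_inv] at this
    rw [hC, ← this, ← map_inv, shiftHom_apply]
    simp [shiftE]
  have hTi : T (inl (FreeGroup.of (i, 0))) = inl (FreeGroup.of (i, -1)) := by
    simp [hT, twE]
  have hTj : ∀ j, j ≠ i → T (inl (FreeGroup.of (j, 0))) = inl (FreeGroup.of (j, 0)) := by
    intro j h
    simp [hT, twE, h]
  have hcc : Ψ (FreeGroup.of i) * Ψ (FreeGroup.of i') = C := by rw [hΨi, hΨi']; group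
  have hTΨ : Ψ.comp τ = T.comp Ψ := by
    ext1 j
    by_cases a : j = i
    · subst a
      simp only [MonoidHom.comp_apply, hi, map_mul, map_inv, hcc]
      rw [hΨi, hconj, hTi]
    by_cases b : j = i'
    · subst b
      simp only [MonoidHom.comp_apply, hi', map_mul, map_inv, hcc]
      rw [hΨi', map_mul, map_inv, hTi, hTC, ← hconj]; group
    by_cases c : j = l
    · subst c
      simp only [MonoidHom.comp_apply, hj j a b]
      rw [hΨl, map_mul, map_inv, hTj j a, hTC]
    · simp only [MonoidHom.comp_apply, hj j a b]
      rw [hΨj j b c, hTj j a]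
  have hTx : IsConj (inl (FreeGroup.map (twE i) k) :
      FreeGroup (I × ℤ) ⋊[shiftHom I] Multiplicative ℤ) (inl k) := by
    have h := isConj_map Ψ hx
    have e := DFunLike.congr_fun hTΨ x
    simp only [MonoidHom.comp_apply] at e
    rw [e, hxk] at h
    simpa [hT] using h
  obtain ⟨s, hs⟩ := isConj_semi _ _ hTx
  set c : FreeGroup I := FreeGroup.of i * FreeGroup.of i' with hc
  set θ : FreeGroup (I × ℤ) →* FreeGroup I := FreeGroup.lift (fun p =>
    c ^ p.2 * (if p.1 = l then FreeGroup.of l * c else FreeGroup.of p.1) * (c ^ p.2)⁻¹) with hθ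
  have hcomp : ∀ s : Multiplicative ℤ, θ.comp (shiftHom I s).toMonoidHom =
      (MulAut.conj (zpowersHom (FreeGroup I) c s)).toMonoidHom.comp θ := by
    intro s
    ext1 ⟨a, b⟩
    simp only [MonoidHom.comp_apply, MulEquiv.coe_toMonoidHom, shiftHom_apply,
      FreeGroup.map.of, hθ, FreeGroup.lift_apply_of, shiftE, Equiv.coe_fn_mk,
      MulAut.conj_apply, zpowersHom_apply]
    rw [add_comm b, zpow_add]; group
  set Θ := SemidirectProduct.lift θ (zpowersHom (FreeGroup I) c) hcomp with hΘ
  have hΘC : Θ C = c := by simp [hΘ, hC]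
  have hΘi : Θ (inl (FreeGroup.of (i, 0))) = FreeGroup.of i := by simp [hΘ, hθ, h2]
  have hΘl : Θ (inl (FreeGroup.of (l, 0))) = FreeGroup.of l * c := by simp [hΘ, hθ]
  have hΘj : ∀ j, j ≠ l → Θ (inl (FreeGroup.of (j, 0))) = FreeGroup.of j := by
    intro j h; simp [hΘ, hθ, h]
  have hΘΨ : Θ.comp Ψ = MonoidHom.id _ := by
    ext1 j
    by_cases b : j = i'
    · subst b
      simp only [MonoidHom.comp_apply, hΨi', map_mul, map_inv, hΘC, hΘi, hc]
      simp
    by_cases c : j = l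
    · subst c
      simp [hΨl, hΘl, hΘC]
    · simp [hΨj j b c, hΘj j c]
  have hxθ : x = θ k := by
    have := DFunLike.congr_fun hΘΨ x
    simp only [MonoidHom.comp_apply, hxk] at this
    simpa [hΘ] using this.symm
  rcases core i s k hs with h | h
  · left
    refine ⟨θ (kill {p | p.1 = i} k), ?_, ?_⟩
    · have hci : FreeGroup.of i ∈ Subgroup.closure {FreeGroup.of i, FreeGroup.of i'} :=
        Subgroup.subset_closure (by simp)
      have hci' : FreeGroup.of i' ∈ Subgroup.closure {FreeGroup.of i, FreeGroup.of i'} :=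
        Subgroup.subset_closure (by simp)
      have hcc : c ∈ Subgroup.closure {FreeGroup.of i, FreeGroup.of i'} := mul_mem hci hci'
      clear_value k
      clear * - hci hcc h2 hθ
      induction k using FreeGroup.induction_on with
      | C1 => simp
      | of p =>
        by_cases hp : p.1 = i
        · have e : θ (kill {p | p.1 = i} (FreeGroup.of p)) =
              c ^ p.2 * FreeGroup.of i * (c ^ p.2)⁻¹ := by
            simp [kill, hθ, hp, h2]
          rw [e]
          exact mul_mem (mul_mem (zpow_mem hcc _) hci) (inv_mem (zpow_mem hcc _))
        · simp [kill, hp]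
      | inv_of p ih => rw [map_inv, map_inv]; exact inv_mem ih
      | mul a b ha hb => rw [map_mul, map_mul]; exact mul_mem ha hb
    · conv_lhs => rw [hxθ]
      exact isConj_map θ h.symm
  · right
    have hcommk : ∀ s : Multiplicative ℤ,
        (kill {p : I × ℤ | p.1 ≠ i}).comp (shiftHom I s).toMonoidHom =
        (shiftHom I ((MonoidHom.id _) s)).toMonoidHom.comp (kill {p : I × ℤ | p.1 ≠ i}) := by
      intro s
      ext1 ⟨a, b⟩
      by_cases h : a = i <;> simp [shiftHom_apply, kill, shiftE, h]
    set R := SemidirectProduct.map (kill {p : I × ℤ | p.1 ≠ i}) (MonoidHom.id _) hcommk with hR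
    have hRC : R C = C := by simp [hR, hC]
    have hRi : R (inl (FreeGroup.of (i, 0))) = 1 := by simp [hR, kill]
    have hRj : ∀ j, j ≠ i → R (inl (FreeGroup.of (j, 0))) = inl (FreeGroup.of (j, 0)) := by
      intro j h; simp [hR, kill, h]
    have hret : (Θ.comp R).comp Ψ = retr i i' := by
      ext1 j
      by_cases a : j = i
      · subst a; simp [hΨi, hRi, retr]
      by_cases b : j = i'
      · subst b
        simp [hΨi', hRi, hRC, hΘC, retr, a, hc]
      by_cases c : j = l
      · subst c
        simp [hΨl, hRj j a, hRC, hΘC, hΘl, retr, a, b]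
      · simp [hΨj j b c, hRj j a, hΘj j c, retr, a, b]
    have e := DFunLike.congr_fun hret x
    simp only [MonoidHom.comp_apply, hxk] at e
    rw [← e]
    have e2 : Θ (R (inl k)) = θ (kill {p : I × ℤ | p.1 ≠ i} k) := by simp [hΘ, hR]
    rw [e2]
    conv_lhs => rw [hxθ]
    exact isConj_map θ h.symm


lemma hom_mem {I G : Type*} [Group G] (f : FreeGroup I →* G) (H : Subgroup G)
    (h : ∀ j, f (FreeGroup.of j) ∈ H) (x : FreeGroup I) : f x ∈ H := by
  induction x using FreeGroup.induction_on with
  | C1 => simp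
  | of p => exact h p
  | inv_of p ih => rw [map_inv]; exact inv_mem ih
  | mul a b ha hb => rw [map_mul]; exact mul_mem ha hb

lemma kill_conj {I : Type*} (p q : I) (x y : FreeGroup I)
    (hy : y ∈ Subgroup.closure {FreeGroup.of p, FreeGroup.of q}) (hxy : IsConj x y) :
    IsConj x (kill {p, q} x) := by
  have : kill {p, q} y = y := by
    have : Subgroup.closure {FreeGroup.of p, FreeGroup.of q} ≤
        (kill {p, q}).eqLocus (MonoidHom.id (FreeGroup I)) := by
      rw [Subgroup.closure_le]
      rintro _ (rfl | rfl)
      · change kill _ _ = _; simp [kill]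
      · change kill _ _ = _; simp [kill]
    exact this hy
  have h := isConj_map (kill {p, q}) hxy
  rw [this] at h
  exact hxy.trans h.symm

lemma both_kill {I : Type*} (p q r : I) (hpq : p ≠ q) (hpr : p ≠ r) (hqr : q ≠ r)
    (x : FreeGroup I) (h1 : IsConj x (kill {p, q} x)) (h2 : IsConj x (kill {q, r} x)) :
    ∃ s, ∃ g ∈ Subgroup.zpowers (FreeGroup.of s), IsConj x g := by
  refine ⟨q, kill {q, r} (kill {p, q} x), ?_, h2.trans (isConj_map _ h1)⟩
  rw [← MonoidHom.comp_apply]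
  apply hom_mem
  intro j
  by_cases a : j = p
  · subst a; simp [kill, hpq, hpr]
  by_cases b : j = q
  · subst b; simp [kill]
  · simp [kill, a, b]

lemma case_right {I : Type*} [DecidableEq I] (p q r : I) (hpq : p ≠ q) (hpr : p ≠ r) (hqr : q ≠ r)
    (x : FreeGroup I) (h1 : IsConj x (kill {p, q} x))
    (h2 : IsConj x (kill {q, r} x) ∨ IsConj x (retr q r x)) :
    ∃ s, ∃ g ∈ Subgroup.zpowers (FreeGroup.of s), IsConj x g := by
  rcases h2 with h2 | h2
  · exact both_kill p q r hpq hpr hqr x h1 h2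
  refine ⟨p, retr q r (kill {p, q} x), ?_, h2.trans (isConj_map _ h1)⟩
  rw [← MonoidHom.comp_apply]
  apply hom_mem
  intro j
  by_cases a : j = p
  · subst a; simp [kill, retr, hpq, hpr]
  by_cases b : j = q
  · subst b; simp [kill, retr]
  · simp [kill, a, b]

lemma case_left {I : Type*} [DecidableEq I] (p q r : I) (hpq : p ≠ q) (hpr : p ≠ r) (hqr : q ≠ r)
    (x : FreeGroup I) (h1 : IsConj x (kill {q, r} x))
    (h2 : IsConj x (kill {p, q} x) ∨ IsConj x (retr p q x)) :
    ∃ s, ∃ g ∈ Subgroup.zpowers (FreeGroup.of s), IsConj x g := by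
  rcases h2 with h2 | h2
  · exact both_kill p q r hpq hpr hqr x h2 h1
  set R : FreeGroup I →* FreeGroup I := FreeGroup.lift (fun j => if j = q then 1 else if j = p then
    FreeGroup.of p * FreeGroup.of q else FreeGroup.of j) with hR
  have hRR : R.comp (retr p q) = retr p q := by
    ext1 j
    by_cases a : j = p
    · subst a; simp [retr]
    by_cases b : j = q
    · subst b; simp [retr, hR, a, hpq]
    · simp [retr, hR, a, b]
  have h3 : IsConj x (R x) := by
    have e := DFunLike.congr_fun hRR x
    simp only [MonoidHom.comp_apply] at e
    have h := isConj_map R h2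
    rw [e] at h
    exact h2.trans h.symm
  refine ⟨r, R (kill {q, r} x), ?_, h3.trans (isConj_map _ h1)⟩
  rw [← MonoidHom.comp_apply]
  apply hom_mem
  intro j
  by_cases a : j = r
  · subst a; simp [kill, hR, hqr.symm, hpr.symm]
  by_cases b : j = q
  · subst b; simp [kill, hR]
  · simp [kill, a, b]

/-- exponent sum -/
def ex {I : Type*} [DecidableEq I] (j : I) : FreeGroup I →* Multiplicative ℤ :=
  FreeGroup.lift (fun t => if t = j then Multiplicative.ofAdd 1 else 1)

lemma ex_conj {I : Type*} [DecidableEq I] (j : I) {x y : FreeGroup I} (h : IsConj x y) :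
    ex j x = ex j y := isConj_iff_eq.1 (isConj_map (ex j) h)

lemma eq_one_of_zpowers {I : Type*} [DecidableEq I] (x : FreeGroup I) (h0 : ∀ j, ex j x = 1)
    (h : ∃ s, ∃ g ∈ Subgroup.zpowers (FreeGroup.of s), IsConj x g) : x = 1 := by
  obtain ⟨s, g, ⟨n, rfl⟩, h⟩ := h
  have h1 := ex_conj s h
  rw [h0 s] at h1
  have : n = 0 := by
    have h2 := congrArg Multiplicative.toAdd h1
    simpa [ex, eq_comm] using h2
  subst this
  simpa using h

/-- tail products -/
def tailProd (m t : ℕ) : FreeGroup (Fin (m + 1)) :=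
  ((List.ofFn fun j : Fin (m + 1) => FreeGroup.of j).drop t).prod

lemma tailProd_succ (m t : ℕ) (h : t < m + 1) :
    tailProd m t = FreeGroup.of ⟨t, h⟩ * tailProd m (t + 1) := by
  unfold tailProd
  rw [List.drop_eq_getElem_cons (by simpa using h), List.prod_cons, List.getElem_ofFn]

lemma tailProd_fix (m t : ℕ) (f : FreeGroup (Fin (m + 1)) →* FreeGroup (Fin (m + 1)))
    (h : ∀ j : Fin (m + 1), t ≤ j → f (FreeGroup.of j) = FreeGroup.of j) :
    f (tailProd m t) = tailProd m t := by
  unfold tailProd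
  rw [map_list_prod]
  congr 1
  conv_rhs => rw [← List.map_id (List.drop t _)]
  apply List.map_congr_left
  intro a ha
  obtain ⟨n, hn, rfl⟩ := List.mem_iff_getElem.1 ha
  simp only [List.getElem_drop, List.getElem_ofFn, id]
  exact h _ (by simp)

lemma descent (m : ℕ) (x : FreeGroup (Fin (m + 1)))
    (h : ∀ i : Fin m, IsConj x (retr i.castSucc i.succ x)) (d : ℕ) :
    ∀ t, t + d = m → ∃ g ∈ Subgroup.closure
      (insert (tailProd m t) {g | ∃ j : Fin (m + 1), (j : ℕ) < t ∧ g = FreeGroup.of j}),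
      IsConj x g := by
  induction d with
  | zero =>
    intro t ht
    obtain rfl : t = m := ht
    refine ⟨x, ?_, IsConj.refl _⟩
    apply hom_mem (MonoidHom.id _)
    intro j
    apply Subgroup.subset_closure
    rcases Nat.lt_or_ge j t with hj | hj
    · exact Or.inr ⟨j, hj, rfl⟩
    · left
      have : j = ⟨t, by simp⟩ := by ext; simp; omega
      rw [tailProd_succ t t (by simp), this]
      have : tailProd t (t + 1) = 1 := by
        unfold tailProd
        rw [List.drop_eq_nil_of_le (by simp)]; rfl
      simp [this]
  | succ d ih =>
    intro t ht
    obtain ⟨g, hg, hxg⟩ := ih (t + 1) (by omega)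
    set i : Fin m := ⟨t, by omega⟩ with hi
    have hne : i.castSucc ≠ i.succ := by simp [Fin.ext_iff]
    refine ⟨retr i.castSucc i.succ g, ?_, (h i).trans (isConj_map _ hxg)⟩
    rw [← Subgroup.mem_comap]
    refine (Subgroup.closure_le _).2 ?_ hg
    rintro y (rfl | ⟨j, hj, rfl⟩)
    · apply Subgroup.subset_closure
      left
      rw [tailProd_succ m t (by omega), tailProd_succ m (t + 1) (by omega), map_mul,
        tailProd_fix m (t + 1 + 1)]
      · have e : (⟨t + 1, by omega⟩ : Fin (m + 1)) = i.succ := rfl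
        have e' : (⟨t, by omega⟩ : Fin (m + 1)) = i.castSucc := rfl
        rw [e, e', ← mul_assoc]
        simp [retr, hne.symm]
      · intro j hj
        have a : j ≠ i.castSucc := by simp [Fin.ext_iff, hi]; omega
        have b : j ≠ i.succ := by simp [Fin.ext_iff, hi]; omega
        simp [retr, a, b]
    · by_cases a : j = i.castSucc
      · subst a; simp [retr]
      · have b : j ≠ i.succ := by simp [Fin.ext_iff, hi]; omega
        have a' : (j : ℕ) ≠ t := by simpa [Fin.ext_iff, hi] using a
        apply Subgroup.subset_closure
        right
        refine ⟨j, by omega, by simp [retr, a, b]⟩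

lemma ex_eq (m : ℕ)
    (φ : Fin m → MulAut (FreeGroup (Fin (m + 1))))
    (hφ : ∀ (i : Fin m) (j : Fin (m + 1)),
      φ i (FreeGroup.of j) =
        if j = i.castSucc then FreeGroup.of i.succ
        else if j = i.succ then
          (FreeGroup.of i.succ)⁻¹ * FreeGroup.of i.castSucc * FreeGroup.of i.succ
        else FreeGroup.of j)
    (x : FreeGroup (Fin (m + 1)))
    (hx : ∀ i : Fin m, IsConj (φ i x) x) (j l : Fin (m + 1)) : ex j x = ex l x := by
  have key : ∀ i : Fin m, ex i.succ x = ex i.castSucc x := by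
    intro i
    have hne : i.castSucc ≠ i.succ := by simp [Fin.ext_iff]
    have h1 : (ex i.succ).comp (φ i).toMonoidHom = ex i.castSucc := by
      ext1 j
      simp only [MonoidHom.comp_apply, MulEquiv.coe_toMonoidHom, hφ]
      by_cases a : j = i.castSucc
      · subst a; simp [ex]
      by_cases b : j = i.succ
      · subst b; simp [ex, hne, hne.symm]
      · simp [ex, a, b]
    rw [← h1]
    exact (ex_conj _ (hx i)).symm
  have h0 : ∀ j : Fin (m + 1), ex j x = ex 0 x := by
    intro j
    induction j using Fin.induction with
    | zero => rfl
    | succ i ih => rw [key, ih]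
  rw [h0 j, h0 l]

lemma alternatives (m : ℕ)
    (φ : Fin m → MulAut (FreeGroup (Fin (m + 1))))
    (hφ : ∀ (i : Fin m) (j : Fin (m + 1)),
      φ i (FreeGroup.of j) =
        if j = i.castSucc then FreeGroup.of i.succ
        else if j = i.succ then
          (FreeGroup.of i.succ)⁻¹ * FreeGroup.of i.castSucc * FreeGroup.of i.succ
        else FreeGroup.of j)
    (x : FreeGroup (Fin (m + 1)))
    (hx : ∀ i : Fin m, IsConj (φ i x) x) (i : Fin m) (l : Fin (m + 1))
    (h2 : i.castSucc ≠ l) (h3 : i.succ ≠ l) :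
    IsConj x (kill {i.castSucc, i.succ} x) ∨ IsConj x (retr i.castSucc i.succ x) := by
  have hne : i.castSucc ≠ i.succ := by simp [Fin.ext_iff]
  have hc : φ i (FreeGroup.of i.castSucc) = FreeGroup.of i.succ := by simp [hφ]
  have hs : φ i (FreeGroup.of i.succ) =
      (FreeGroup.of i.succ)⁻¹ * FreeGroup.of i.castSucc * FreeGroup.of i.succ := by
    simp [hφ, hne.symm]
  have := twist_alternative i.castSucc i.succ l hne h2 h3 ((φ i).toMonoidHom.comp (φ i).toMonoidHom)
    (by simp only [MonoidHom.comp_apply, MulEquiv.coe_toMonoidHom, hc, hs]; group)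
    (by simp only [MonoidHom.comp_apply, MulEquiv.coe_toMonoidHom, hc, hs, map_mul, map_inv]; group)
    (by intro j a b; simp [hφ, a, b]) x
    ((isConj_map (φ i).toMonoidHom (hx i)).trans (hx i))
    (by
      have e : FreeGroup.lift (fun j => if j = i.succ then Multiplicative.ofAdd (1 : ℤ) else
          if j = l then Multiplicative.ofAdd (-1 : ℤ) else 1) = ex i.succ * (ex l)⁻¹ := by
        ext1 j
        by_cases a : j = i.succ
        · subst a; simp [ex, h3]
        by_cases b : j = l
        · subst b; simp [ex, a]
        · simp [ex, a, b]
      rw [e, MonoidHom.mul_apply, MonoidHom.inv_apply, ex_eq m φ hφ x hx i.succ l, mul_inv_cancel])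
  rcases this with ⟨y, hy, h⟩ | h
  · exact Or.inl (kill_conj _ _ x y hy h)
  · exact Or.inr h

end Artin17


/-- let `F` be free on `u₀, …, u_m` (`n = m+1 ≥ 3` generators, so `m ≥ 2`)
with the braid group acting by Artin's representation, i.e. by the automorphisms
`φᵢ : uᵢ ↦ u_{i+1}, u_{i+1} ↦ u_{i+1}⁻¹ uᵢ u_{i+1}, u_j ↦ u_j` for `i : Fin m`.
If `x ∈ F` satisfies `φᵢ(x)` conjugate to `x` for all `i`, then `x` is conjugate to a
power of `u₀u₁⋯u_m`. -/
theorem stmt17 (m : ℕ) (hm : 2 ≤ m)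
    (φ : Fin m → MulAut (FreeGroup (Fin (m + 1))))
    (hφ : ∀ (i : Fin m) (j : Fin (m + 1)),
      φ i (FreeGroup.of j) =
        if j = i.castSucc then FreeGroup.of i.succ
        else if j = i.succ then
          (FreeGroup.of i.succ)⁻¹ * FreeGroup.of i.castSucc * FreeGroup.of i.succ
        else FreeGroup.of j)
    (x : FreeGroup (Fin (m + 1)))
    (hx : ∀ i : Fin m, IsConj (φ i x) x) :
    ∃ k : ℤ, IsConj x
      (((List.ofFn fun j : Fin (m + 1) => FreeGroup.of j).prod) ^ k) := by
  classical
  have third : ∀ i : Fin m, ∃ l : Fin (m + 1), i.castSucc ≠ l ∧ i.succ ≠ l := by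
    intro i
    by_cases h : (i : ℕ) = 0
    · exact ⟨⟨2, by omega⟩, by simp [Fin.ext_iff]; omega, by simp [Fin.ext_iff]; omega⟩
    · exact ⟨0, by simp [Fin.ext_iff]; omega, by simp [Fin.ext_iff]⟩
  have alt : ∀ i : Fin m, IsConj x (Artin17.kill {i.castSucc, i.succ} x) ∨
      IsConj x (Artin17.retr i.castSucc i.succ x) := by
    intro i
    obtain ⟨l, h2, h3⟩ := third i
    exact Artin17.alternatives m φ hφ x hx i l h2 h3
  by_cases hA : ∃ i : Fin m, IsConj x (Artin17.kill {i.castSucc, i.succ} x)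
  · obtain ⟨i, hi⟩ := hA
    have h0 : ∀ j, Artin17.ex j x = 1 := by
      intro j
      obtain ⟨l, h2, h3⟩ := third i
      rw [Artin17.ex_eq m φ hφ x hx j l, Artin17.ex_conj l hi, ← MonoidHom.comp_apply]
      have : (Artin17.ex l).comp (Artin17.kill {i.castSucc, i.succ}) = 1 := by
        ext1 j
        by_cases a : j = i.castSucc
        · subst a; simp [Artin17.ex, Artin17.kill, h2]
        by_cases b : j = i.succ
        · subst b; simp [Artin17.ex, Artin17.kill, h3]
        · simp [Artin17.kill, a, b]
      rw [this]; rfl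
    have h1 : x = 1 := by
      apply Artin17.eq_one_of_zpowers x h0
      by_cases h : (i : ℕ) + 1 < m
      · have e : (⟨i + 1, h⟩ : Fin m).castSucc = i.succ := rfl
        have hj := alt ⟨i + 1, h⟩
        rw [e] at hj
        refine Artin17.case_right _ _ _ ?_ ?_ ?_ x hi hj <;> simp [Fin.ext_iff]
        omega
      · have hlt : (i : ℕ) - 1 < m := by omega
        have e : (⟨i - 1, hlt⟩ : Fin m).succ = i.castSucc := by
          simp [Fin.ext_iff]; omega
        have hj := alt ⟨i - 1, hlt⟩
        rw [e] at hj
        refine Artin17.case_left _ _ _ ?_ ?_ ?_ x hi hj <;> simp [Fin.ext_iff] <;> omega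
    exact ⟨0, by simp [h1]⟩
  · have hD : ∀ i : Fin m, IsConj x (Artin17.retr i.castSucc i.succ x) := fun i =>
      (alt i).resolve_left (fun h => hA ⟨i, h⟩)
    obtain ⟨g, hg, hxg⟩ := Artin17.descent m x hD m 0 (by omega)
    have : (insert (Artin17.tailProd m 0)
        {g | ∃ j : Fin (m + 1), (j : ℕ) < 0 ∧ g = FreeGroup.of j}) = {Artin17.tailProd m 0} := by
      ext y; simp
    rw [this, ← Subgroup.zpowers_eq_closure] at hg
    obtain ⟨k, rfl⟩ := hg
    exact ⟨k, by simpa [Artin17.tailProd] using hxg⟩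
end
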